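/- Let K be a number field and h ≥ 2 an integer. Then ∑_{𝔪 ∈ 𝒩_h(x)} ω(𝔪)² = κ_K·γ_h·x^{1/h}·(log log x)² + κ_K·γ_h·(2𝔇₁ + 1)·x^{1/h}·log log x + κ_K·γ_h·𝔇₂·x^{1/h} + O_h(x^{1/h}·log log x/log x) as the real number x → ∞, where the implied constant depends only on h and K. -/

import Mathlib

open Filter Topology Asymptotics NumberField

noncomputable section

/-- The number of distinct (nonzero) prime ideals dividing the ideal `I`. -/
def omegaK {K : Type*} [Field K] [NumberField K] (I : Ideal (𝓞 K)) : ℕ :=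
  {p : Ideal (𝓞 K) | p.IsPrime ∧ p ≠ ⊥ ∧ p ∣ I}.ncard

/-- The ideal `I` is `h`-free: no prime ideal divides it to order `h`. -/
def HFreeI {K : Type*} [Field K] [NumberField K] (h : ℕ) (I : Ideal (𝓞 K)) : Prop :=
  ∀ p : Ideal (𝓞 K), p.IsPrime → p ≠ ⊥ → ¬ p ^ h ∣ I

/-- The ideal `I` is `h`-full: every prime ideal dividing it divides it to
order at least `h`. -/
def HFullI {K : Type*} [Field K] [NumberField K] (h : ℕ) (I : Ideal (𝓞 K)) : Prop :=
  ∀ p : Ideal (𝓞 K), p.IsPrime → p ≠ ⊥ → p ∣ I → p ^ h ∣ I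

/-- The ideal-counting constant `κ_K = 2^{r₁} (2π)^{r₂} h_K R_K / (w_K √|d_K|)`. -/
def kappaK (K : Type*) [Field K] [NumberField K] : ℝ :=
  (2 ^ InfinitePlace.nrRealPlaces K * (2 * Real.pi) ^ InfinitePlace.nrComplexPlaces K *
      (classNumber K) * Units.regulator K) /
    ((Units.torsionOrder K : ℕ) * Real.sqrt |(discr K : ℝ)|)

/-- The Dedekind zeta value `ζ_K(h) = ∑_{𝔞 ≠ 0} N(𝔞)^{-h}`. -/
def zetaK (K : Type*) [Field K] [NumberField K] (h : ℕ) : ℝ :=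
  ∑' I : {I : Ideal (𝓞 K) // I ≠ ⊥}, 1 / (Ideal.absNorm I.val : ℝ) ^ h

/-- `A` is the Mertens constant `𝔄` for the prime ideals of `K`:
`𝔄 = lim (∑_{N(𝔭) ≤ x} 1/N(𝔭) − log log x)`. -/
def MertensK (K : Type*) [Field K] [NumberField K] (A : ℝ) : Prop :=
  Tendsto (fun x : ℝ =>
      (∑ᶠ p ∈ {p : Ideal (𝓞 K) | p.IsPrime ∧ p ≠ ⊥ ∧ (Ideal.absNorm p : ℝ) ≤ x},
        1 / (Ideal.absNorm p : ℝ)) - Real.log (Real.log x))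
    atTop (𝓝 A)

/-- The constant `𝔅 = -π²/6`. -/
def BconstK : ℝ := -(Real.pi ^ 2) / 6

/-- The constant `ℭ₁` for `K`, given the Mertens constant `A`. -/
def C1K (K : Type*) [Field K] [NumberField K] (h : ℕ) (A : ℝ) : ℝ :=
  A - ∑' p : {p : Ideal (𝓞 K) // p.IsPrime ∧ p ≠ ⊥},
    ((Ideal.absNorm p.val : ℝ) - 1) /
      ((Ideal.absNorm p.val : ℝ) * ((Ideal.absNorm p.val : ℝ) ^ h - 1))

/-- The constant `ℭ₂` for `K`, given the Mertens constant `A`. -/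
def C2K (K : Type*) [Field K] [NumberField K] (h : ℕ) (A : ℝ) : ℝ :=
  C1K K h A ^ 2 + C1K K h A + BconstK -
    ∑' p : {p : Ideal (𝓞 K) // p.IsPrime ∧ p ≠ ⊥},
      (((Ideal.absNorm p.val : ℝ) ^ (h - 1) - 1) /
        ((Ideal.absNorm p.val : ℝ) ^ h - 1)) ^ 2

/-- The constant `γ_h` for `K`. -/
def gammaK (K : Type*) [Field K] [NumberField K] (h : ℕ) : ℝ :=
  ∏' p : {p : Ideal (𝓞 K) // p.IsPrime ∧ p ≠ ⊥},
    (1 + ((Ideal.absNorm p.val : ℝ) - (Ideal.absNorm p.val : ℝ) ^ (1 / (h : ℝ))) /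
      ((Ideal.absNorm p.val : ℝ) ^ 2 *
        ((Ideal.absNorm p.val : ℝ) ^ (1 / (h : ℝ)) - 1)))

/-- The convergent series `𝔏_h(r)` for `K`. -/
def LhK (K : Type*) [Field K] [NumberField K] (h : ℕ) (r : ℝ) : ℝ :=
  ∑' p : {p : Ideal (𝓞 K) // p.IsPrime ∧ p ≠ ⊥},
    1 / ((Ideal.absNorm p.val : ℝ) ^ (r / (h : ℝ) - 1) *
      ((Ideal.absNorm p.val : ℝ) -
        (Ideal.absNorm p.val : ℝ) ^ (1 - 1 / (h : ℝ)) + 1))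

/-- The constant `𝔇₁` for `K`, given the Mertens constant `A`. -/
def D1K (K : Type*) [Field K] [NumberField K] (h : ℕ) (A : ℝ) : ℝ :=
  A - Real.log (h : ℝ) + LhK K h ((h : ℝ) + 1) - LhK K h (2 * (h : ℝ))

/-- The constant `𝔇₂` for `K`, given the Mertens constant `A`. -/
def D2K (K : Type*) [Field K] [NumberField K] (h : ℕ) (A : ℝ) : ℝ :=
  D1K K h A ^ 2 + D1K K h A + BconstK -
    ∑' p : {p : Ideal (𝓞 K) // p.IsPrime ∧ p ≠ ⊥},
      ((Ideal.absNorm p.val : ℝ) -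
        (Ideal.absNorm p.val : ℝ) ^ (1 - 1 / (h : ℝ)) + 1)⁻¹ ^ 2

section lattice
open MeasureTheory

theorem lattice_count_aux {E : Type*} [NormedAddCommGroup E] [NormedSpace ℝ E]
    [FiniteDimensional ℝ E] [MeasurableSpace E] [BorelSpace E] (μ : Measure E)
    [μ.IsAddHaarMeasure] (L : Submodule ℤ E) [DiscreteTopology L] [IsZLattice ℝ L] :
    ∃ c : ℝ, 0 < c ∧ ∃ V : ℝ, 0 < V ∧ ∀ S : Set E, MeasurableSet S → Bornology.IsBounded S →
      ∀ M : ENNReal, μ {y | (∃ u ∈ S, ‖u - y‖ ≤ c) ∧ (∃ u ∉ S, ‖u - y‖ ≤ c)} ≤ M → M ≠ ⊤ →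
      |(Nat.card (S ∩ L : Set E) : ℝ) * V - μ.real S| ≤ M.toReal := by
  classical
  let b := Module.Free.chooseBasis ℤ L
  set F := ZSpan.fundamentalDomain (b.ofZLatticeBasis ℝ) with hF
  have hfd : IsAddFundamentalDomain L F μ := ZLattice.isAddFundamentalDomain b μ
  have hFb : Bornology.IsBounded F := ZSpan.fundamentalDomain_isBounded _
  have hFm : MeasurableSet F := ZSpan.fundamentalDomain_measurableSet _
  obtain ⟨c, hc0, hc⟩ := hFb.exists_pos_norm_le
  have hVtop : μ F ≠ ⊤ := hFb.measure_lt_top.ne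
  refine ⟨c, hc0, μ.real F, ?_, ?_⟩
  · have := ZLattice.covolume_pos L μ
    rwa [ZLattice.covolume_eq_measure_fundamentalDomain L μ hfd] at this
  intro S hSm hSb M hM hMtop
  have hfin : (S ∩ L : Set E).Finite := by
    have := ZSpan.setFinite_inter (b.ofZLatticeBasis ℝ) hSb
    rwa [b.ofZLatticeBasis_span ℝ] at this
  -- union
  set U : Set E := ⋃ l ∈ hfin.toFinset, (fun y => l + y) '' F with hU
  have huniq : ∀ y : E, ∃! l : L, l +ᵥ y ∈ F := by
    intro y
    have := ZSpan.exist_unique_vadd_mem_fundamentalDomain (b.ofZLatticeBasis ℝ) y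
    have h2 := b.ofZLatticeBasis_span ℝ
    obtain ⟨v, hv, hv'⟩ := this
    refine ⟨⟨v.1, h2.le v.2⟩, hv, ?_⟩
    intro w hw
    have := hv' ⟨w.1, h2.ge w.2⟩ hw
    rw [← this]
  have hUmeas : ∀ l : E, MeasurableSet ((fun y => l + y) '' F) := fun l =>
    (measurableEmbedding_addLeft l).measurableSet_image.mpr hFm
  have hUm : MeasurableSet U := Finset.measurableSet_biUnion _ fun l _ => hUmeas l
  have hUv : μ U = (Nat.card (S ∩ L : Set E)) * μ F := by
    rw [hU, measure_biUnion_finset]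
    · simp only [Set.image_add_left, measure_preimage_add]
      rw [Finset.sum_const, nsmul_eq_mul, Nat.card_coe_set_eq, Set.ncard_eq_toFinset_card _ hfin]
    · intro l hl m hm hlm
      rw [Function.onFun, Set.disjoint_left]
      rintro _ ⟨f, hf, rfl⟩ ⟨g, hg, hfg⟩
      apply hlm
      simp only [Finset.mem_coe, Set.Finite.mem_toFinset] at hl hm
      obtain ⟨v, -, hv⟩ := huniq (l + f)
      have h1 := hv ⟨-l, L.neg_mem hl.2⟩ (by change -l + (l + f) ∈ F; simpa using hf)
      have h2 := hv ⟨-m, L.neg_mem hm.2⟩ (by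
        change -m + (l + f) ∈ F
        have : l + f = m + g := hfg.symm
        rw [this]; simpa using hg)
      have := congrArg Subtype.val (h1.trans h2.symm)
      simpa using this
    · intro l _; exact hUmeas l
  have hUtop : μ U ≠ ⊤ := by rw [hUv]; exact ENNReal.mul_ne_top (by simp) hVtop
  have hStop : μ S ≠ ⊤ := hSb.measure_lt_top.ne
  have hUr : μ.real U = (Nat.card (S ∩ L : Set E) : ℝ) * μ.real F := by
    simp [measureReal_def, hUv]
  have h1 : U \ S ⊆ {y | (∃ u ∈ S, ‖u - y‖ ≤ c) ∧ (∃ u ∉ S, ‖u - y‖ ≤ c)} := by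
    rintro y ⟨hy, hyS⟩
    simp only [hU, Set.mem_iUnion] at hy
    obtain ⟨l, hl, f, hf, rfl⟩ := hy
    simp only [Set.Finite.mem_toFinset] at hl
    exact ⟨⟨l, hl.1, by simpa using hc f hf⟩, ⟨_, hyS, by simpa using hc0.le⟩⟩
  have h2 : S \ U ⊆ {y | (∃ u ∈ S, ‖u - y‖ ≤ c) ∧ (∃ u ∉ S, ‖u - y‖ ≤ c)} := by
    rintro y ⟨hyS, hy⟩
    refine ⟨⟨y, hyS, by simpa using hc0.le⟩, ?_⟩
    obtain ⟨v, hv, -⟩ := huniq y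
    refine ⟨-v.1, ?_, ?_⟩
    · intro hvS
      apply hy
      simp only [hU, Set.mem_iUnion]
      refine ⟨-v.1, ?_, v.1 + y, hv, by simp⟩
      simp only [Set.Finite.mem_toFinset]
      exact ⟨hvS, L.neg_mem v.2⟩
    · have := hc _ hv
      have h3 : v +ᵥ y = v.1 + y := rfl
      rw [h3] at this
      rwa [show -v.1 - y = -(v.1 + y) by abel, norm_neg]
  rw [← hUr, abs_le]
  have e1 : μ U ≤ μ S + M := by
    calc μ U ≤ μ (S ∪ (U \ S)) := measure_mono (by intro x hx; by_cases h : x ∈ S <;> simp [h, hx])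
      _ ≤ μ S + μ (U \ S) := measure_union_le _ _
      _ ≤ μ S + M := by gcongr; exact (measure_mono h1).trans hM
  have e2 : μ S ≤ μ U + M := by
    calc μ S ≤ μ (U ∪ (S \ U)) := measure_mono (by intro x hx; by_cases h : x ∈ U <;> simp [h, hx])
      _ ≤ μ U + μ (S \ U) := measure_union_le _ _
      _ ≤ μ U + M := by gcongr; exact (measure_mono h2).trans hM
  have e1' := ENNReal.toReal_mono (by finiteness) e1
  have e2' := ENNReal.toReal_mono (by finiteness) e2
  rw [ENNReal.toReal_add hStop hMtop] at e1'
  rw [ENNReal.toReal_add hUtop hMtop] at e2'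
  simp only [measureReal_def]
  constructor <;> linarith

end lattice

section shell
open MeasureTheory NumberField.InfinitePlace NumberField.mixedEmbedding
  NumberField.mixedEmbedding.fundamentalCone NumberField.Units NumberField.Units.dirichletUnitTheorem

variable (K : Type*) [Field K] [NumberField K]

open scoped Classical in
theorem vol_preimage_expMapBasis : ∃ C : ENNReal, C ≠ ⊤ ∧ ∀ s : Set (realSpace K),
    MeasurableSet s → volume (normAtAllPlaces ⁻¹' (expMapBasis '' s)) ≤
      C * ∫⁻ x in s, ENNReal.ofReal (Real.exp (x w₀ * Module.finrank ℚ K)) := by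
  refine ⟨2 ^ nrRealPlaces K * .ofReal (2 * Real.pi) ^ nrComplexPlaces K *
    ((2 : ENNReal)⁻¹ ^ nrComplexPlaces K * ENNReal.ofReal (regulator K) * (Module.finrank ℚ K)), by
    finiteness, ?_⟩
  intro s hs
  have h₂ : MeasurableSet (normAtAllPlaces ⁻¹' expMapBasis '' s) := by
    refine MeasurableSet.preimage ?_ (continuous_normAtAllPlaces K).measurable
    exact MeasurableSet.image_of_continuousOn_injOn hs (continuous_expMapBasis K).continuousOn
      (injective_expMapBasis K).injOn
  rw [volume_eq_two_pow_mul_two_pi_pow_mul_integral Set.preimage_image_preimage h₂,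
    normAtAllPlaces_image_preimage_expMapBasis,
    setLIntegral_expMapBasis_image hs (by fun_prop)]
  simp_rw [ENNReal.inv_mul_cancel_right
    (Finset.prod_ne_zero_iff.mpr fun _ _ ↦ ENNReal.ofReal_ne_zero_iff.mpr (expMapBasis_pos _ _))
    (ENNReal.prod_ne_top fun _ _ ↦ ENNReal.ofReal_ne_top)]
  rw [← mul_assoc]

open scoped Classical in
theorem lint_pi_exp (n : ℕ) (t : InfinitePlace K → Set ℝ) :
    ∫⁻ (x : realSpace K) in Set.univ.pi t, ENNReal.ofReal (Real.exp (x w₀ * n)) =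
      (∫⁻ x in t w₀, ENNReal.ofReal (Real.exp (x * n))) *
        ∏ w ∈ Finset.univ.erase w₀, volume (t w) := by
  rw [volume_pi, Measure.restrict_pi_pi, lintegral_eq_lmarginal_univ 0,
    lmarginal_erase' _ (by fun_prop) (Finset.mem_univ w₀)]
  simp_rw [Function.update_self, lmarginal, lintegral_const, Measure.pi_univ,
    Measure.restrict_apply_univ]
  rw [Finset.prod_coe_sort (Finset.univ.erase w₀) (fun w => volume (t w))]

/-- boundary shell in parameter space -/
def paramShell (η : ℝ) : Set (realSpace K) :=
  {x | (∃ a ∈ paramSet K, ∀ w, |a w - x w| ≤ η) ∧ ∃ a ∉ paramSet K, ∀ w, |a w - x w| ≤ η}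

open scoped Classical in
def shellBox (η : ℝ) (v w : InfinitePlace K) : Set ℝ :=
  if w = w₀ then (if v = w₀ then Set.Icc (-η) η else Set.Iic 1)
  else if w = v then Set.Icc (-η) η ∪ Set.Icc (1 - η) (1 + η) else Set.Icc (-1) 2

theorem paramShell_subset {η : ℝ} (hη1 : η ≤ 1) :
    paramShell K η ⊆ ⋃ v, Set.univ.pi (shellBox K η v) := by
  classical
  rintro x ⟨⟨a, ha, hax⟩, ⟨b, hb, hbx⟩⟩
  simp only [paramSet, Set.mem_pi, Set.mem_univ, true_imp_iff, not_forall] at ha hb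
  obtain ⟨v, hv⟩ := hb
  rw [Set.mem_iUnion]
  refine ⟨v, ?_⟩
  intro w _
  have ha := ha w
  have hax := hax w
  rw [abs_le] at hax
  unfold shellBox
  by_cases hw : w = w₀
  · simp only [hw, if_true] at ha hax ⊢
    by_cases hvw : v = w₀
    · have hbx := hbx v
      simp only [hvw, if_true, Set.mem_Icc, Set.mem_Iic, not_le, abs_le] at *
      constructor <;> linarith
    · simp only [hvw, if_false, Set.mem_Iic] at *
      linarith
  · simp only [hw, if_false] at ha ⊢
    by_cases hvw : w = v
    · have hbx := hbx v
      subst hvw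
      simp only [if_true, hw, if_false, Set.mem_union, Set.mem_Icc, Set.mem_Ico, abs_le,
        not_and_or, not_le, not_lt] at *
      rcases hv with hv | hv
      · left; constructor <;> linarith
      · right; constructor <;> linarith
    · simp only [hvw, if_false, Set.mem_Icc, Set.mem_Ico] at *
      constructor <;> linarith

theorem measurableSet_shellBox (η : ℝ) (v w : InfinitePlace K) :
    MeasurableSet (shellBox K η v w) := by
  unfold shellBox
  split_ifs <;> measurability

open scoped Classical in
theorem vol_shellBox : ∃ C : ENNReal, C ≠ ⊤ ∧ ∀ η : ℝ, 0 < η → η ≤ 1 → ∀ v,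
    volume (normAtAllPlaces ⁻¹' (expMapBasis '' (Set.univ.pi (shellBox K η v)))) ≤
      C * ENNReal.ofReal η := by
  obtain ⟨C, hC, hCs⟩ := vol_preimage_expMapBasis K
  set n := Module.finrank ℚ K with hn
  have hn0 : 0 < (n : ℝ) := Nat.cast_pos.mpr Module.finrank_pos
  set E : ENNReal := ∫⁻ x in Set.Iic (1 : ℝ), ENNReal.ofReal (Real.exp (x * n)) with hE
  have hEtop : E ≠ ⊤ := by
    rw [hE]
    simp_rw [mul_comm _ (n : ℝ)]
    rw [← ofReal_integral_eq_lintegral_ofReal (integrableOn_exp_mul_Iic hn0 _)]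
    · exact ENNReal.ofReal_ne_top
    · filter_upwards with _ using Real.exp_nonneg _
  set m := (Finset.univ.erase (w₀ : InfinitePlace K)).card
  refine ⟨C * (ENNReal.ofReal (Real.exp n) * 2 * 3 ^ m + E * (4 * 3 ^ m)), by finiteness, ?_⟩
  intro η hη hη1 v
  have key : ∫⁻ (x : realSpace K) in Set.univ.pi (shellBox K η v),
      ENNReal.ofReal (Real.exp (x w₀ * n)) ≤
      (ENNReal.ofReal (Real.exp n) * 2 * 3 ^ m + E * (4 * 3 ^ m)) * ENNReal.ofReal η := by
    rw [lint_pi_exp]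
    by_cases hv : v = w₀
    · have h1 : ∫⁻ x in shellBox K η v w₀, ENNReal.ofReal (Real.exp (x * n)) ≤
          ENNReal.ofReal (Real.exp n) * 2 * ENNReal.ofReal η := by
        have : shellBox K η v w₀ = Set.Icc (-η) η := by simp [shellBox, hv]
        rw [this]
        calc ∫⁻ x in Set.Icc (-η) η, ENNReal.ofReal (Real.exp (x * n))
            ≤ ∫⁻ x in Set.Icc (-η) η, ENNReal.ofReal (Real.exp n) := by
              refine setLIntegral_mono measurable_const ?_
              intro x hx
              apply ENNReal.ofReal_le_ofReal
              apply Real.exp_le_exp.mpr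
              have : x ≤ 1 := hx.2.trans hη1
              nlinarith
          _ = _ := by
              rw [setLIntegral_const, Real.volume_Icc, mul_assoc]
              congr 1
              rw [← ENNReal.ofReal_ofNat 2, ← ENNReal.ofReal_mul (by norm_num)]
              congr 1; norm_num; ring
      have h2 : ∏ w ∈ Finset.univ.erase w₀, volume (shellBox K η v w) ≤ 3 ^ m := by
        apply Finset.prod_le_pow_card
        intro w hw
        have hw := Finset.ne_of_mem_erase hw
        have : shellBox K η v w = Set.Icc (-1) 2 := by simp [shellBox, hv, hw]
        rw [this, Real.volume_Icc]
        norm_num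
      calc _ ≤ (ENNReal.ofReal (Real.exp n) * 2 * ENNReal.ofReal η) * 3 ^ m := by gcongr
        _ = (ENNReal.ofReal (Real.exp n) * 2 * 3 ^ m) * ENNReal.ofReal η := by ring
        _ ≤ _ := by gcongr; exact le_self_add
    · have h1 : ∫⁻ x in shellBox K η v w₀, ENNReal.ofReal (Real.exp (x * n)) = E := by
        have : shellBox K η v w₀ = Set.Iic 1 := by simp [shellBox, hv]
        rw [this]
      have h2 : ∏ w ∈ Finset.univ.erase w₀, volume (shellBox K η v w) ≤
          (4 * ENNReal.ofReal η) * 3 ^ m := by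
        rw [← Finset.mul_prod_erase _ _ (Finset.mem_erase.mpr ⟨hv, Finset.mem_univ v⟩)]
        gcongr
        · have : shellBox K η v v = Set.Icc (-η) η ∪ Set.Icc (1 - η) (1 + η) := by
            simp [shellBox, hv]
          rw [this]
          refine (measure_union_le _ _).trans ?_
          rw [Real.volume_Icc, Real.volume_Icc, ← ENNReal.ofReal_add (by linarith) (by linarith),
            ← ENNReal.ofReal_ofNat 4, ← ENNReal.ofReal_mul (by norm_num)]
          apply ENNReal.ofReal_le_ofReal
          norm_num; linarith
        · refine (Finset.prod_le_pow_card _ _ 3 ?_).trans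
            (pow_le_pow_right₀ (by norm_num) (Finset.card_le_card (Finset.erase_subset _ _)))
          intro w hw
          have hw' := Finset.ne_of_mem_erase hw
          have hw := Finset.ne_of_mem_erase (Finset.mem_of_mem_erase hw)
          have : shellBox K η v w = Set.Icc (-1) 2 := by simp [shellBox, hw', hw]
          rw [this, Real.volume_Icc]
          norm_num
      rw [h1]
      calc _ ≤ E * ((4 * ENNReal.ofReal η) * 3 ^ m) := by gcongr
        _ = (E * (4 * 3 ^ m)) * ENNReal.ofReal η := by ring
        _ ≤ _ := by gcongr; exact le_add_self
  refine (hCs _ (MeasurableSet.univ_pi fun w => measurableSet_shellBox K η v w)).trans ?_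
  rw [mul_assoc]
  gcongr

open scoped Classical in
theorem vol_paramShell : ∃ C : ENNReal, C ≠ ⊤ ∧ ∀ η : ℝ, 0 < η → η ≤ 1 →
    volume (normAtAllPlaces ⁻¹' (expMapBasis '' (paramShell K η))) ≤
      C * ENNReal.ofReal η := by
  obtain ⟨C, hC, hCs⟩ := vol_shellBox K
  refine ⟨Fintype.card (InfinitePlace K) * C, by finiteness, ?_⟩
  intro η hη hη1
  calc volume (normAtAllPlaces ⁻¹' (expMapBasis '' (paramShell K η)))
      ≤ volume (⋃ v, normAtAllPlaces ⁻¹' (expMapBasis '' (Set.univ.pi (shellBox K η v)))) := by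
        apply measure_mono
        rw [← Set.preimage_iUnion, ← Set.image_iUnion]
        exact Set.preimage_mono (Set.image_mono (paramShell_subset K hη1))
    _ ≤ ∑' v, volume (normAtAllPlaces ⁻¹' (expMapBasis '' (Set.univ.pi (shellBox K η v)))) :=
        measure_iUnion_le _
    _ ≤ ∑' v : InfinitePlace K, C * ENNReal.ofReal η := ENNReal.tsum_le_tsum fun v => hCs η hη hη1 v
    _ = _ := by rw [tsum_fintype, Finset.sum_const, Finset.card_univ, nsmul_eq_mul, mul_assoc]

end shell

section shell2
open MeasureTheory NumberField.InfinitePlace NumberField.mixedEmbedding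
  NumberField.mixedEmbedding.fundamentalCone NumberField.Units NumberField.Units.dirichletUnitTheorem

variable (K : Type*) [Field K] [NumberField K]

open scoped Classical in
theorem normAtPlace_le_norm' (w : InfinitePlace K) (x : mixedSpace K) : normAtPlace w x ≤ ‖x‖ := by
  rw [norm_eq_sup'_normAtPlace]
  exact Finset.le_sup' (fun w => normAtPlace w x) (Finset.mem_univ w)

open scoped Classical in
theorem vol_smallCoord (R : ℝ) (hR : 1 ≤ R) : ∃ C : ENNReal, C ≠ ⊤ ∧ ∀ η : ℝ, 0 < η → η ≤ 1 →
    volume {y : mixedSpace K | (∃ w, normAtPlace w y < η) ∧ ∀ w, normAtPlace w y < R} ≤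
      C * ENNReal.ofReal η := by
  refine ⟨Fintype.card (InfinitePlace K) * (convexBodyLTFactor K *
    ENNReal.ofReal R ^ (∑ w : InfinitePlace K, mult w)), by finiteness, ?_⟩
  intro η hη hη1
  let f : InfinitePlace K → InfinitePlace K → NNReal :=
    fun v w => if w = v then η.toNNReal else R.toNNReal
  have hsub : {y : mixedSpace K | (∃ w, normAtPlace w y < η) ∧ ∀ w, normAtPlace w y < R} ⊆
      ⋃ v, convexBodyLT K (f v) := by
    rintro y ⟨⟨v, hv⟩, hy⟩
    rw [Set.mem_iUnion]
    refine ⟨v, ?_⟩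
    have key : ∀ w, normAtPlace w y < f v w := by
      intro w
      simp only [f]
      split_ifs with h
      · subst h; rw [Real.coe_toNNReal _ hη.le]; exact hv
      · rw [Real.coe_toNNReal _ (by linarith)]; exact hy w
    refine ⟨?_, ?_⟩
    · intro w _
      rw [mem_ball_zero_iff, ← normAtPlace_apply_of_isReal w.2]
      exact key w
    · intro w _
      rw [mem_ball_zero_iff, ← normAtPlace_apply_of_isComplex w.2]
      exact key w
  have hb : ∀ v, volume (convexBodyLT K (f v)) ≤
      convexBodyLTFactor K * ENNReal.ofReal R ^ (∑ w : InfinitePlace K, mult w) *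
        ENNReal.ofReal η := by
    intro v
    rw [convexBodyLT_volume, mul_assoc, ← Finset.prod_pow_eq_pow_sum,
      ← Finset.mul_prod_erase _ _ (Finset.mem_univ v),
      ← Finset.mul_prod_erase _ _ (Finset.mem_univ v)]
    gcongr
    push_cast
    have hη' : ENNReal.ofReal η ≤ 1 := by simpa using ENNReal.ofReal_le_ofReal hη1
    have hR' : 1 ≤ ENNReal.ofReal R := by simpa using ENNReal.ofReal_le_ofReal hR
    calc ((f v v : NNReal) : ENNReal) ^ mult v * ∏ x ∈ Finset.univ.erase v, ((f v x : NNReal) : ENNReal) ^ mult x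
        ≤ ENNReal.ofReal η * ∏ x ∈ Finset.univ.erase v, ENNReal.ofReal R ^ mult x := by
          gcongr with x hx
          · simp only [f, if_true]
            exact pow_le_of_le_one (by simp) hη' mult_ne_zero
          · simp only [f, Finset.ne_of_mem_erase hx, if_false]
            rfl
      _ = 1 * (∏ x ∈ Finset.univ.erase v, ENNReal.ofReal R ^ mult x) * ENNReal.ofReal η := by ring
      _ ≤ _ := by
          gcongr
          exact one_le_pow₀ hR'
  calc _ ≤ volume (⋃ v, convexBodyLT K (f v)) := measure_mono hsub
    _ ≤ ∑' v, volume (convexBodyLT K (f v)) := measure_iUnion_le _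
    _ ≤ ∑' v : InfinitePlace K, _ := ENNReal.tsum_le_tsum hb
    _ = _ := by rw [tsum_fintype, Finset.sum_const, Finset.card_univ, nsmul_eq_mul]; ring

open scoped Classical in
theorem logcoord_bound : ∃ C : ℝ, 1 ≤ C ∧ ∀ (η : ℝ) (u y : mixedSpace K), 0 < η → η ≤ 1 →
    (∀ w, 2 * η ≤ normAtPlace w y) → ‖u - y‖ ≤ η ^ 2 →
    (∀ w, 0 < normAtPlace w u) ∧
    ∀ w, |expMapBasis.symm (normAtAllPlaces u) w - expMapBasis.symm (normAtAllPlaces y) w| ≤ C * η := by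
  set T : realSpace K →L[ℝ] realSpace K := ((completeBasis K).equivFunL : realSpace K →L[ℝ] realSpace K)
  refine ⟨max 1 (‖T‖ * 2), le_max_left _ _, ?_⟩
  intro η u y hη hη1 hy huy
  have hd : ∀ w, |normAtPlace w u - normAtPlace w y| ≤ η ^ 2 := by
    intro w
    have h1 : normAtPlace w (u - y) ≤ η ^ 2 := (normAtPlace_le_norm' K w _).trans huy
    have h2 := normAtPlace_add_le w (u - y) y
    have h3 := normAtPlace_add_le w (y - u) u
    rw [sub_add_cancel] at h2 h3
    have h4 : normAtPlace w (y - u) = normAtPlace w (u - y) := by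
      rw [← normAtPlace_neg, neg_sub]
    rw [abs_le]; constructor <;> linarith
  have hu : ∀ w, η ≤ normAtPlace w u := by
    intro w
    have := abs_le.mp (hd w)
    have := hy w
    nlinarith
  refine ⟨fun w => hη.trans_le (hu w), ?_⟩
  have hlog : ∀ w, |Real.log (normAtPlace w u) - Real.log (normAtPlace w y)| ≤ η := by
    intro w
    have h1 := hu w
    have h2 := hy w
    have h3 := abs_le.mp (hd w)
    have key : ∀ a b : ℝ, η ≤ a → η ≤ b → a - b ≤ η ^ 2 → Real.log a - Real.log b ≤ η := by
      intro a b ha hb hab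
      rw [← Real.log_div (by linarith) (by linarith)]
      have h0 : 0 < a / b := div_pos (by linarith) (by linarith)
      have := Real.log_le_sub_one_of_pos h0
      have h5 : a / b - 1 ≤ η := by
        rw [div_sub_one (by linarith), div_le_iff₀ (by linarith)]
        nlinarith
      linarith
    rw [abs_le]
    constructor
    · have := key _ _ (by linarith : η ≤ normAtPlace w y) h1 (by linarith)
      linarith
    · exact key _ _ h1 (by linarith) (by linarith)
  intro w
  have hT : ∀ z : mixedSpace K, expMapBasis.symm (normAtAllPlaces z) = T (expMap.symm (normAtAllPlaces z)) := fun z => rfl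
  rw [hT, hT, ← Pi.sub_apply, ← map_sub, ← Real.norm_eq_abs]
  refine (norm_le_pi_norm _ w).trans ((T.le_opNorm _).trans ?_)
  calc _ ≤ ‖T‖ * (2 * η) := by
        gcongr
        rw [pi_norm_le_iff_of_nonneg (by linarith)]
        intro w
        rw [Pi.sub_apply, expMap_symm_apply, expMap_symm_apply, ← mul_sub, norm_mul, Real.norm_eq_abs, Real.norm_eq_abs]
        have hm : |((mult w : ℕ) : ℝ)| ≤ 2 := by
          rw [Nat.abs_cast]
          unfold mult
          split_ifs <;> norm_num
        exact mul_le_mul hm (hlog w) (abs_nonneg _) (by norm_num)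
    _ = ‖T‖ * 2 * η := by ring
    _ ≤ _ := by gcongr; exact le_max_right _ _

theorem mem_normLeOne_iff_symm (u : mixedSpace K) (hu : ∀ w, 0 < normAtPlace w u) :
    u ∈ normLeOne K ↔ expMapBasis.symm (normAtAllPlaces u) ∈ paramSet K := by
  rw [normLeOne_eq_preimage, Set.mem_preimage]
  have : normAtAllPlaces u ∈ expMapBasis.target := Set.mem_univ_pi.mpr hu
  conv_lhs => rw [← expMapBasis.right_inv this]
  rw [(injective_expMapBasis K).mem_set_image]

open scoped Classical in
theorem vol_shell : ∃ C : ENNReal, C ≠ ⊤ ∧ ∃ ε₀ : ℝ, 0 < ε₀ ∧ ∀ ε : ℝ, 0 < ε → ε ≤ ε₀ →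
    volume {y : mixedSpace K | (∃ u ∈ normLeOne K, ‖u - y‖ ≤ ε) ∧ (∃ u ∉ normLeOne K, ‖u - y‖ ≤ ε)} ≤
      C * ENNReal.ofReal (Real.sqrt ε) := by
  obtain ⟨R, hR0, hR⟩ := (isBounded_normLeOne K).exists_pos_norm_le
  obtain ⟨C1, hC1, h1⟩ := vol_smallCoord K (R + 2) (by linarith)
  obtain ⟨C2, hC2, h2⟩ := vol_paramShell K
  obtain ⟨T, hT, h3⟩ := logcoord_bound K
  refine ⟨C1 * ENNReal.ofReal 2 + C2 * ENNReal.ofReal T, by finiteness, (1 / (2 * T)) ^ 2, by positivity, ?_⟩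
  intro ε hε hεle
  set η := Real.sqrt ε with hη
  have hη0 : 0 < η := Real.sqrt_pos.mpr hε
  have hηT : η ≤ 1 / (2 * T) := by
    rw [hη, Real.sqrt_le_left (by positivity)]; exact hεle
  have hηT' : T * η ≤ 1 / 2 := by
    calc T * η ≤ T * (1 / (2 * T)) := by gcongr
      _ = 1 / 2 := by field_simp
  have hη2 : η ≤ 1 / 2 := by nlinarith
  have hεη : ε = η ^ 2 := (Real.sq_sqrt hε.le).symm
  have hsub : {y : mixedSpace K | (∃ u ∈ normLeOne K, ‖u - y‖ ≤ ε) ∧ (∃ u ∉ normLeOne K, ‖u - y‖ ≤ ε)} ⊆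
      {y : mixedSpace K | (∃ w, normAtPlace w y < 2 * η) ∧ ∀ w, normAtPlace w y < R + 2} ∪
      normAtAllPlaces ⁻¹' (expMapBasis '' (paramShell K (T * η))) := by
    rintro y ⟨⟨u, huD, huy⟩, ⟨v, hvD, hvy⟩⟩
    by_cases hs : ∃ w, normAtPlace w y < 2 * η
    · left
      refine ⟨hs, fun w => ?_⟩
      have ha := normAtPlace_le_norm' K w y
      have hb : ‖y‖ ≤ ‖u‖ + ‖u - y‖ := by
        rw [← norm_neg (u - y), neg_sub]
        calc ‖y‖ = ‖u + (y - u)‖ := by congr 1; abel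
          _ ≤ _ := norm_add_le _ _
      have hc := hR u huD
      have : ε ≤ 1 := by rw [hεη]; nlinarith
      linarith
    · right
      push Not at hs
      rw [hεη] at huy hvy
      obtain ⟨hu1, hu2⟩ := h3 η u y hη0 (by linarith) hs huy
      obtain ⟨hv1, hv2⟩ := h3 η v y hη0 (by linarith) hs hvy
      have hyt : normAtAllPlaces y ∈ expMapBasis.target :=
        Set.mem_univ_pi.mpr fun w => lt_of_lt_of_le (by linarith) (hs w)
      rw [Set.mem_preimage]
      refine ⟨expMapBasis.symm (normAtAllPlaces y), ?_, expMapBasis.right_inv hyt⟩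
      exact ⟨⟨_, (mem_normLeOne_iff_symm K u hu1).mp huD, hu2⟩,
        ⟨_, fun h => hvD ((mem_normLeOne_iff_symm K v hv1).mpr h), hv2⟩⟩
  calc _ ≤ _ := measure_mono hsub
    _ ≤ _ := measure_union_le _ _
    _ ≤ C1 * ENNReal.ofReal (2 * η) + C2 * ENNReal.ofReal (T * η) := by
        gcongr
        · exact h1 _ (by linarith) (by linarith)
        · exact h2 _ (by positivity) (by linarith)
    _ = _ := by
        rw [ENNReal.ofReal_mul (by norm_num), ENNReal.ofReal_mul (by linarith)]
        ring

end shell2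

section count
open MeasureTheory NumberField.InfinitePlace NumberField.mixedEmbedding
  NumberField.mixedEmbedding.fundamentalCone NumberField.Units
open scoped nonZeroDivisors Pointwise

variable (K : Type*) [Field K] [NumberField K]

theorem class_card_aux {C : ClassGroup (𝓞 K)} {J : (Ideal (𝓞 K))⁰} {s : ℝ} (hJ : ClassGroup.mk0 J = C⁻¹) :
    Nat.card {I : (Ideal (𝓞 K))⁰ // Ideal.absNorm (I : Ideal (𝓞 K)) ≤ s ∧ ClassGroup.mk0 I = C}
      = Nat.card {I : (Ideal (𝓞 K))⁰ // (J : Ideal (𝓞 K)) ∣ I ∧ Submodule.IsPrincipal (I : Ideal (𝓞 K)) ∧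
        Ideal.absNorm (I : Ideal (𝓞 K)) ≤ s * Ideal.absNorm (J : Ideal (𝓞 K))} := by
  simp_rw [← nonZeroDivisors_dvd_iff_dvd_coe]
  refine Nat.card_congr ?_
  refine ((Equiv.dvd J).subtypeEquiv fun I ↦ ?_).trans
    (Equiv.subtypeSubtypeEquivSubtypeInter (fun I : (Ideal (𝓞 K))⁰ ↦ J ∣ I) _)
  rw [← ClassGroup.mk0_eq_one_iff (SetLike.coe_mem _)]
  simp_rw [Equiv.dvd_apply, Submonoid.coe_mul, ← Submonoid.mul_def, _root_.map_mul, hJ,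
    inv_mul_eq_one, Nat.cast_mul, mul_comm s, eq_comm, and_comm, and_congr_left_iff]
  exact fun _ ↦
    (mul_le_mul_iff_of_pos_left (Nat.cast_pos.mpr (Ideal.absNorm_pos_of_nonZeroDivisors J))).symm

open scoped Classical in
theorem mem_smul_normLeOne {t : ℝ} (ht : 0 < t) (x : mixedSpace K) :
    x ∈ t • normLeOne K ↔ x ∈ fundamentalCone K ∧ mixedEmbedding.norm x ≤ t ^ Module.finrank ℚ K := by
  rw [Set.mem_smul_set_iff_inv_smul_mem₀ ht.ne', mem_normLeOne, smul_mem_iff_mem (inv_ne_zero ht.ne'),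
    mixedEmbedding.norm_smul, abs_of_pos (inv_pos.mpr ht), inv_pow, inv_mul_le_iff₀ (by positivity),
    mul_one]

open scoped Classical in
theorem card_smul_inter (J : (Ideal (𝓞 K))⁰) {t : ℝ} (ht : 0 < t) :
    Nat.card ((t • normLeOne K) ∩ (idealLattice K (FractionalIdeal.mk0 K J) : Set (mixedSpace K)) : Set (mixedSpace K)) =
    Nat.card {a : idealSet K J // mixedEmbedding.norm (a : mixedSpace K) ≤ t ^ Module.finrank ℚ K} := by
  refine Nat.card_congr ((Equiv.subtypeEquivProp ?_).trans
    (Equiv.subtypeSubtypeEquivSubtypeInter _ (mixedEmbedding.norm · ≤ t ^ Module.finrank ℚ K)).symm)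
  ext x
  rw [Set.mem_inter_iff, mem_smul_normLeOne K ht]
  simp_rw [mem_idealSet, SetLike.mem_coe, mem_idealLattice, FractionalIdeal.coe_mk0]
  constructor
  · rintro ⟨⟨h1, h2⟩, y, hy, rfl⟩
    obtain ⟨z, hz, rfl⟩ := by simpa using hy
    exact ⟨⟨h1, z, hz, rfl⟩, h2⟩
  · rintro ⟨⟨h1, z, hz, rfl⟩, h2⟩
    exact ⟨⟨h1, h2⟩, z, by simpa using hz, rfl⟩

open scoped Classical in
theorem class_count (C : ClassGroup (𝓞 K)) : ∃ c B s₀ : ℝ, ∀ s : ℝ, s₀ ≤ s → 0 < s →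
    |(Nat.card {I : (Ideal (𝓞 K))⁰ // Ideal.absNorm (I : Ideal (𝓞 K)) ≤ s ∧ ClassGroup.mk0 I = C} : ℝ)
      - c * s| ≤ B * s ^ (1 - 1 / (2 * (Module.finrank ℚ K : ℝ))) := by
  obtain ⟨J, hJ⟩ := ClassGroup.mk0_surjective C⁻¹
  set n := Module.finrank ℚ K with hn
  have hn0 : 0 < (n : ℝ) := Nat.cast_pos.mpr Module.finrank_pos
  have hnn : n ≠ 0 := Module.finrank_pos.ne'
  have hJ0 : (0 : ℝ) < Ideal.absNorm (J : Ideal (𝓞 K)) := Nat.cast_pos.mpr (Ideal.absNorm_pos_of_nonZeroDivisors J)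
  set NJ : ℝ := ((Ideal.absNorm (J : Ideal (𝓞 K)) : ℕ) : ℝ) with hNJ
  have hw0 : (0 : ℝ) < torsionOrder K := Nat.cast_pos.mpr (torsionOrder_pos K)
  set w : ℝ := ((torsionOrder K : ℕ) : ℝ) with hw
  obtain ⟨c, hc, V, hV, hcount⟩ := lattice_count_aux (volume : Measure (mixedSpace K)) (idealLattice K (FractionalIdeal.mk0 K J))
  obtain ⟨A, hA, ε₀, hε₀, hshell⟩ := vol_shell K
  refine ⟨NJ * (volume (normLeOne K)).toReal / (V * w),
    A.toReal * Real.sqrt c * NJ ^ (1 - 1 / (2 * (n : ℝ))) / (V * w),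
    (c / ε₀) ^ n / NJ, ?_⟩
  intro s hs0 hs
  set t : ℝ := (s * NJ) ^ (1 / (n : ℝ)) with ht
  have hsN : 0 < s * NJ := by positivity
  have ht0 : 0 < t := by positivity
  have htn : t ^ n = s * NJ := by
    rw [ht, ← Real.rpow_natCast, ← Real.rpow_mul hsN.le, one_div_mul_cancel hn0.ne', Real.rpow_one]
  have htc : c / t ≤ ε₀ := by
    rw [div_le_comm₀ ht0 hε₀]
    rw [← pow_le_pow_iff_left₀ (by positivity) ht0.le hnn, htn]
    rwa [div_le_iff₀ hJ0] at hs0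
  have hvol : volume {y : mixedSpace K | (∃ u ∈ t • normLeOne K, ‖u - y‖ ≤ c) ∧ (∃ u ∉ t • normLeOne K, ‖u - y‖ ≤ c)} ≤
      ENNReal.ofReal (t ^ n) * (A * ENNReal.ofReal (Real.sqrt (c / t))) := by
    have : {y : mixedSpace K | (∃ u ∈ t • normLeOne K, ‖u - y‖ ≤ c) ∧ (∃ u ∉ t • normLeOne K, ‖u - y‖ ≤ c)} ⊆
        t • {y : mixedSpace K | (∃ u ∈ normLeOne K, ‖u - y‖ ≤ c / t) ∧ (∃ u ∉ normLeOne K, ‖u - y‖ ≤ c / t)} := by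
      have hh : ∀ u y : mixedSpace K, ‖u - y‖ ≤ c → ‖t⁻¹ • u - t⁻¹ • y‖ ≤ c / t := by
        intro u y h
        rw [← smul_sub, _root_.norm_smul, norm_inv, Real.norm_eq_abs, abs_of_pos ht0, div_eq_inv_mul]
        gcongr
      rintro y ⟨⟨u, hu, huy⟩, ⟨v, hv, hvy⟩⟩
      rw [Set.mem_smul_set_iff_inv_smul_mem₀ ht0.ne'] at hu hv ⊢
      exact ⟨⟨_, hu, hh _ _ huy⟩, ⟨_, hv, hh _ _ hvy⟩⟩
    refine (measure_mono this).trans ?_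
    rw [Measure.addHaar_smul, mixedEmbedding.finrank, abs_of_pos (by positivity)]
    gcongr
    exact hshell _ (by positivity) htc
  have hmeas : MeasurableSet (t • normLeOne K) := (measurableSet_normLeOne K).const_smul₀ t
  have hbdd : Bornology.IsBounded (t • normLeOne K) := (isBounded_normLeOne K).smul₀ t
  have h := hcount _ hmeas hbdd _ hvol (by finiteness)
  have hcard : (Nat.card {I : (Ideal (𝓞 K))⁰ // Ideal.absNorm (I : Ideal (𝓞 K)) ≤ s ∧ ClassGroup.mk0 I = C} : ℝ) * w =
      Nat.card ((t • normLeOne K) ∩ (idealLattice K (FractionalIdeal.mk0 K J) : Set (mixedSpace K)) : Set (mixedSpace K)) := by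
    rw [card_smul_inter K J ht0, htn, class_card_aux K hJ, hw, ← Nat.cast_mul, card_isPrincipal_dvd_norm_le]
  rw [← hcard, measureReal_def, Measure.addHaar_smul, mixedEmbedding.finrank, abs_of_pos (pow_pos ht0 _),
    ENNReal.toReal_mul, ENNReal.toReal_mul, ENNReal.toReal_mul, ENNReal.toReal_ofReal (by positivity),
    ENNReal.toReal_ofReal (by positivity), ← hn, htn] at h
  have hVw : 0 < V * w := by positivity
  have e1 : ∀ X : ℝ, X - NJ * (volume (normLeOne K)).toReal / (V * w) * s =
      (X * w * V - s * NJ * (volume (normLeOne K)).toReal) / (V * w) := by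
    intro X; field_simp
  rw [e1, abs_div, abs_of_pos hVw, div_mul_eq_mul_div]
  gcongr
  refine h.trans (le_of_eq ?_)
  rw [Real.sqrt_div hc.le]
  have e2 : Real.sqrt t = (s * NJ) ^ (1 / (2 * (n : ℝ))) := by
    rw [ht, Real.sqrt_eq_rpow, ← Real.rpow_mul hsN.le]
    congr 1; field_simp
  rw [e2]
  have e3 : (s * NJ) ^ (1 - 1 / (2 * (n : ℝ))) = s * NJ / (s * NJ) ^ (1 / (2 * (n : ℝ))) := by
    rw [Real.rpow_sub hsN, Real.rpow_one]
  rw [mul_assoc (A.toReal * Real.sqrt c), mul_comm (NJ ^ _), ← Real.mul_rpow hs.le hJ0.le, e3]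
  ring

theorem kappaK_pos : 0 < kappaK K := by
  unfold kappaK
  have := regulator_pos K
  have h2 : 0 < torsionOrder K := torsionOrder_pos K
  have h3 : 0 < classNumber K := Fintype.card_pos
  have h4 : (0 : ℝ) < |(discr K : ℝ)| := abs_pos.mpr (by exact_mod_cast discr_ne_zero K)
  positivity

/-- number of nonzero ideals of norm at most `s` -/
def idealCount (s : ℝ) : ℝ := (Nat.card {I : (Ideal (𝓞 K))⁰ // (Ideal.absNorm (I : Ideal (𝓞 K)) : ℝ) ≤ s} : ℝ)

theorem finite_ideal_le (s : ℝ) : Finite {I : (Ideal (𝓞 K))⁰ // (Ideal.absNorm (I : Ideal (𝓞 K)) : ℝ) ≤ s} := by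
  rcases lt_or_ge s 0 with h | hs
  · have : IsEmpty {I : (Ideal (𝓞 K))⁰ // (Ideal.absNorm (I : Ideal (𝓞 K)) : ℝ) ≤ s} := by
      constructor
      rintro ⟨I, hI⟩
      have : (0 : ℝ) ≤ Ideal.absNorm (I : Ideal (𝓞 K)) := Nat.cast_nonneg _
      linarith
    infer_instance
  · simp_rw [← Nat.le_floor_iff hs]
    exact Ideal.finite_setOfPred_absNorm_le₀ ⌊s⌋₊

theorem idealCount_mono {s t : ℝ} (h : s ≤ t) : idealCount K s ≤ idealCount K t := by
  have := finite_ideal_le K t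
  unfold idealCount
  exact_mod_cast Nat.card_le_card_of_injective
    (fun I : {I : (Ideal (𝓞 K))⁰ // (Ideal.absNorm (I : Ideal (𝓞 K)) : ℝ) ≤ s} =>
      (⟨I.1, I.2.trans h⟩ : {I : (Ideal (𝓞 K))⁰ // (Ideal.absNorm (I : Ideal (𝓞 K)) : ℝ) ≤ t}))
    (fun a b hab => by
      simp only [Subtype.mk.injEq] at hab
      exact Subtype.ext hab)

theorem idealCount_of_lt_one {s : ℝ} (h : s < 1) : idealCount K s = 0 := by
  unfold idealCount
  have : IsEmpty {I : (Ideal (𝓞 K))⁰ // (Ideal.absNorm (I : Ideal (𝓞 K)) : ℝ) ≤ s} := by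
    constructor
    rintro ⟨I, hI⟩
    have : (1 : ℝ) ≤ Ideal.absNorm (I : Ideal (𝓞 K)) := by
      exact_mod_cast Ideal.absNorm_pos_of_nonZeroDivisors I
    linarith
  simp

theorem idealCount_eventually : ∃ c B s₀ : ℝ, ∀ s : ℝ, s₀ ≤ s → 0 < s →
    |idealCount K s - c * s| ≤ B * s ^ (1 - 1 / (2 * (Module.finrank ℚ K : ℝ))) := by
  classical
  choose c B s₀ h using class_count K
  refine ⟨∑ C, c C, ∑ C, B C, ∑ C, |s₀ C|, ?_⟩
  intro s hs hs0
  have hsum : idealCount K s = ∑ C : ClassGroup (𝓞 K), (Nat.card {I : (Ideal (𝓞 K))⁰ //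
      Ideal.absNorm (I : Ideal (𝓞 K)) ≤ s ∧ ClassGroup.mk0 I = C} : ℝ) := by
    have := finite_ideal_le K s
    have : Fintype {I : (Ideal (𝓞 K))⁰ // Ideal.absNorm (I : Ideal (𝓞 K)) ≤ s} := Fintype.ofFinite _
    let e := fun C : ClassGroup (𝓞 K) ↦ Equiv.subtypeSubtypeEquivSubtypeInter
      (fun I : (Ideal (𝓞 K))⁰ ↦ Ideal.absNorm I.1 ≤ s) (fun I ↦ ClassGroup.mk0 I = C)
    unfold idealCount
    simp_rw [← Nat.card_congr (e _), Nat.card_eq_fintype_card, Fintype.subtype_card]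
    rw [Fintype.card, Finset.card_eq_sum_card_fiberwise (f := fun I ↦ ClassGroup.mk0 I.1)
      (t := Finset.univ) (fun _ _ ↦ Finset.mem_univ _), Nat.cast_sum]
  rw [hsum, Finset.sum_mul, Finset.sum_mul, ← Finset.sum_sub_distrib]
  refine (Finset.abs_sum_le_sum_abs _ _).trans (Finset.sum_le_sum fun C _ => h C s ?_ hs0)
  refine le_trans ?_ hs
  exact (le_abs_self _).trans (Finset.single_le_sum (f := fun C => |s₀ C|) (fun C _ => abs_nonneg _) (Finset.mem_univ C))

theorem idealCount_bound : ∃ C δ : ℝ, 0 < C ∧ 0 < δ ∧ δ ≤ 1 / 2 ∧ ∀ s : ℝ, 0 < s →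
    |idealCount K s - kappaK K * s| ≤ C * s ^ (1 - δ) := by
  obtain ⟨c, B, s₀, h⟩ := idealCount_eventually K
  have hn1 : (1 : ℝ) ≤ Module.finrank ℚ K := by exact_mod_cast (Module.finrank_pos : 0 < Module.finrank ℚ K)
  set δ := 1 / (2 * (Module.finrank ℚ K : ℝ)) with hδ
  have hδ0 : 0 < δ := by positivity
  have hδ1 : δ ≤ 1 / 2 := by
    rw [hδ, div_le_div_iff₀ (by positivity) (by positivity)]; linarith
  have hck : c = kappaK K := by
    have h1 := NumberField.Ideal.tendsto_norm_le_div_atTop₀ K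
    have h2 : Tendsto (fun s : ℝ => idealCount K s / s) atTop (𝓝 c) := by
      have h3 : Tendsto (fun s : ℝ => B * s ^ (-δ)) atTop (𝓝 0) := by
        have := (tendsto_rpow_neg_atTop hδ0).const_mul B
        simpa using this
      rw [tendsto_iff_norm_sub_tendsto_zero]
      refine squeeze_zero' (Eventually.of_forall fun _ => norm_nonneg _) ?_ h3
      filter_upwards [eventually_ge_atTop s₀, eventually_gt_atTop 0] with s hs hs0
      have h4 := h s hs hs0
      rw [Real.norm_eq_abs]
      have e : idealCount K s / s - c = (idealCount K s - c * s) / s := by field_simp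
      rw [e, abs_div, abs_of_pos hs0, div_le_iff₀ hs0, mul_assoc, ← Real.rpow_add_one hs0.ne']
      rwa [show -δ + 1 = 1 - δ by ring]
    have h5 := tendsto_nhds_unique h2 h1
    rw [h5]
    unfold kappaK
    ring
  rw [hck] at h
  have hk := kappaK_pos K
  set s₁ := max s₀ 1 with hs1
  refine ⟨|B| + kappaK K * s₁ + idealCount K s₁ + 1, δ, ?_, hδ0, hδ1, ?_⟩
  · have : 0 ≤ idealCount K s₁ := Nat.cast_nonneg _
    have : 0 < s₁ := lt_of_lt_of_le one_pos (le_max_right _ _)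
    positivity
  have hI : 0 ≤ idealCount K s₁ := Nat.cast_nonneg _
  have hs11 : 1 ≤ s₁ := le_max_right _ _
  intro s hs
  rcases lt_or_ge s 1 with h1 | h1
  · rw [idealCount_of_lt_one K h1, zero_sub, abs_neg, abs_of_pos (by positivity)]
    have h2 : s ≤ s ^ (1 - δ) := by
      conv_lhs => rw [← Real.rpow_one s]
      exact Real.rpow_le_rpow_of_exponent_ge hs h1.le (by linarith)
    have : 0 ≤ |B| := abs_nonneg _
    apply mul_le_mul _ h2 hs.le (by positivity)
    nlinarith
  · have hp : 1 ≤ s ^ (1 - δ) := Real.one_le_rpow h1 (by linarith)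
    rcases le_total s s₁ with h2 | h2
    · have h3 : idealCount K s ≤ idealCount K s₁ := idealCount_mono K h2
      have h4 : 0 ≤ idealCount K s := Nat.cast_nonneg _
      have h5 : 0 ≤ |B| := abs_nonneg _
      have h6 : |idealCount K s - kappaK K * s| ≤ |B| + kappaK K * s₁ + idealCount K s₁ + 1 := by
        have : kappaK K * s ≤ kappaK K * s₁ := by gcongr
        have : 0 < kappaK K * s := by positivity
        rw [abs_le]; constructor <;> linarith
      refine h6.trans (le_mul_of_one_le_right (by positivity) hp)
    · refine (h s ((le_max_left _ _).trans h2) hs).trans ?_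
      gcongr
      have := le_abs_self B
      have : 0 < kappaK K * s₁ := by positivity
      linarith

end count

/-- abstract system of primes with logarithmic norms -/
structure BSys (P : Type*) where
  lam : P → ℝ
  lam_gt : ∀ p, 1 / 2 < lam p
  fin : ∀ s : ℝ, {f : P →₀ ℕ | (f.sum fun p k => (k : ℝ) * lam p) ≤ s}.Finite
  kap : ℝ
  kap_pos : 0 < kap
  C : ℝ
  C_pos : 0 < C
  del : ℝ
  del_pos : 0 < del
  del_le : del ≤ 1 / 2
  B : ℝ
  hJ : ∀ s : ℝ, |({f : P →₀ ℕ | (f.sum fun p k => (k : ℝ) * lam p) ≤ s}.ncard : ℝ) - kap * Real.exp s| ≤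
    C * Real.exp ((1 - del) * s)
  hth : ∀ (F : Finset P) (s : ℝ), (∀ p ∈ F, lam p ≤ s) → ∑ p ∈ F, lam p ≤ B * Real.exp s

theorem shell_sum {ι : Type*} (F : Finset ι) (w r : ι → ℝ) (hw : ∀ i ∈ F, 0 ≤ w i)
    (hr : ∀ i ∈ F, 0 ≤ r i) {b δ : ℝ} (hb0 : 0 ≤ b) (hδ : 0 < δ)
    (hb : ∀ k : ℕ, ∀ G ⊆ F, (∀ i ∈ G, (k : ℝ) ≤ r i ∧ r i < k + 1) → ∑ i ∈ G, w i ≤ b) :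
    ∑ i ∈ F, w i * Real.exp (-δ * r i) ≤ b / (1 - Real.exp (-δ)) := by
  classical
  set K := F.image (fun i => ⌊r i⌋₊) with hK
  have hmap : ∀ i ∈ F, ⌊r i⌋₊ ∈ K := fun i hi => Finset.mem_image_of_mem _ hi
  rw [← Finset.sum_fiberwise_of_maps_to hmap]
  have hx1 : Real.exp (-δ) < 1 := by rw [Real.exp_lt_one_iff]; linarith
  have hx0 := Real.exp_pos (-δ)
  have h1 : ∀ k ∈ K, ∑ i ∈ F with ⌊r i⌋₊ = k, w i * Real.exp (-δ * r i) ≤ b * Real.exp (-δ) ^ k := by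
    intro k _
    have hk : ∀ i ∈ F.filter (fun i => ⌊r i⌋₊ = k), (k : ℝ) ≤ r i ∧ r i < k + 1 := by
      intro i hi
      rw [Finset.mem_filter] at hi
      rw [← hi.2]
      exact ⟨Nat.floor_le (hr i hi.1), Nat.lt_floor_add_one _⟩
    calc ∑ i ∈ F with ⌊r i⌋₊ = k, w i * Real.exp (-δ * r i)
        ≤ ∑ i ∈ F with ⌊r i⌋₊ = k, w i * Real.exp (-δ) ^ k := by
          refine Finset.sum_le_sum fun i hi => ?_
          have h2 := (hk i hi).1
          rw [Finset.mem_filter] at hi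
          refine mul_le_mul_of_nonneg_left ?_ (hw i hi.1)
          rw [← Real.exp_nat_mul]
          apply Real.exp_le_exp.mpr
          nlinarith
      _ = (∑ i ∈ F with ⌊r i⌋₊ = k, w i) * Real.exp (-δ) ^ k := by rw [Finset.sum_mul]
      _ ≤ _ := by
          gcongr
          exact hb k _ (Finset.filter_subset _ _) hk
  refine (Finset.sum_le_sum h1).trans ?_
  rw [← Finset.mul_sum, div_eq_mul_inv]
  gcongr
  rw [← tsum_geometric_of_lt_one hx0.le hx1]
  exact (summable_geometric_of_lt_one hx0.le hx1).sum_le_tsum _ (fun _ _ => by positivity)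

namespace BSys
variable {P : Type*} (S : BSys P)

def L (f : P →₀ ℕ) : ℝ := f.sum fun p k => (k : ℝ) * S.lam p

def J (s : ℝ) : ℝ := ({f : P →₀ ℕ | S.L f ≤ s}.ncard : ℝ)

theorem lam_pos (p : P) : 0 < S.lam p := by linarith [S.lam_gt p]

theorem L_add (f g : P →₀ ℕ) : S.L (f + g) = S.L f + S.L g := by
  classical
  unfold L
  rw [Finsupp.sum_add_index] <;> intros <;> (simp; try ring)

theorem L_zero : S.L 0 = 0 := by simp [L]

theorem L_single (p : P) (k : ℕ) : S.L (Finsupp.single p k) = k * S.lam p := by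
  simp [L]

theorem L_nsmul (n : ℕ) (f : P →₀ ℕ) : S.L (n • f) = n * S.L f := by
  induction n with
  | zero => simp [L_zero]
  | succ n ih => rw [succ_nsmul, L_add, ih]; push_cast; ring

theorem L_nonneg (f : P →₀ ℕ) : 0 ≤ S.L f :=
  Finset.sum_nonneg fun p _ => mul_nonneg (Nat.cast_nonneg _) (S.lam_pos p).le

theorem finL (s : ℝ) : {f : P →₀ ℕ | S.L f ≤ s}.Finite := S.fin s

theorem finP (s : ℝ) : {p : P | S.lam p ≤ s}.Finite := by
  refine Set.Finite.of_finite_image (f := fun p => Finsupp.single p 1) ((S.finL s).subset ?_) ?_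
  · rintro _ ⟨p, hp, rfl⟩
    change S.L _ ≤ s
    rw [L_single]; simpa using hp
  · exact (Finsupp.single_left_injective one_ne_zero).injOn

/-- the primes with `lam p ≤ s` -/
def PS (s : ℝ) : Finset P := (S.finP s).toFinset

theorem mem_PS {s : ℝ} {p : P} : p ∈ S.PS s ↔ S.lam p ≤ s := by simp [PS]

theorem PS_mono {s t : ℝ} (h : s ≤ t) : S.PS s ⊆ S.PS t := by
  intro p; simp only [mem_PS]; intro h2; linarith

theorem J_bound (s : ℝ) : |S.J s - S.kap * Real.exp s| ≤ S.C * Real.exp ((1 - S.del) * s) := S.hJ s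

theorem J_nonneg (s : ℝ) : 0 ≤ S.J s := Nat.cast_nonneg _

theorem J_neg {s : ℝ} (h : s < 0) : S.J s = 0 := by
  unfold J
  have : {f : P →₀ ℕ | S.L f ≤ s} = ∅ := by
    ext f; simp only [Set.mem_ofPred_eq, Set.mem_empty_iff_false, iff_false, not_le]
    linarith [S.L_nonneg f]
  simp [this]

theorem J_le (s : ℝ) : S.J s ≤ (S.kap + S.C) * Real.exp s := by
  rcases lt_or_ge s 0 with h | h
  · rw [S.J_neg h]; have := S.kap_pos; have := S.C_pos; positivity
  · have h1 := (abs_le.mp (S.J_bound s)).2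
    have h2 : Real.exp ((1 - S.del) * s) ≤ Real.exp s := by
      apply Real.exp_le_exp.mpr; nlinarith [S.del_pos]
    nlinarith [S.C_pos]

theorem card_le_J (s : ℝ) (F : Finset P) (hF : ∀ p ∈ F, S.lam p ≤ s) : (F.card : ℝ) ≤ S.J s := by
  unfold J
  have h1 : F.card = ((fun p => Finsupp.single p 1) '' (F : Set P)).ncard := by
    rw [Set.ncard_image_of_injective _ (Finsupp.single_left_injective one_ne_zero), Set.ncard_coe_finset]
  rw [h1]
  norm_cast
  refine Set.ncard_le_ncard ?_ (S.finL s)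
  rintro _ ⟨p, hp, rfl⟩
  change S.L _ ≤ s
  rw [L_single]; simpa using hF p hp

theorem shell_inv (F : Finset P) (t : ℝ) (h : ∀ p ∈ F, t ≤ S.lam p ∧ S.lam p ≤ t + 1) :
    ∑ p ∈ F, Real.exp (-S.lam p) ≤ (S.kap + S.C) * Real.exp 1 := by
  calc ∑ p ∈ F, Real.exp (-S.lam p) ≤ ∑ p ∈ F, Real.exp (-t) := by
        refine Finset.sum_le_sum fun p hp => Real.exp_le_exp.mpr ?_
        linarith [(h p hp).1]
    _ = F.card * Real.exp (-t) := by rw [Finset.sum_const, nsmul_eq_mul]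
    _ ≤ ((S.kap + S.C) * Real.exp (t + 1)) * Real.exp (-t) := by
        gcongr
        exact (S.card_le_J (t + 1) F fun p hp => (h p hp).2).trans (S.J_le _)
    _ = _ := by rw [mul_assoc, ← Real.exp_add]; congr 2; ring

theorem KC_pos : 0 < S.kap + S.C := add_pos S.kap_pos S.C_pos

theorem summable_exp {τ : ℝ} (hτ : 0 < τ) : Summable fun p => Real.exp (-(1 + τ) * S.lam p) := by
  refine summable_of_sum_le (c := (S.kap + S.C) * Real.exp 1 / (1 - Real.exp (-τ)))
    (fun p => (Real.exp_pos _).le) fun F => ?_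
  have := shell_sum F (fun p => Real.exp (-S.lam p)) S.lam (fun _ _ => (Real.exp_pos _).le)
    (fun p _ => (S.lam_pos p).le) (b := (S.kap + S.C) * Real.exp 1) (by have := S.KC_pos; positivity) hτ
    (fun k G _ hG => S.shell_inv G k fun p hp => ⟨(hG p hp).1, (hG p hp).2.le⟩)
  refine le_trans (le_of_eq ?_) this
  refine Finset.sum_congr rfl fun p _ => ?_
  rw [← Real.exp_add]; congr 1; ring

end BSys

namespace BSys
variable {P : Type*} (S : BSys P)

/-- the finite set of `f` with `L f ≤ s` -/
def FL (s : ℝ) : Finset (P →₀ ℕ) := (S.finL s).toFinset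

theorem mem_FL {s : ℝ} {f : P →₀ ℕ} : f ∈ S.FL s ↔ S.L f ≤ s := by simp [FL]

theorem J_eq_card (s : ℝ) : S.J s = (S.FL s).card := by
  unfold J FL
  rw [Set.ncard_eq_toFinset_card _ (S.finL s)]

theorem B_nonneg : 0 ≤ S.B := by
  have := S.hth ∅ 0 (by simp)
  simpa using this

theorem le_two_exp_half (t : ℝ) : t ≤ 2 * Real.exp (t / 2) := by
  have := Real.add_one_le_exp (t / 2)
  linarith

theorem T1 : ∃ C : ℝ, ∀ s : ℝ, 0 ≤ s → |∑ f ∈ S.FL s, S.L f - S.kap * s * Real.exp s| ≤ C * Real.exp s := by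
  refine ⟨S.C / S.del + 2 * ((S.kap + S.C) * Real.exp 1 / (1 - Real.exp (-(1 / 2)))), ?_⟩
  intro s hs
  have hKC := S.KC_pos
  set D := ∑ f ∈ S.FL s, (s - S.L f) with hD
  have hD0 : 0 ≤ D := Finset.sum_nonneg fun f hf => by have := S.mem_FL.mp hf; linarith
  have hD1 : D ≤ 2 * ((S.kap + S.C) * Real.exp (s + 1) / (1 - Real.exp (-(1 / 2)))) := by
    have h1 := shell_sum (S.FL s) (fun f => Real.exp (s - S.L f)) (fun f => s - S.L f)
      (fun _ _ => (Real.exp_pos _).le) (fun f hf => by have := S.mem_FL.mp hf; linarith)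
      (b := (S.kap + S.C) * Real.exp (s + 1)) (δ := 1 / 2) (by positivity) (by norm_num) ?_
    · calc D ≤ ∑ f ∈ S.FL s, 2 * (Real.exp (s - S.L f) * Real.exp (-(1 / 2) * (s - S.L f))) := by
            refine Finset.sum_le_sum fun f _ => ?_
            refine (le_two_exp_half _).trans (le_of_eq ?_)
            rw [← Real.exp_add]; congr 2; ring
        _ ≤ _ := by rw [← Finset.mul_sum]; gcongr
    · intro k G hG hGk
      calc ∑ f ∈ G, Real.exp (s - S.L f) ≤ ∑ f ∈ G, Real.exp (k + 1) := by
            refine Finset.sum_le_sum fun f hf => Real.exp_le_exp.mpr (hGk f hf).2.le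
        _ = G.card * Real.exp (k + 1) := by rw [Finset.sum_const, nsmul_eq_mul]
        _ ≤ ((S.kap + S.C) * Real.exp (s - k)) * Real.exp (k + 1) := by
            gcongr
            refine le_trans ?_ (S.J_le (s - k))
            rw [J_eq_card]
            norm_cast
            refine Finset.card_le_card fun f hf => ?_
            rw [mem_FL]
            linarith [(hGk f hf).1]
        _ = _ := by rw [mul_assoc, ← Real.exp_add]; congr 2; ring
  have hT : ∑ f ∈ S.FL s, S.L f = S.J s * s - D := by
    rw [hD, Finset.sum_sub_distrib, Finset.sum_const, nsmul_eq_mul, J_eq_card]; ring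
  have hJ := abs_le.mp (S.J_bound s)
  have hse : s * Real.exp ((1 - S.del) * s) ≤ Real.exp s / S.del := by
    rw [le_div_iff₀ S.del_pos]
    have h2 : s * S.del ≤ Real.exp (S.del * s) := by have := Real.add_one_le_exp (S.del * s); linarith
    calc s * Real.exp ((1 - S.del) * s) * S.del = (s * S.del) * Real.exp ((1 - S.del) * s) := by ring
      _ ≤ Real.exp (S.del * s) * Real.exp ((1 - S.del) * s) := by gcongr
      _ = _ := by rw [← Real.exp_add]; congr 1; ring
  have hCs : S.C * (s * Real.exp ((1 - S.del) * s)) ≤ S.C * (Real.exp s / S.del) := by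
    have := S.C_pos; gcongr
  have e1 : S.C * (Real.exp s / S.del) = S.C / S.del * Real.exp s := by ring
  have e2 : 2 * ((S.kap + S.C) * Real.exp (s + 1) / (1 - Real.exp (-(1 / 2)))) =
      2 * ((S.kap + S.C) * Real.exp 1 / (1 - Real.exp (-(1 / 2)))) * Real.exp s := by
    rw [Real.exp_add]; ring
  rw [hT, abs_le]
  rw [e2] at hD1
  have h3 : S.J s * s - S.kap * s * Real.exp s ≤ S.C / S.del * Real.exp s := by
    have := mul_le_mul_of_nonneg_right hJ.2 hs
    nlinarith
  have h4 : -(S.C / S.del * Real.exp s) ≤ S.J s * s - S.kap * s * Real.exp s := by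
    have := mul_le_mul_of_nonneg_right hJ.1 hs
    nlinarith
  constructor <;> nlinarith

theorem support_sub_PS {s : ℝ} {f : P →₀ ℕ} (hf : f ∈ S.FL s) : f.support ⊆ S.PS s := by
  intro p hp
  rw [mem_PS]
  rw [mem_FL] at hf
  have h1 : (1 : ℝ) ≤ f p := by
    have := Finsupp.mem_support_iff.mp hp
    exact_mod_cast Nat.one_le_iff_ne_zero.mpr this
  have h2 : (f p : ℝ) * S.lam p ≤ S.L f :=
    Finset.single_le_sum (f := fun p => (f p : ℝ) * S.lam p)
      (fun p _ => mul_nonneg (Nat.cast_nonneg _) (S.lam_pos p).le) hp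
  nlinarith [S.lam_pos p]

theorem coord_le {f : P →₀ ℕ} (p : P) : (f p : ℝ) * S.lam p ≤ S.L f := by
  by_cases hp : p ∈ f.support
  · exact Finset.single_le_sum (f := fun p => (f p : ℝ) * S.lam p)
      (fun p _ => mul_nonneg (Nat.cast_nonneg _) (S.lam_pos p).le) hp
  · rw [Finsupp.notMem_support_iff.mp hp]; simpa using S.L_nonneg f

theorem card_ge (s : ℝ) (p : P) (k : ℕ) :
    (((S.FL s).filter (fun f => k ≤ f p)).card : ℝ) = S.J (s - k * S.lam p) := by
  classical
  rw [J_eq_card]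
  norm_cast
  symm
  refine Finset.card_bij (fun f _ => f + Finsupp.single p k) ?_ ?_ ?_
  · intro f hf
    rw [mem_FL] at hf
    rw [Finset.mem_filter, mem_FL, L_add, L_single]
    refine ⟨by linarith, by simp⟩
  · intro f _ g _ h
    exact add_right_cancel h
  · intro f hf
    rw [Finset.mem_filter, mem_FL] at hf
    have h1 : f - Finsupp.single p k + Finsupp.single p k = f :=
      tsub_add_cancel_of_le (by rw [Finsupp.single_le_iff]; exact hf.2)
    refine ⟨f - Finsupp.single p k, ?_, h1⟩
    rw [mem_FL]
    have h2 := S.L_add (f - Finsupp.single p k) (Finsupp.single p k)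
    rw [h1, L_single] at h2
    linarith [hf.1]

theorem Sp_eq (s : ℝ) (p : P) :
    ∃ n : ℕ, ∑ f ∈ S.FL s, (f p : ℝ) = ∑ k ∈ Finset.range (n + 1), S.J (s - (k + 1 : ℕ) * S.lam p) := by
  classical
  obtain ⟨n, hn⟩ := exists_nat_ge (2 * s)
  refine ⟨n, ?_⟩
  simp_rw [← card_ge]
  simp_rw [Finset.card_filter]
  push_cast
  rw [Finset.sum_comm]
  refine Finset.sum_congr rfl fun f hf => ?_
  have h1 : f p ≤ n := by
    have h2 := S.coord_le (f := f) p
    rw [mem_FL] at hf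
    have h3 := S.lam_gt p
    have : (f p : ℝ) ≤ n := by nlinarith [(Nat.cast_nonneg (f p) : (0 : ℝ) ≤ f p)]
    exact_mod_cast this
  rw [← Finset.sum_filter, Finset.sum_const, nsmul_eq_mul, mul_one]
  congr 1
  have : (Finset.range (n + 1)).filter (fun k => k + 1 ≤ f p) = Finset.range (f p) := by
    ext k; simp only [Finset.mem_filter, Finset.mem_range]; omega
  rw [this, Finset.card_range]

theorem Sp_bounds (s : ℝ) (p : P) :
    S.J (s - S.lam p) ≤ ∑ f ∈ S.FL s, (f p : ℝ) ∧ ∑ f ∈ S.FL s, (f p : ℝ) ≤ S.J (s - S.lam p) +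
      (S.kap + S.C) / (1 - Real.exp (-(1 / 2))) * Real.exp (s - 2 * S.lam p) := by
  obtain ⟨n, hn⟩ := S.Sp_eq s p
  rw [hn, Finset.sum_range_succ']
  simp only [zero_add, Nat.cast_one, one_mul]
  constructor
  · have : 0 ≤ ∑ k ∈ Finset.range n, S.J (s - (k + 1 + 1 : ℕ) * S.lam p) :=
      Finset.sum_nonneg fun _ _ => S.J_nonneg _
    linarith
  · rw [add_comm]
    gcongr
    have hKC := S.KC_pos
    have hx1 : Real.exp (-(1 / 2)) < 1 := by rw [Real.exp_lt_one_iff]; norm_num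
    have hx0 := Real.exp_pos (-(1 / 2 : ℝ))
    calc ∑ k ∈ Finset.range n, S.J (s - (k + 1 + 1 : ℕ) * S.lam p)
        ≤ ∑ k ∈ Finset.range n, (S.kap + S.C) * Real.exp (s - 2 * S.lam p) * Real.exp (-(1 / 2)) ^ k := by
          refine Finset.sum_le_sum fun k _ => (S.J_le _).trans ?_
          rw [mul_assoc, ← Real.exp_nat_mul, ← Real.exp_add]
          gcongr
          push_cast
          nlinarith [S.lam_gt p, (Nat.cast_nonneg k : (0 : ℝ) ≤ k)]
      _ = (S.kap + S.C) * Real.exp (s - 2 * S.lam p) * ∑ k ∈ Finset.range n, Real.exp (-(1 / 2)) ^ k := by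
          rw [Finset.mul_sum]
      _ ≤ (S.kap + S.C) * Real.exp (s - 2 * S.lam p) * (1 - Real.exp (-(1 / 2)))⁻¹ := by
          gcongr
          rw [← tsum_geometric_of_lt_one hx0.le hx1]
          exact (summable_geometric_of_lt_one hx0.le hx1).sum_le_tsum _ (fun _ _ => by positivity)
      _ = _ := by ring

theorem T2 (s : ℝ) : ∑ f ∈ S.FL s, S.L f = ∑ p ∈ S.PS s, S.lam p * ∑ f ∈ S.FL s, (f p : ℝ) := by
  simp_rw [Finset.mul_sum]
  rw [Finset.sum_comm]
  refine Finset.sum_congr rfl fun f hf => ?_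
  unfold L
  rw [Finsupp.sum_of_support_subset f (S.support_sub_PS hf) _ (by simp)]
  exact Finset.sum_congr rfl fun p _ => mul_comm _ _

/-- `∑ lam p / N p` -/
def V (s : ℝ) : ℝ := ∑ p ∈ S.PS s, S.lam p * Real.exp (-S.lam p)

theorem shellV (s : ℝ) : ∑ p ∈ S.PS s, S.lam p * Real.exp ((1 - S.del) * (s - S.lam p)) ≤
    S.B * Real.exp 1 / (1 - Real.exp (-S.del)) * Real.exp s := by
  have h1 := shell_sum (S.PS s) (fun p => S.lam p * Real.exp (s - S.lam p)) (fun p => s - S.lam p)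
      (fun p _ => mul_nonneg (S.lam_pos p).le (Real.exp_pos _).le) (fun p hp => by have := S.mem_PS.mp hp; linarith)
      (b := S.B * Real.exp (s + 1)) (δ := S.del) (by have := S.B_nonneg; positivity) S.del_pos ?_
  · refine le_trans (le_of_eq ?_) (h1.trans (le_of_eq ?_))
    · refine Finset.sum_congr rfl fun p _ => ?_
      rw [mul_assoc, ← Real.exp_add]; congr 2; ring
    · rw [Real.exp_add]; ring
  · intro k G _ hG
    calc ∑ p ∈ G, S.lam p * Real.exp (s - S.lam p) ≤ ∑ p ∈ G, S.lam p * Real.exp (k + 1) := by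
          refine Finset.sum_le_sum fun p hp => ?_
          have := S.lam_pos p
          gcongr
          exact (hG p hp).2.le
      _ = (∑ p ∈ G, S.lam p) * Real.exp (k + 1) := by rw [Finset.sum_mul]
      _ ≤ (S.B * Real.exp (s - k)) * Real.exp (k + 1) := by
          gcongr
          exact S.hth G _ fun p hp => by linarith [(hG p hp).1]
      _ = _ := by rw [mul_assoc, ← Real.exp_add]; congr 2; ring

theorem mertensV : ∃ C : ℝ, 0 < C ∧ ∀ s : ℝ, 0 ≤ s → |S.V s - s| ≤ C := by
  obtain ⟨C₁, hC₁⟩ := S.T1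
  have hsum := S.summable_exp (τ := 1 / 2) (by norm_num)
  set Z := ∑' p, Real.exp (-(1 + 1 / 2) * S.lam p) with hZ
  have hKC := S.KC_pos
  have hx1 : Real.exp (-(1 / 2)) < 1 := by rw [Real.exp_lt_one_iff]; norm_num
  set c3 := (S.kap + S.C) / (1 - Real.exp (-(1 / 2))) with hc3
  have hc30 : 0 < c3 := div_pos hKC (by linarith)
  set c4 := S.B * Real.exp 1 / (1 - Real.exp (-S.del)) with hc4
  set D := |C₁| + S.C * |c4| + c3 * 2 * |Z| + 1 with hD
  have hC := S.C_pos
  have hD0 : 0 < D := by positivity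
  refine ⟨D / S.kap, div_pos hD0 S.kap_pos, ?_⟩
  intro s hs
  have hV : S.kap * Real.exp s * S.V s = ∑ p ∈ S.PS s, S.lam p * (S.kap * Real.exp (s - S.lam p)) := by
    unfold V
    rw [Finset.mul_sum]
    refine Finset.sum_congr rfl fun p _ => ?_
    rw [sub_eq_add_neg, Real.exp_add]; ring
  have h1 : |∑ f ∈ S.FL s, S.L f - S.kap * Real.exp s * S.V s| ≤
      ∑ p ∈ S.PS s, (S.C * (S.lam p * Real.exp ((1 - S.del) * (s - S.lam p))) +
        c3 * 2 * Real.exp s * Real.exp (-(1 + 1 / 2) * S.lam p)) := by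
    rw [hV, T2, ← Finset.sum_sub_distrib]
    refine (Finset.abs_sum_le_sum_abs _ _).trans (Finset.sum_le_sum fun p _ => ?_)
    rw [← mul_sub, abs_mul, abs_of_pos (S.lam_pos p)]
    have h2 := S.Sp_bounds s p
    have h3 := abs_le.mp (S.J_bound (s - S.lam p))
    have h4 : |∑ f ∈ S.FL s, (f p : ℝ) - S.kap * Real.exp (s - S.lam p)| ≤
        S.C * Real.exp ((1 - S.del) * (s - S.lam p)) + c3 * Real.exp (s - 2 * S.lam p) := by
      have : 0 ≤ c3 * Real.exp (s - 2 * S.lam p) := by positivity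
      rw [abs_le]; constructor <;> linarith [h2.1, h2.2, h3.1, h3.2]
    have h5 : S.lam p * (c3 * Real.exp (s - 2 * S.lam p)) ≤
        c3 * 2 * Real.exp s * Real.exp (-(1 + 1 / 2) * S.lam p) := by
      calc S.lam p * (c3 * Real.exp (s - 2 * S.lam p)) ≤
          (2 * Real.exp (S.lam p / 2)) * (c3 * Real.exp (s - 2 * S.lam p)) := by
            gcongr; exact le_two_exp_half _
        _ = c3 * 2 * (Real.exp (S.lam p / 2) * Real.exp (s - 2 * S.lam p)) := by ring
        _ = c3 * 2 * (Real.exp s * Real.exp (-(1 + 1 / 2) * S.lam p)) := by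
            rw [← Real.exp_add, ← Real.exp_add]; congr 2; ring
        _ = _ := by ring
    have h6 := mul_le_mul_of_nonneg_left h4 (S.lam_pos p).le
    linarith
  have h2 : ∑ p ∈ S.PS s, (S.C * (S.lam p * Real.exp ((1 - S.del) * (s - S.lam p))) +
        c3 * 2 * Real.exp s * Real.exp (-(1 + 1 / 2) * S.lam p)) ≤ (S.C * |c4| + c3 * 2 * |Z|) * Real.exp s := by
    rw [Finset.sum_add_distrib, ← Finset.mul_sum, ← Finset.mul_sum]
    have h3 := S.shellV s
    have h4 : ∑ p ∈ S.PS s, Real.exp (-(1 + 1 / 2) * S.lam p) ≤ |Z| :=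
      (hsum.sum_le_tsum _ (fun _ _ => (Real.exp_pos _).le)).trans (le_abs_self _)
    have h5 : ∑ p ∈ S.PS s, S.lam p * Real.exp ((1 - S.del) * (s - S.lam p)) ≤ |c4| * Real.exp s :=
      h3.trans (by gcongr; exact le_abs_self _)
    calc _ ≤ S.C * (|c4| * Real.exp s) + c3 * 2 * Real.exp s * |Z| := by gcongr
      _ = _ := by ring
  have h3 := hC₁ s hs
  have h4 : |S.kap * Real.exp s * (S.V s - s)| ≤ D * Real.exp s := by
    have h5 := abs_le.mp (h1.trans h2)
    have h6 := abs_le.mp h3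
    have h7 : C₁ * Real.exp s ≤ |C₁| * Real.exp s := by gcongr; exact le_abs_self _
    have h8 := Real.exp_pos s
    rw [abs_le]
    constructor <;> nlinarith
  rw [abs_mul, abs_of_pos (by have := S.kap_pos; positivity)] at h4
  rw [le_div_iff₀ S.kap_pos]
  have h8 := Real.exp_pos s
  have : (|S.V s - s| * S.kap) * Real.exp s ≤ D * Real.exp s := by nlinarith
  exact le_of_mul_le_mul_right this h8

end BSys

theorem partial_sum {ι : Type*} (F : Finset ι) (w r : ι → ℝ) {a b : ℝ} (hab : a ≤ b)
    (hr : ∀ i ∈ F, a ≤ r i ∧ r i ≤ b) (M M' g g' Φ Ψ Ψ' : ℝ → ℝ)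
    (hM : ∀ t ∈ Set.Icc a b, HasDerivAt M (M' t) t)
    (hg : ∀ t ∈ Set.Icc a b, HasDerivAt g (g' t) t)
    (hΦ : ∀ t ∈ Set.Icc a b, HasDerivAt Φ (M' t * g t) t)
    (hΨ : ∀ t ∈ Set.Icc a b, HasDerivAt Ψ (Ψ' t) t)
    (hbd : ∀ t ∈ Set.Ico a b, |(∑ i ∈ F with r i ≤ t, w i - M t) * g' t| ≤ Ψ' t) :
    |∑ i ∈ F, w i * g (r i) - (∑ i ∈ F, w i) * g b + M b * g b - Φ b - (M a * g a - Φ a)|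
      ≤ Ψ b - Ψ a := by
  set H : ℝ → ℝ := fun t => ∑ i ∈ F, w i * (g (min (r i) t) - g t) + M t * g t - Φ t with hH
  have hHa : H a = M a * g a - Φ a := by
    have : ∑ i ∈ F, w i * (g (min (r i) a) - g a) = 0 :=
      Finset.sum_eq_zero fun i hi => by rw [min_eq_right (hr i hi).1]; ring
    simp only [hH, this]; ring
  have hHb : H b = ∑ i ∈ F, w i * g (r i) - (∑ i ∈ F, w i) * g b + M b * g b - Φ b := by
    have : ∑ i ∈ F, w i * (g (min (r i) b) - g b) = ∑ i ∈ F, w i * g (r i) - (∑ i ∈ F, w i) * g b := by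
      rw [Finset.sum_mul, ← Finset.sum_sub_distrib]
      refine Finset.sum_congr rfl fun i hi => ?_
      rw [min_eq_left (hr i hi).2]; ring
    simp only [hH, this]
  have hgc : ContinuousOn g (Set.Icc a b) := fun t ht => (hg t ht).continuousAt.continuousWithinAt
  have hcont : ContinuousOn (fun t => H t - H a) (Set.Icc a b) := by
    refine ContinuousOn.sub ?_ continuousOn_const
    refine ContinuousOn.sub (ContinuousOn.add ?_ ?_) ?_
    · refine continuousOn_finsetSum _ fun i hi => continuousOn_const.mul (ContinuousOn.sub ?_ hgc)
      refine hgc.comp (by fun_prop) ?_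
      intro t ht
      exact ⟨le_min (hr i hi).1 ht.1, (min_le_right _ _).trans ht.2⟩
    · exact ContinuousOn.mul (fun t ht => (hM t ht).continuousAt.continuousWithinAt) hgc
    · exact fun t ht => (hΦ t ht).continuousAt.continuousWithinAt
  have hder : ∀ t ∈ Set.Ico a b, HasDerivWithinAt (fun t => H t - H a)
      (-((∑ i ∈ F with r i ≤ t, w i - M t) * g' t)) (Set.Ici t) t := by
    intro t ht
    have ht' : t ∈ Set.Icc a b := ⟨ht.1, ht.2.le⟩
    have h1 : HasDerivWithinAt (fun t => ∑ i ∈ F, w i * (g (min (r i) t) - g t))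
        (∑ i ∈ F, (if r i ≤ t then - w i * g' t else 0)) (Set.Ici t) t := by
      refine HasDerivWithinAt.fun_sum fun i hi => ?_
      split_ifs with hi2
      · have : HasDerivWithinAt (fun u => w i * (g (r i) - g u)) (w i * (0 - g' t)) (Set.Ici t) t :=
          (((hasDerivAt_const t (g (r i))).sub (hg t ht')).const_mul (w i)).hasDerivWithinAt
        rw [show -w i * g' t = w i * (0 - g' t) by ring]
        refine this.congr (fun u hu => ?_) ?_
        · rw [min_eq_left (hi2.trans hu)]
        · rw [min_eq_left hi2]
      · push Not at hi2
        refine (hasDerivWithinAt_const t (Set.Ici t) (0:ℝ)).congr_of_eventuallyEq ?_ ?_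
        · have : ∀ᶠ u in 𝓝[Set.Ici t] t, u < r i := nhdsWithin_le_nhds (Iio_mem_nhds hi2)
          filter_upwards [this] with u hu
          rw [min_eq_right hu.le]; ring
        · rw [min_eq_right hi2.le]; ring
    have h2 := ((h1.add ((hM t ht').mul (hg t ht')).hasDerivWithinAt).sub
      (hΦ t ht').hasDerivWithinAt).sub_const (H a)
    refine h2.congr_deriv ?_
    rw [← Finset.sum_filter, ← Finset.sum_mul, Finset.sum_neg_distrib]
    ring
  have key := image_norm_le_of_norm_deriv_right_le_deriv_boundary' hcont hder
    (B := fun t => Ψ t - Ψ a) (B' := Ψ') (by simp)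
    (fun t ht => ((hΨ t ht).continuousAt.sub continuousAt_const).continuousWithinAt)
    (fun t ht => ((hΨ t ⟨ht.1, ht.2.le⟩).sub_const _).hasDerivWithinAt)
    (fun t ht => by rw [norm_neg]; exact hbd t ht) (x := b) ⟨hab, le_rfl⟩
  rw [hHb, hHa] at key
  exact key

/-- dilogarithm on `[0,1]` -/
def Li2 (x : ℝ) : ℝ := ∑' n : ℕ, x ^ (n + 1) / ((n : ℝ) + 1) ^ 2

theorem summable_inv_sq : Summable fun n : ℕ => 1 / ((n : ℝ) + 1) ^ 2 := by
  have := (summable_nat_add_iff 1).mpr (Real.summable_one_div_nat_pow.mpr (one_lt_two))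
  simpa using this

theorem Li2_zero : Li2 0 = 0 := by simp [Li2]

theorem Li2_one : Li2 1 = Real.pi ^ 2 / 6 := by
  have h := (hasSum_nat_add_iff' 1).mpr hasSum_zeta_two
  simp only [Finset.range_one, Finset.sum_singleton, Nat.cast_zero] at h
  rw [Li2, ← (by simpa using h.tsum_eq : ∑' n : ℕ, _ = Real.pi ^ 2 / 6)]
  refine tsum_congr fun n => ?_
  simp

theorem Li2_contOn : ContinuousOn Li2 (Set.Icc 0 1) := by
  refine continuousOn_tsum (fun n => by fun_prop) summable_inv_sq fun n x hx => ?_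
  rw [Real.norm_of_nonneg (div_nonneg (pow_nonneg hx.1 _) (by positivity))]
  gcongr
  exact pow_le_one₀ hx.1 hx.2

theorem Li2_deriv {x : ℝ} (h0 : 0 < x) (h1 : x < 1) : HasDerivAt Li2 (-Real.log (1 - x) / x) x := by
  obtain ⟨y, hxy, hy⟩ := exists_between h1
  have hy0 : 0 < y := h0.trans hxy
  have := hasDerivAt_tsum_of_isPreconnected (u := fun n : ℕ => y ^ n)
    (g := fun n x => x ^ (n + 1) / ((n : ℝ) + 1) ^ 2) (g' := fun n x => x ^ n / ((n : ℝ) + 1))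
    (t := Set.Ioo (-y) y) (y₀ := 0) (summable_geometric_of_lt_one hy0.le hy) isOpen_Ioo
    isPreconnected_Ioo ?_ ?_ ⟨by linarith, hy0⟩ (by simp) (y := x) ⟨by linarith, hxy⟩
  · refine this.congr_deriv ?_
    have h2 := Real.hasSum_pow_div_log_of_abs_lt_one (x := x) (by rw [abs_of_pos h0]; exact h1)
    rw [← (h2.div_const x).tsum_eq]
    refine tsum_congr fun n => ?_
    field_simp
    ring
  · intro n z _
    have := (hasDerivAt_pow (n + 1) z).div_const (((n : ℝ) + 1) ^ 2)
    refine this.congr_deriv ?_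
    have : (n : ℝ) + 1 ≠ 0 := by positivity
    push_cast
    field_simp
  · intro n z hz
    rw [norm_div, norm_pow, Real.norm_of_nonneg (by positivity : (0:ℝ) ≤ (n : ℝ) + 1)]
    calc ‖z‖ ^ n / ((n : ℝ) + 1) ≤ ‖z‖ ^ n := div_le_self (by positivity) (by linarith [Nat.cast_nonneg (α := ℝ) n])
      _ ≤ _ := by
        gcongr
        exact (abs_lt.mpr hz).le

theorem Li2_nonneg {x : ℝ} (h0 : 0 ≤ x) : 0 ≤ Li2 x := tsum_nonneg fun n => by positivity

theorem Li2_le {x : ℝ} (h0 : 0 ≤ x) (h1 : x ≤ 1) : Li2 x ≤ Real.pi ^ 2 / 6 * x := by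
  rw [← Li2_one, Li2, Li2, ← tsum_mul_right]
  have hs := summable_inv_sq
  refine Summable.tsum_le_tsum (fun n => ?_) ?_ ?_
  · rw [one_pow, div_mul_eq_mul_div, one_mul]
    gcongr
    exact pow_le_of_le_one h0 h1 (by omega)
  · refine Summable.of_nonneg_of_le (fun n => by positivity) (fun n => ?_) hs
    gcongr
    exact pow_le_one₀ h0 h1
  · simpa using hs.mul_right x

theorem Li2_half : 2 * Li2 (1 / 2) + Real.log 2 ^ 2 = Real.pi ^ 2 / 6 := by
  set f : ℝ → ℝ := fun x => Li2 x + Li2 (1 - x) + Real.log x * Real.log (1 - x) with hf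
  have hder : ∀ x ∈ Set.Ioo (0:ℝ) 1, HasDerivAt f 0 x := by
    intro x hx
    have h1 := Li2_deriv hx.1 hx.2
    have h2 := (Li2_deriv (x := 1 - x) (by linarith [hx.2]) (by linarith [hx.1])).comp_const_sub 1 x
    have h3 := (Real.hasDerivAt_log hx.1.ne').mul
      ((Real.hasDerivAt_log (by linarith [hx.2] : (1:ℝ) - x ≠ 0)).comp_const_sub 1 x)
    have := (h1.add h2).add h3
    refine this.congr_deriv ?_
    have e1 : (1:ℝ) - x ≠ 0 := by linarith [hx.2]
    have e2 := hx.1.ne'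
    rw [sub_sub_cancel]
    field_simp
    ring
  have hconst : ∀ x ∈ Set.Ioo (0:ℝ) 1, f x = f (1 / 2) := by
    intro x hx
    exact isOpen_Ioo.is_const_of_deriv_eq_zero isPreconnected_Ioo
      (fun y hy => (hder y hy).differentiableAt.differentiableWithinAt)
      (fun y hy => (hder y hy).deriv) hx ⟨by norm_num, by norm_num⟩
  have hlim : Tendsto f (𝓝[>] 0) (𝓝 (Li2 0 + Li2 (1 - 0) + 0)) := by
    refine Tendsto.add (Tendsto.add ?_ ?_) ?_
    · refine (Li2_contOn 0 (by simp)).mono_left (nhdsWithin_le_of_mem ?_) |>.trans le_rfl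
      exact Icc_mem_nhdsGT zero_lt_one
    · have h1 := Li2_contOn (1 - 0) (by simp)
      refine h1.tendsto.comp (tendsto_nhdsWithin_iff.mpr ⟨?_, ?_⟩)
      · exact ((continuous_const.sub continuous_id).tendsto 0).mono_left nhdsWithin_le_nhds
      · filter_upwards [Ioo_mem_nhdsGT (zero_lt_one (α := ℝ))] with x hx
        exact ⟨by simp; linarith [hx.2], by simp; linarith [hx.1]⟩
    · have h1 : Tendsto (fun x : ℝ => Real.log x * x) (𝓝[>] 0) (𝓝 0) :=
        by simpa using tendsto_log_mul_rpow_nhdsGT_zero (r := 1) one_pos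
      have h2 : ∀ᶠ x in 𝓝[>] (0:ℝ), ‖Real.log x * Real.log (1 - x)‖ ≤ 2 * ‖Real.log x * x‖ := by
        filter_upwards [Ioo_mem_nhdsGT (by norm_num : (0:ℝ) < 1/2)] with x hx
        rw [norm_mul, norm_mul]
        have : ‖Real.log (1 - x)‖ ≤ 2 * ‖x‖ := by
          have h3 := Real.one_sub_inv_le_log_of_pos (by linarith [hx.2] : 0 < 1 - x)
          have h4 : Real.log (1 - x) ≤ 0 := Real.log_nonpos (by linarith [hx.2]) (by linarith [hx.1])
          rw [Real.norm_of_nonpos h4, Real.norm_of_nonneg hx.1.le]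
          have h5 : (1 - x)⁻¹ ≤ 1 + 2 * x := by
            rw [inv_le_iff_one_le_mul₀ (by linarith [hx.2])]; nlinarith [hx.1, hx.2]
          linarith
        nlinarith [norm_nonneg (Real.log x)]
      refine squeeze_zero_norm' h2 ?_
      simpa using (h1.norm.const_mul 2)
  have hlim2 : Tendsto f (𝓝[>] 0) (𝓝 (f (1/2))) := by
    refine tendsto_const_nhds.congr' ?_
    filter_upwards [Ioo_mem_nhdsGT (zero_lt_one (α := ℝ))] with x hx
    exact (hconst x hx).symm
  have := tendsto_nhds_unique hlim hlim2
  rw [sub_zero, Li2_zero, Li2_one] at this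
  simp only [hf] at this
  rw [show (1:ℝ) - 1/2 = 1/2 by norm_num, one_div, Real.log_inv] at this
  rw [one_div]
  linarith [this]

namespace BSys
variable {P : Type*} (S : BSys P)

def R1 (ρ : P → ℝ) (s : ℝ) : ℝ := ∑ p ∈ S.PS s, ρ p
def R2 (ρ : P → ℝ) (s : ℝ) : ℝ := ∑ p ∈ S.PS s, ρ p * S.R1 ρ (s - S.lam p)

theorem filter_PS {s t : ℝ} (h : t ≤ s) : (S.PS s).filter (fun p => S.lam p ≤ t) = S.PS t := by
  ext p; simp only [Finset.mem_filter, mem_PS]; constructor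
  · exact fun h => h.2
  · exact fun h2 => ⟨h2.trans h, h2⟩

theorem R1_sub (ρ : P → ℝ) {s t : ℝ} (h : s ≤ t) :
    S.R1 ρ t - S.R1 ρ s = ∑ p ∈ (S.PS t).filter (fun p => s < S.lam p), ρ p := by
  unfold R1
  rw [← Finset.sum_filter_add_sum_filter_not (S.PS t) (fun p => S.lam p ≤ s), S.filter_PS h]
  simp

/-- Mertens' second theorem with error term -/
theorem mertensW {A : ℝ}
    (hA : Tendsto (fun s => S.R1 (fun p => Real.exp (-S.lam p)) s - Real.log s) atTop (𝓝 A)) :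
    ∃ C : ℝ, 0 < C ∧ ∀ s : ℝ, 1 / 2 ≤ s →
      |S.R1 (fun p => Real.exp (-S.lam p)) s - (Real.log s + A)| ≤ C / s := by
  obtain ⟨C, hC, hV⟩ := S.mertensV
  refine ⟨4 * C, by positivity, fun s hs => ?_⟩
  have hs0 : 0 < s := by linarith
  set W := S.R1 (fun p => Real.exp (-S.lam p)) with hW
  have key : ∀ t, s ≤ t → |(W t - Real.log t) - (W s - Real.log s)| ≤ 4 * C / s := by
    intro t hst
    have ht0 : 0 < t := by linarith
    have h1 := partial_sum ((S.PS t).filter (fun p => s < S.lam p))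
      (fun p => S.lam p * Real.exp (-S.lam p)) S.lam hst
      (fun p hp => by rw [Finset.mem_filter, mem_PS] at hp; exact ⟨hp.2.le, hp.1⟩)
      (fun u => u - s) (fun _ => 1) (fun u => u⁻¹) (fun u => -(u ^ 2)⁻¹) Real.log
      (fun u => -(2 * C) * u⁻¹) (fun u => -(2 * C) * (-(u ^ 2)⁻¹))
      (fun u _ => (hasDerivAt_id u).sub_const s)
      (fun u hu => hasDerivAt_inv (by linarith [hu.1]))
      (fun u hu => by rw [one_mul]; exact Real.hasDerivAt_log (by linarith [hu.1]))
      (fun u hu => (hasDerivAt_inv (by linarith [hu.1])).const_mul _)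
      (by
        intro u hu
        have h2 : ∑ p ∈ ((S.PS t).filter (fun p => s < S.lam p)).filter (fun p => S.lam p ≤ u),
            S.lam p * Real.exp (-S.lam p) = S.V u - S.V s := by
          have := S.R1_sub (fun p => S.lam p * Real.exp (-S.lam p)) hu.1
          unfold R1 at this
          unfold V
          rw [this, Finset.filter_filter, ← S.filter_PS hu.2.le, Finset.filter_filter]
          refine Finset.sum_congr ?_ fun _ _ => rfl
          ext p; simp [and_comm]
        rw [h2, abs_mul, abs_neg, abs_of_nonneg (by positivity : 0 ≤ (u ^ 2)⁻¹)]
        have h3 := hV u (by linarith [hu.1])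
        have h4 := hV s hs0.le
        have h5 : |S.V u - S.V s - (u - s)| ≤ 2 * C := by
          rw [abs_le] at *; constructor <;> linarith
        have : 0 ≤ (u ^ 2)⁻¹ := by positivity
        nlinarith)
    have h2 : ∑ p ∈ (S.PS t).filter (fun p => s < S.lam p), S.lam p * Real.exp (-S.lam p) * (S.lam p)⁻¹ = W t - W s := by
      rw [hW, S.R1_sub _ hst]
      refine Finset.sum_congr rfl fun p _ => ?_
      have := (S.lam_pos p).ne'
      field_simp
    have h3 : ∑ p ∈ (S.PS t).filter (fun p => s < S.lam p), S.lam p * Real.exp (-S.lam p) = S.V t - S.V s := by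
      have := S.R1_sub (fun p => S.lam p * Real.exp (-S.lam p)) hst
      unfold R1 at this
      unfold V
      rw [this]
    rw [h2, h3] at h1
    have h6 := hV t ht0.le
    have h7 := hV s hs0.le
    have h8 : |(S.V t - S.V s - (t - s)) * t⁻¹| ≤ 2 * C * t⁻¹ := by
      rw [abs_mul, abs_of_pos (inv_pos.mpr ht0)]
      gcongr
      rw [abs_le] at *; constructor <;> linarith
    have h9 : t⁻¹ ≤ s⁻¹ := inv_anti₀ hs0 hst
    have h10 : 0 < s⁻¹ := inv_pos.mpr hs0
    rw [div_eq_mul_inv]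
    rw [abs_le] at h1 h8 ⊢
    have h11 := mul_le_mul_of_nonneg_left h9 hC.le
    constructor <;> linarith [h1.1, h1.2, h8.1, h8.2, mul_pos hC h10]
  have h1 : Tendsto (fun t => |(W t - Real.log t) - (W s - Real.log s)|) atTop (𝓝 |A - (W s - Real.log s)|) :=
    (hA.sub_const _).abs
  have h2 := le_of_tendsto h1 (eventually_atTop.mpr ⟨s, fun t ht => key t ht⟩)
  rw [abs_sub_comm] at h2
  rwa [show W s - (Real.log s + A) = W s - Real.log s - A by ring]

theorem hyperbola (ρ : P → ℝ) (s : ℝ) :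
    S.R2 ρ s = 2 * ∑ p ∈ S.PS (s / 2), ρ p * S.R1 ρ (s - S.lam p) - S.R1 ρ (s / 2) ^ 2 := by
  classical
  rcases lt_or_ge s 0 with hs | hs
  · have : ∀ t ≤ 0, S.PS t = ∅ := by
      intro t ht; ext p; simp only [mem_PS, Finset.notMem_empty, iff_false, not_le]; linarith [S.lam_pos p]
    simp [R2, R1, this s hs.le, this (s/2) (by linarith)]
  have hsub := S.PS_mono (by linarith : s / 2 ≤ s)
  have e1 : ∀ p, S.R1 ρ (s - S.lam p) = ∑ q ∈ S.PS s, if S.lam p + S.lam q ≤ s then ρ q else 0 := by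
    intro p
    rw [R1, ← S.filter_PS (by linarith [S.lam_pos p] : s - S.lam p ≤ s), Finset.sum_filter]
    refine Finset.sum_congr rfl fun q _ => ?_
    simp only [le_sub_iff_add_le, add_comm]
  set D := S.PS s
  set c : P → P → ℝ := fun p q => if S.lam p + S.lam q ≤ s then ρ p * ρ q else 0 with hc
  set x : P → ℝ := fun p => if S.lam p ≤ s / 2 then 1 else 0 with hx
  have e2 : S.R2 ρ s = ∑ p ∈ D, ∑ q ∈ D, c p q := by
    unfold R2
    refine Finset.sum_congr rfl fun p _ => ?_
    rw [e1, Finset.mul_sum]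
    refine Finset.sum_congr rfl fun q _ => ?_
    simp only [hc]; split_ifs <;> simp
  have e3 : ∑ p ∈ S.PS (s / 2), ρ p * S.R1 ρ (s - S.lam p) = ∑ p ∈ D, ∑ q ∈ D, x p * c p q := by
    rw [← S.filter_PS (by linarith : s / 2 ≤ s), Finset.sum_filter]
    refine Finset.sum_congr rfl fun p _ => ?_
    rw [e1, ← Finset.mul_sum]
    simp only [hx]
    split_ifs
    · rw [Finset.mul_sum, one_mul]
      refine Finset.sum_congr rfl fun q _ => ?_
      simp only [hc]; split_ifs <;> simp
    · simp
  have e3' : ∑ p ∈ D, ∑ q ∈ D, x p * c p q = ∑ p ∈ D, ∑ q ∈ D, x q * c p q := by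
    rw [Finset.sum_comm]
    refine Finset.sum_congr rfl fun p _ => Finset.sum_congr rfl fun q _ => ?_
    simp only [hc]
    rw [add_comm, mul_comm (ρ p)]
  have e4 : S.R1 ρ (s / 2) ^ 2 = ∑ p ∈ D, ∑ q ∈ D, x p * x q * c p q := by
    rw [sq, R1, ← S.filter_PS (by linarith : s / 2 ≤ s), Finset.sum_filter, Finset.sum_mul_sum]
    refine Finset.sum_congr rfl fun p _ => Finset.sum_congr rfl fun q _ => ?_
    simp only [hc, hx]
    split_ifs <;> first | (exfalso; linarith) | simp
  rw [e2, e4, two_mul, e3]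
  nth_rewrite 2 [e3']
  rw [← Finset.sum_add_distrib, ← Finset.sum_sub_distrib]
  refine Finset.sum_congr rfl fun p _ => ?_
  rw [← Finset.sum_add_distrib, ← Finset.sum_sub_distrib]
  refine Finset.sum_congr rfl fun q _ => ?_
  simp only [hc, hx]
  split_ifs <;> first | (exfalso; linarith) | ring

theorem log_sum {ρ : P → ℝ} {M C : ℝ} (hC : 0 < C)
    (hR : ∀ s : ℝ, 1 / 2 ≤ s → |S.R1 ρ s - (Real.log s + M)| ≤ C / s) :
    ∃ C2 : ℝ, 0 < C2 ∧ ∀ s : ℝ, 2 ≤ s →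
      |∑ p ∈ S.PS (s / 2), ρ p * Real.log (1 - S.lam p / s) + Li2 (1 / 2)| ≤ C2 * (Real.log s / s) := by
  refine ⟨8 * (C + |Real.log (1/2) + M| + 1 ), by positivity, fun s hs => ?_⟩
  have hs0 : 0 < s := by linarith
  have hlog2 : 1 / 2 < Real.log 2 := by linarith [Real.log_two_gt_d9]
  have hlogs : Real.log 2 ≤ Real.log s := Real.log_le_log (by norm_num) hs
  have h1s : ∀ u ∈ Set.Icc (1/2:ℝ) (s/2), 1 - u / s ≠ 0 ∧ 0 < u ∧ 0 < s - u ∧ s / 2 ≤ s - u := by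
    intro u hu
    have : u / s ≤ 1 / 2 := by rw [div_le_iff₀ hs0]; linarith [hu.2]
    exact ⟨by linarith, by linarith [hu.1], by linarith [hu.2], by linarith [hu.2]⟩
  have h1 := partial_sum (S.PS (s / 2)) ρ S.lam (by linarith : (1/2:ℝ) ≤ s / 2)
    (fun p hp => ⟨(S.lam_gt p).le, S.mem_PS.mp hp⟩)
    (fun u => Real.log u + M) (fun u => u⁻¹) (fun u => Real.log (1 - u / s)) (fun u => -(s - u)⁻¹)
    (fun u => -Li2 (u / s)) (fun u => 2 * C / s * Real.log u) (fun u => 2 * C / s * u⁻¹)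
    (fun u hu => (Real.hasDerivAt_log (h1s u hu).2.1.ne').add_const M)
    (fun u hu => by
      have h2 : HasDerivAt (fun u : ℝ => 1 - u / s) (-(1 / s)) u := by
        simpa using ((hasDerivAt_id u).div_const s).const_sub 1
      refine (h2.log (h1s u hu).1).congr_deriv ?_
      have h3 : s - u ≠ 0 := (h1s u hu).2.2.1.ne'
      have h4 := (h1s u hu).1
      field_simp)
    (fun u hu => by
      obtain ⟨h2, h3, h4, h5⟩ := h1s u hu
      have h6 := (Li2_deriv (x := u / s) (by positivity) (by rw [div_lt_one hs0]; linarith)).comp u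
        ((hasDerivAt_id u).div_const s)
      refine h6.neg.congr_deriv ?_
      field_simp)
    (fun u hu => (Real.hasDerivAt_log (h1s u hu).2.1.ne').const_mul _)
    (by
      intro u hu
      obtain ⟨h2, h3, h4, h5⟩ := h1s u ⟨hu.1, hu.2.le⟩
      rw [S.filter_PS hu.2.le, abs_mul, abs_neg, abs_of_pos (inv_pos.mpr h4)]
      have h6 := hR u hu.1
      unfold R1 at h6
      have h7 : (s - u)⁻¹ ≤ 2 / s := by
        rw [inv_le_comm₀ h4 (by positivity)]
        rw [inv_div]; exact h5
      calc _ ≤ C / u * (2 / s) := by gcongr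
        _ = _ := by ring)
  have e1 : s / 2 / s = 1 / 2 := by field_simp
  simp only [e1] at h1
  have h2 := hR (s / 2) (by linarith)
  unfold R1 at h2
  have h3 : |(∑ p ∈ S.PS (s / 2), ρ p - (Real.log (s / 2) + M)) * Real.log (1 - 1 / 2)| ≤ 2 * C / s := by
    rw [abs_mul, show (1:ℝ) - 1/2 = 2⁻¹ by norm_num, Real.log_inv, abs_neg, abs_of_pos (by linarith : 0 < Real.log 2)]
    calc _ ≤ C / (s / 2) * 1 := by gcongr; linarith [Real.log_two_lt_d9]
      _ = _ := by ring
  have h4 : |Real.log (1 - 1 / 2 / s)| ≤ 1 / s := by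
    have h5 : (1/2)/s ≤ 1/4 := by rw [div_le_iff₀ hs0]; linarith
    have h50 : 0 < (1/2)/s := by positivity
    have h6 := Real.one_sub_inv_le_log_of_pos (by linarith : 0 < 1 - (1/2)/s)
    have h7 : Real.log (1 - (1/2)/s) ≤ 0 := Real.log_nonpos (by linarith) (by linarith)
    rw [abs_of_nonpos h7]
    have h8 : (1 - (1/2)/s)⁻¹ ≤ 1 + 2 * ((1/2)/s) := by
      rw [inv_le_iff_one_le_mul₀ (by linarith)]; nlinarith
    have : 2 * ((1/2)/s) = 1 / s := by ring
    linarith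
  have h5 : |(Real.log (1/2) + M) * Real.log (1 - 1 / 2 / s)| ≤ |Real.log (1/2) + M| * (1 / s) := by
    rw [abs_mul]; gcongr
  have h6 := Li2_nonneg (x := 1 / 2 / s) (by positivity)
  have h7 := Li2_le (x := 1 / 2 / s) (by positivity) (by rw [div_le_iff₀ hs0]; linarith)
  have h8 : Li2 (1/2/s) ≤ 1 / s := by
    have hpi : Real.pi ^ 2 / 6 ≤ 2 := by nlinarith [Real.pi_lt_d2, Real.pi_pos]
    have : 2 * (1/2/s) = 1 / s := by ring
    have : 0 < 1/2/s := by positivity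
    nlinarith
  have h9 : Real.log (s / 2) - Real.log (1/2) = Real.log s := by
    rw [← Real.log_div (by positivity) (by norm_num)]; congr 1; field_simp
  have h10 : 2 * C / s * Real.log (s / 2) - 2 * C / s * Real.log (1 / 2) = 2 * C * (Real.log s / s) := by
    rw [← mul_sub, h9]; ring
  rw [h10] at h1
  have h11 : 1 / s ≤ 2 * (Real.log s / s) := by
    rw [← mul_div_assoc]; gcongr; linarith
  have hε : 0 < Real.log s / s := by apply div_pos <;> linarith
  have h12 : 2 * C / s ≤ 4 * C * (Real.log s / s) := by
    calc 2 * C / s = 2 * C * (1 / s) := by ring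
      _ ≤ 2 * C * (2 * (Real.log s / s)) := by gcongr
      _ = _ := by ring
  have h13 : |Real.log (1/2) + M| * (1 / s) ≤ |Real.log (1/2) + M| * (2 * (Real.log s / s)) := by gcongr
  have h14 : 0 ≤ |Real.log (1/2) + M| := abs_nonneg _
  set ε := Real.log s / s
  set m := |Real.log (1/2) + M|
  have h15 : 0 ≤ m * ε := by positivity
  have h16 : 0 ≤ C * ε := by positivity
  rw [abs_le] at h1 h3 h5 ⊢
  constructor <;> linarith [h1.1, h1.2, h3.1, h3.2, h5.1, h5.2]

theorem R2_asymp {ρ : P → ℝ} {M C : ℝ} (hC : 0 < C) (hρ : ∀ p, 0 ≤ ρ p)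
    (hR : ∀ s : ℝ, 1 / 2 ≤ s → |S.R1 ρ s - (Real.log s + M)| ≤ C / s) :
    ∃ C2 : ℝ, 0 < C2 ∧ ∀ s : ℝ, 2 ≤ s →
      |S.R2 ρ s - ((Real.log s + M) ^ 2 - Real.pi ^ 2 / 6)| ≤ C2 * (Real.log s / s) := by
  obtain ⟨C1, hC1, hlog⟩ := S.log_sum hC hR
  set D := 1 + 2 * |M| + 2 * C with hD
  have hD0 : 0 < D := by have := abs_nonneg M; positivity
  refine ⟨2 * C1 + 4 * C * D + 8 * C + 8 * C ^ 2, by positivity, fun s hs => ?_⟩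
  have hs0 : 0 < s := by linarith
  have hlog2 : 1 / 2 < Real.log 2 := by linarith [Real.log_two_gt_d9]
  have hlogs : Real.log 2 ≤ Real.log s := Real.log_le_log (by norm_num) hs
  have h1 := hR (s / 2) (by linarith)
  have h2 := hlog s hs
  rw [S.hyperbola]
  have e0 : Real.log (s / 2) = Real.log s - Real.log 2 := Real.log_div hs0.ne' (by norm_num)
  have hR0 : 0 ≤ S.R1 ρ (s / 2) := Finset.sum_nonneg fun p _ => hρ p
  have hRD : S.R1 ρ (s / 2) ≤ D * Real.log s := by
    have h3 := (abs_le.mp h1).2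
    rw [e0] at h3
    have h4 : C / (s / 2) ≤ C := div_le_self hC.le (by linarith)
    have h5 := le_abs_self M
    have : |M| ≤ 2 * |M| * Real.log s := by nlinarith [abs_nonneg M]
    rw [hD]
    nlinarith
  set e1 := S.R1 ρ (s / 2) - (Real.log (s / 2) + M) with he1
  set e2 := ∑ p ∈ S.PS (s / 2), ρ p * Real.log (1 - S.lam p / s) + Li2 (1 / 2) with he2
  set e3 := ∑ p ∈ S.PS (s / 2), ρ p * S.R1 ρ (s - S.lam p) -
    (S.R1 ρ (s / 2) * (Real.log s + M) + ∑ p ∈ S.PS (s / 2), ρ p * Real.log (1 - S.lam p / s)) with he3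
  have h3 : |e3| ≤ 2 * C * D * (Real.log s / s) := by
    have : e3 = ∑ p ∈ S.PS (s / 2), ρ p * (S.R1 ρ (s - S.lam p) - (Real.log (s - S.lam p) + M)) := by
      rw [he3, R1, Finset.sum_mul, ← Finset.sum_add_distrib, ← Finset.sum_sub_distrib]
      refine Finset.sum_congr rfl fun p hp => ?_
      have hp' := S.mem_PS.mp hp
      have : s - S.lam p = s * (1 - S.lam p / s) := by field_simp
      rw [this, Real.log_mul hs0.ne' (by
        have : S.lam p / s ≤ 1 / 2 := by rw [div_le_iff₀ hs0]; linarith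
        linarith)]
      ring
    rw [this]
    calc _ ≤ ∑ p ∈ S.PS (s / 2), |ρ p * (S.R1 ρ (s - S.lam p) - (Real.log (s - S.lam p) + M))| :=
          Finset.abs_sum_le_sum_abs _ _
      _ ≤ ∑ p ∈ S.PS (s / 2), ρ p * (C / (s / 2)) := by
          refine Finset.sum_le_sum fun p hp => ?_
          have hp' := S.mem_PS.mp hp
          rw [abs_mul, abs_of_nonneg (hρ p)]
          refine mul_le_mul_of_nonneg_left ((hR _ (by linarith)).trans ?_) (hρ p)
          gcongr
          linarith
      _ = S.R1 ρ (s / 2) * (C / (s / 2)) := by rw [R1, Finset.sum_mul]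
      _ ≤ D * Real.log s * (C / (s / 2)) := by gcongr
      _ = _ := by field_simp
  have hε : 0 < Real.log s / s := by apply div_pos <;> linarith
  have h11 : 1 / s ≤ 2 * (Real.log s / s) := by
    rw [← mul_div_assoc]; gcongr; linarith
  have h4 : C / (s / 2) ≤ 4 * C * (Real.log s / s) := by
    calc C / (s / 2) = 2 * C * (1 / s) := by field_simp
      _ ≤ 2 * C * (2 * (Real.log s / s)) := by gcongr
      _ = _ := by ring
  have h5 : C / (s / 2) ≤ C := div_le_self hC.le (by linarith)
  have h6 : e1 ^ 2 ≤ 4 * C ^ 2 * (Real.log s / s) := by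
    rw [← sq_abs, sq]
    calc |e1| * |e1| ≤ C * (4 * C * (Real.log s / s)) := by
          gcongr <;> linarith
      _ = _ := by ring
  have h7 : |2 * Real.log 2 * e1| ≤ 8 * C * (Real.log s / s) := by
    rw [abs_mul, abs_of_pos (by linarith)]
    calc _ ≤ 2 * 1 * (4 * C * (Real.log s / s)) := by
          gcongr
          · linarith [Real.log_two_lt_d9]
          · linarith
      _ = _ := by ring
  have main : 2 * ∑ p ∈ S.PS (s / 2), ρ p * S.R1 ρ (s - S.lam p) - S.R1 ρ (s / 2) ^ 2 -
      ((Real.log s + M) ^ 2 - Real.pi ^ 2 / 6) = 2 * Real.log 2 * e1 + 2 * e2 + 2 * e3 - e1 ^ 2 := by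
    rw [← Li2_half, he3, he2, he1, e0]; ring
  rw [main]
  have := sq_nonneg e1
  set ε := Real.log s / s
  have : 0 ≤ C ^ 2 * ε := by positivity
  rw [abs_le] at h2 h3 h7 ⊢
  constructor <;> linarith [h2.1, h2.2, h3.1, h3.2, h7.1, h7.2]

end BSys

theorem err_sum {ι : Type*} (F : Finset ι) (w pos : ι → ℝ) {s d E : ℝ} (hd : 0 < d) (hE : 0 ≤ E) (hs : 0 < s)
    (hw : ∀ i ∈ F, 0 ≤ w i) (hpos : ∀ i ∈ F, pos i ≤ s)
    (h1 : ∀ t, 3 ≤ t → t ≤ s → ∀ G ⊆ F, (∀ i ∈ G, t - 1 < pos i ∧ pos i ≤ t) → ∑ i ∈ G, w i ≤ E / t)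
    (h2 : ∀ G ⊆ F, (∀ i ∈ G, pos i ≤ 3) → ∑ i ∈ G, w i ≤ E) :
    ∑ i ∈ F, w i * Real.exp (-d * (s - pos i)) ≤ (3 + 2 / d) / (1 - Real.exp (-(d / 2))) * (E / s) := by
  have hb0 : 0 ≤ (3 + 2 / d) * (E / s) := by positivity
  have := shell_sum F (fun i => w i * Real.exp (-(d / 2) * (s - pos i))) (fun i => s - pos i)
    (fun i hi => mul_nonneg (hw i hi) (Real.exp_pos _).le) (fun i hi => by linarith [hpos i hi])
    (b := (3 + 2 / d) * (E / s)) (δ := d / 2) hb0 (by positivity) ?_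
  · calc _ = ∑ i ∈ F, w i * Real.exp (-(d / 2) * (s - pos i)) * Real.exp (-(d / 2) * (s - pos i)) := by
          refine Finset.sum_congr rfl fun i _ => ?_
          rw [mul_assoc, ← Real.exp_add]; congr 2; ring
      _ ≤ _ := this
      _ = _ := by ring
  · intro k G hG hk
    have e1 : ∑ i ∈ G, w i * Real.exp (-(d / 2) * (s - pos i)) ≤ (∑ i ∈ G, w i) * Real.exp (-(d / 2) * k) := by
      rw [Finset.sum_mul]
      refine Finset.sum_le_sum fun i hi => mul_le_mul_of_nonneg_left ?_ (hw i (hG hi))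
      apply Real.exp_le_exp.mpr
      nlinarith [(hk i hi).1]
    have hk0 : (0:ℝ) ≤ k := Nat.cast_nonneg k
    have hx0 := Real.exp_pos (-(d / 2) * k)
    have hx1 : Real.exp (-(d / 2) * k) ≤ 1 := Real.exp_le_one_iff.mpr (by nlinarith)
    have hxk : k * Real.exp (-(d / 2) * k) ≤ 2 / d := by
      have e2 := Real.add_one_le_exp (d / 2 * k)
      have e3 : Real.exp (d / 2 * k) * Real.exp (-(d / 2) * k) = 1 := by rw [← Real.exp_add]; simp
      rw [le_div_iff₀ hd]
      nlinarith
    set x := Real.exp (-(d / 2) * k)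
    refine e1.trans ?_
    rcases le_or_gt 3 (s - k) with h3 | h3
    · have e4 := h1 (s - k) h3 (by linarith) G hG fun i hi => ⟨by linarith [(hk i hi).2], by linarith [(hk i hi).1]⟩
      have hsk : 0 < s - k := by linarith
      calc _ ≤ E / (s - k) * x := by gcongr
        _ = E * (x / (s - k)) := by ring
        _ ≤ E * ((3 + 2 / d) / s) := by
          gcongr 1
          rw [div_le_div_iff₀ hsk hs]
          have : 0 < 2 / d := by positivity
          nlinarith
        _ = _ := by ring
    · have e4 := h2 G hG fun i hi => by linarith [(hk i hi).1]
      calc _ ≤ E * x := by gcongr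
        _ ≤ E * ((3 + 2 / d) / s) := by
          gcongr 1
          rw [le_div_iff₀ hs]
          nlinarith
        _ = _ := by ring

namespace BSys
variable {P : Type*} (S : BSys P)

/-- pairs of primes -/
def PP (s : ℝ) : Finset (P × P) := (S.PS s ×ˢ S.PS s).filter fun x => S.lam x.1 + S.lam x.2 ≤ s

theorem mem_PP {s : ℝ} {x : P × P} : x ∈ S.PP s ↔ S.lam x.1 + S.lam x.2 ≤ s := by
  simp only [PP, Finset.mem_filter, Finset.mem_product, mem_PS]
  constructor
  · exact fun h => h.2
  · intro h; exact ⟨⟨by linarith [S.lam_pos x.2], by linarith [S.lam_pos x.1]⟩, h⟩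

theorem R2_eq (ρ : P → ℝ) (s : ℝ) : S.R2 ρ s = ∑ x ∈ S.PP s, ρ x.1 * ρ x.2 := by
  rw [PP, Finset.sum_filter, Finset.sum_product]
  unfold R2
  refine Finset.sum_congr rfl fun p _ => ?_
  rw [R1, ← S.filter_PS (by linarith [S.lam_pos p] : s - S.lam p ≤ s), Finset.sum_filter, Finset.mul_sum]
  refine Finset.sum_congr rfl fun q _ => ?_
  simp only [le_sub_iff_add_le, add_comm]
  split_ifs <;> simp

theorem log_diff {t : ℝ} (ht : 3 ≤ t) : Real.log t - Real.log (t - 1) ≤ 2 / t := by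
  rw [← Real.log_div (by linarith) (by linarith)]
  have := Real.log_le_sub_one_of_pos (x := t / (t - 1)) (div_pos (by linarith) (by linarith))
  refine this.trans ?_
  rw [div_sub_one (by linarith), div_le_div_iff₀ (by linarith) (by linarith)]
  linarith

theorem err_single {A C : ℝ} (hC : 0 < C)
    (hW : ∀ s : ℝ, 1 / 2 ≤ s → |S.R1 (fun p => Real.exp (-S.lam p)) s - (Real.log s + A)| ≤ C / s)
    {d : ℝ} (hd : 0 < d) : ∃ C2 : ℝ, 0 < C2 ∧ ∀ s : ℝ, 2 ≤ s →
      ∑ p ∈ S.PS s, Real.exp (-S.lam p) * Real.exp (-d * (s - S.lam p)) ≤ C2 * (Real.log s / s) := by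
  set ρ : P → ℝ := fun p => Real.exp (-S.lam p) with hρ
  have hρ0 : ∀ p, 0 ≤ ρ p := fun p => (Real.exp_pos _).le
  have hR3 : 0 ≤ S.R1 ρ 3 := Finset.sum_nonneg fun p _ => hρ0 p
  set E := 2 + 3 * C + S.R1 ρ 3 with hE
  have hE0 : 0 < E := by positivity
  have hden : 0 < 1 - Real.exp (-(d / 2)) := by
    have : Real.exp (-(d/2)) < 1 := Real.exp_lt_one_iff.mpr (by linarith)
    linarith
  refine ⟨(3 + 2 / d) / (1 - Real.exp (-(d / 2))) * E * 2, by positivity, fun s hs => ?_⟩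
  have hs0 : 0 < s := by linarith
  refine (err_sum (S.PS s) ρ S.lam hd hE0.le hs0 (fun p _ => hρ0 p) (fun p hp => S.mem_PS.mp hp) ?_ ?_).trans ?_
  · intro t ht hts G hG hGt
    have h1 : ∑ i ∈ G, ρ i ≤ S.R1 ρ t - S.R1 ρ (t - 1) := by
      rw [S.R1_sub ρ (by linarith)]
      refine Finset.sum_le_sum_of_subset_of_nonneg (fun p hp => ?_) fun p _ _ => hρ0 p
      rw [Finset.mem_filter, mem_PS]; exact ⟨(hGt p hp).2, (hGt p hp).1⟩
    have h2 := (abs_le.mp (hW t (by linarith))).2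
    have h3 := (abs_le.mp (hW (t - 1) (by linarith))).1
    have h4 := log_diff ht
    have h5 : C / (t - 1) ≤ 2 * C / t := by
      rw [div_le_div_iff₀ (by linarith) (by linarith)]; nlinarith
    have h6 : E / t = 2 / t + C / t + 2 * C / t + S.R1 ρ 3 / t := by rw [hE]; ring
    have h7 : 0 ≤ S.R1 ρ 3 / t := by apply div_nonneg hR3; linarith
    linarith
  · intro G _ hG
    have : ∑ i ∈ G, ρ i ≤ S.R1 ρ 3 :=
      Finset.sum_le_sum_of_subset_of_nonneg (fun p hp => S.mem_PS.mpr (hG p hp)) fun p _ _ => hρ0 p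
    linarith
  · have hlog2 : 1 / 2 < Real.log 2 := by linarith [Real.log_two_gt_d9]
    have hlogs : Real.log 2 ≤ Real.log s := Real.log_le_log (by norm_num) hs
    have : E / s ≤ E * (2 * (Real.log s / s)) := by
      rw [div_eq_mul_inv]; gcongr
      rw [← mul_div_assoc, inv_eq_one_div]; gcongr; linarith
    calc _ ≤ (3 + 2 / d) / (1 - Real.exp (-(d / 2))) * (E * (2 * (Real.log s / s))) := by gcongr
      _ = _ := by ring

theorem err_pair {A C : ℝ} (hC : 0 < C)
    (hW : ∀ s : ℝ, 1 / 2 ≤ s → |S.R1 (fun p => Real.exp (-S.lam p)) s - (Real.log s + A)| ≤ C / s)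
    {d : ℝ} (hd : 0 < d) : ∃ C2 : ℝ, 0 < C2 ∧ ∀ s : ℝ, 2 ≤ s →
      ∑ x ∈ S.PP s, Real.exp (-S.lam x.1) * Real.exp (-S.lam x.2) * Real.exp (-d * (s - (S.lam x.1 + S.lam x.2)))
        ≤ C2 * (Real.log s / s) := by
  set ρ : P → ℝ := fun p => Real.exp (-S.lam p) with hρ
  have hρ0 : ∀ p, 0 ≤ ρ p := fun p => (Real.exp_pos _).le
  obtain ⟨B, hB, hR2⟩ := S.R2_asymp hC hρ0 hW
  have hR3 : 0 ≤ S.R2 ρ 3 := by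
    rw [R2_eq]; exact Finset.sum_nonneg fun p _ => mul_nonneg (hρ0 _) (hρ0 _)
  set E := 4 + 8 * |A| + 3 * B + 2 * S.R2 ρ 3 with hE
  have hE0 : 0 < E := by have := abs_nonneg A; positivity
  have hden : 0 < 1 - Real.exp (-(d / 2)) := by
    have : Real.exp (-(d/2)) < 1 := Real.exp_lt_one_iff.mpr (by linarith)
    linarith
  refine ⟨(3 + 2 / d) / (1 - Real.exp (-(d / 2))) * E, by positivity, fun s hs => ?_⟩
  have hs0 : 0 < s := by linarith
  have hlog2 : 1 / 2 < Real.log 2 := by linarith [Real.log_two_gt_d9]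
  have hlogs : Real.log 2 ≤ Real.log s := Real.log_le_log (by norm_num) hs
  have hls : 0 < Real.log s := by linarith
  refine (err_sum (S.PP s) (fun x => ρ x.1 * ρ x.2) (fun x => S.lam x.1 + S.lam x.2) (E := E * Real.log s)
    hd (by positivity) hs0 (fun p _ => mul_nonneg (hρ0 _) (hρ0 _)) (fun p hp => S.mem_PP.mp hp) ?_ ?_).trans ?_
  · intro t ht hts G hG hGt
    classical
    have h1 : ∑ x ∈ G, ρ x.1 * ρ x.2 ≤ S.R2 ρ t - S.R2 ρ (t - 1) := by
      have hd : Disjoint G (S.PP (t - 1)) := by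
        rw [Finset.disjoint_left]; intro x hx hx2
        have := (hGt x hx).1; rw [mem_PP] at hx2; linarith
      rw [le_sub_iff_add_le, R2_eq, R2_eq, ← Finset.sum_union hd]
      refine Finset.sum_le_sum_of_subset_of_nonneg (fun x hx => ?_) fun p _ _ => mul_nonneg (hρ0 _) (hρ0 _)
      rw [Finset.mem_union, mem_PP] at hx
      rw [mem_PP]
      rcases hx with hx | hx
      · exact (hGt x hx).2
      · linarith
    have h2 := (abs_le.mp (hR2 t (by linarith))).2
    have h3 := (abs_le.mp (hR2 (t - 1) (by linarith))).1
    have h4 := log_diff ht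
    have ht0 : 0 < t := by linarith
    have h40 : Real.log (t - 1) ≤ Real.log t := Real.log_le_log (by linarith) (by linarith)
    have h41 : 0 ≤ Real.log (t - 1) := Real.log_nonneg (by linarith)
    have h42 : Real.log t ≤ Real.log s := Real.log_le_log ht0 hts
    have h5 : Real.log (t - 1) / (t - 1) ≤ 2 * (Real.log s / t) := by
      rw [← mul_div_assoc, div_le_div_iff₀ (by linarith) (by linarith)]; nlinarith
    have h51 : Real.log t / t ≤ Real.log s / t := by gcongr
    have h6 : (Real.log t + A) ^ 2 - (Real.log (t - 1) + A) ^ 2 ≤ (4 + 8 * |A|) * (Real.log s / t) := by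
      have : (Real.log t + A) ^ 2 - (Real.log (t - 1) + A) ^ 2 =
        (Real.log t - Real.log (t-1)) * (Real.log t + Real.log (t-1) + 2 * A) := by ring
      rw [this]
      calc _ ≤ (Real.log t - Real.log (t-1)) * (2 * Real.log s + 4 * |A| * Real.log s) := by
            apply mul_le_mul_of_nonneg_left _ (by linarith)
            have := le_abs_self A
            nlinarith [abs_nonneg A]
        _ ≤ 2 / t * (2 * Real.log s + 4 * |A| * Real.log s) := by gcongr
        _ = _ := by ring
    have h8 : E * Real.log s / t = (4 + 8 * |A|) * (Real.log s / t) + 3 * B * (Real.log s / t) +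
      2 * S.R2 ρ 3 * (Real.log s / t) := by rw [hE]; ring
    have h9 : 0 ≤ 2 * S.R2 ρ 3 * (Real.log s / t) := by positivity
    have h10 := mul_le_mul_of_nonneg_left h5 hB.le
    have h11 := mul_le_mul_of_nonneg_left h51 hB.le
    linarith
  · intro G _ hG
    have : ∑ x ∈ G, ρ x.1 * ρ x.2 ≤ S.R2 ρ 3 := by
      rw [R2_eq]
      exact Finset.sum_le_sum_of_subset_of_nonneg (fun p hp => S.mem_PP.mpr (hG p hp))
        fun p _ _ => mul_nonneg (hρ0 _) (hρ0 _)
    have h2 : 2 * S.R2 ρ 3 ≤ E := by have := abs_nonneg A; rw [hE]; linarith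
    nlinarith
  · apply le_of_eq; ring

end BSys

theorem euler_fin {P : Type*} (g : P → ℕ → ℝ) (h0 : ∀ p, g p 0 = 1) (m : ℕ) (E : Finset P) :
    ∑ b ∈ E.finsupp (fun _ => Finset.range m), b.prod g = ∏ p ∈ E, ∑ k ∈ Finset.range m, g p k := by
  classical
  rw [Finset.prod_sum]
  refine Finset.sum_bij' (fun b _ => fun p _ => b p) (fun f _ => Finsupp.indicator E f) ?_ ?_ ?_ ?_ ?_
  · intro b hb
    rw [Finset.mem_finsupp_iff] at hb
    rw [Finset.mem_pi]; exact fun p hp => hb.2 p hp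
  · intro f hf
    rw [Finset.mem_pi] at hf
    rw [Finset.mem_finsupp_iff]
    refine ⟨Finsupp.support_indicator_subset _ _, fun p hp => ?_⟩
    rw [Finsupp.indicator_of_mem hp]; exact hf p hp
  · intro b hb
    rw [Finset.mem_finsupp_iff] at hb
    ext p
    by_cases hp : p ∈ E
    · rw [Finsupp.indicator_of_mem hp]
    · rw [Finsupp.indicator_of_notMem hp]
      by_contra h
      exact hp (hb.1 (Finsupp.mem_support_iff.mpr (Ne.symm h)))
  · intro f hf
    ext p hp
    exact Finsupp.indicator_of_mem hp _
  · intro b hb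
    rw [Finset.mem_finsupp_iff] at hb
    rw [Finset.prod_attach E (fun p => g p (b p))]
    exact Finsupp.prod_of_support_subset _ hb.1 _ fun p _ => h0 p

theorem euler_prod {P : Type*} (g : P → ℕ → ℝ) (h0 : ∀ p, g p 0 = 1) (hg : ∀ p k, 0 ≤ g p k) (m : ℕ) (hm : 0 < m)
    (hgm : ∀ p k, m ≤ k → g p k = 0) (γ : P → ℝ) (hγ : ∀ p, ∑ k ∈ Finset.range m, g p k = 1 + γ p)
    (hs : Summable γ) :
    HasSum (fun b : P →₀ ℕ => b.prod g) (∏' p, (1 + γ p)) ∧ Multipliable (fun p => 1 + γ p) := by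
  classical
  have hγ0 : ∀ p, 0 ≤ γ p := by
    intro p
    have : g p 0 ≤ ∑ k ∈ Finset.range m, g p k :=
      Finset.single_le_sum (fun k _ => hg p k) (Finset.mem_range.mpr hm)
    rw [hγ, h0] at this; linarith
  have hmul : Multipliable (fun p => 1 + γ p) := Real.multipliable_one_add_of_summable hs
  have hfin : ∀ E : Finset P, ∏ p ∈ E, (1 + γ p) ≤ ∏' p, (1 + γ p) := by
    intro E
    refine ge_of_tendsto hmul.hasProd (eventually_atTop.mpr ⟨E, fun E' hE' => ?_⟩)
    rw [← Finset.prod_sdiff hE']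
    have h1 : 1 ≤ ∏ p ∈ E' \ E, (1 + γ p) := by
      have : ∏ p ∈ E' \ E, (1 : ℝ) ≤ ∏ p ∈ E' \ E, (1 + γ p) :=
        Finset.prod_le_prod (fun _ _ => zero_le_one) fun p _ => by linarith [hγ0 p]
      simpa using this
    have h2 : 0 ≤ ∏ p ∈ E, (1 + γ p) := Finset.prod_nonneg fun p _ => by linarith [hγ0 p]
    nlinarith
  have hpos : ∀ b : P →₀ ℕ, 0 ≤ b.prod g := fun b => Finset.prod_nonneg fun p _ => hg _ _
  have hle : ∀ F : Finset (P →₀ ℕ), ∑ b ∈ F, b.prod g ≤ ∏' p, (1 + γ p) := by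
    intro F
    set E := F.biUnion Finsupp.support
    have h1 := euler_fin g h0 m E
    calc ∑ b ∈ F, b.prod g = ∑ b ∈ F with b ∈ E.finsupp (fun _ => Finset.range m), b.prod g := by
          rw [Finset.sum_filter]
          refine Finset.sum_congr rfl fun b hb => ?_
          split_ifs with h
          · rfl
          · rw [Finset.mem_finsupp_iff] at h
            push Not at h
            obtain ⟨p, hp, hp2⟩ := h (Finset.subset_biUnion_of_mem Finsupp.support hb)
            rw [Finset.mem_range, not_lt] at hp2
            refine Finset.prod_eq_zero (i := p) (Finsupp.mem_support_iff.mpr (by omega)) (hgm _ _ hp2)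
      _ ≤ ∑ b ∈ E.finsupp (fun _ => Finset.range m), b.prod g :=
          Finset.sum_le_sum_of_subset_of_nonneg (fun b hb => (Finset.mem_filter.mp hb).2) fun b _ _ => hpos b
      _ = ∏ p ∈ E, (1 + γ p) := by rw [h1]; exact Finset.prod_congr rfl fun p _ => hγ p
      _ ≤ _ := hfin E
  have hsum : Summable (fun b : P →₀ ℕ => b.prod g) := summable_of_sum_le hpos hle
  refine ⟨?_, hmul⟩
  have : ∑' b : P →₀ ℕ, b.prod g = ∏' p, (1 + γ p) := by
    refine le_antisymm (hsum.tsum_le_of_sum_le hle) ?_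
    refine le_of_tendsto hmul.hasProd (Eventually.of_forall fun E => ?_)
    have h1 := euler_fin g h0 m E
    simp only [hγ] at h1
    change ∏ p ∈ E, (1 + γ p) ≤ _
    rw [← h1]
    exact hsum.sum_le_tsum _ fun b _ => hpos b
  rw [← this]
  exact hsum.hasSum

namespace BSys
variable {P : Type*} (S : BSys P)

/-- `h`-full exponent vectors, with exponents on `c` divisible by `h` -/
def FF (h : ℕ) (c : Finset P) (f : P →₀ ℕ) : Prop := ∀ p, (p ∈ c → h ∣ f p) ∧ (f p = 0 ∨ h ≤ f p)

def GG (h : ℕ) (c : Finset P) (b : P →₀ ℕ) : Prop := ∀ p, b p = 0 ∨ (p ∉ c ∧ h < b p ∧ b p < 2 * h)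

open scoped Classical in
def Qs (h : ℕ) (c : Finset P) (X : (P →₀ ℕ) → Prop) (T : ℝ) : Finset (P →₀ ℕ) :=
  (S.FL T).filter fun f => FF h c f ∧ X f

theorem mem_Qs {h : ℕ} {c : Finset P} {X : (P →₀ ℕ) → Prop} {T : ℝ} {f : P →₀ ℕ} :
    f ∈ S.Qs h c X T ↔ S.L f ≤ T ∧ FF h c f ∧ X f := by
  simp [Qs, mem_FL]

def bet (h v : ℕ) : ℕ := if h ∣ v then 0 else h + v % h

theorem bet_zero (h : ℕ) : bet h 0 = 0 := by simp [bet]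

theorem alp_zero (h : ℕ) : (0 - bet h 0) / h = 0 := by simp [bet]

theorem bet_prop {h v : ℕ} (hh : 0 < h) (hv : v = 0 ∨ h ≤ v) : h * ((v - bet h v) / h) + bet h v = v := by
  unfold bet
  split_ifs with hd
  · rw [Nat.sub_zero, add_zero, Nat.mul_div_cancel' hd]
  · have hv2 : h ≤ v := by
      rcases hv with rfl | hv
      · exact absurd (dvd_zero h) hd
      · exact hv
    have h1 := Nat.div_add_mod v h
    have h2 : 1 ≤ v / h := by rw [Nat.le_div_iff_mul_le hh]; omega
    obtain ⟨k, hk⟩ := Nat.exists_eq_add_of_le h2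
    rw [hk, mul_add, mul_one] at h1
    have : v - (h + v % h) = h * k := by omega
    rw [this, Nat.mul_div_cancel_left _ hh]; omega

theorem bet_range {h v : ℕ} (hh : 0 < h) : bet h v = 0 ∨ (¬ h ∣ v ∧ h < bet h v ∧ bet h v < 2 * h) := by
  unfold bet
  split_ifs with hd
  · exact Or.inl rfl
  · have h1 : v % h ≠ 0 := fun h2 => hd (Nat.dvd_of_mod_eq_zero h2)
    have := Nat.mod_lt v hh
    right; exact ⟨hd, by omega, by omega⟩

theorem bet_mul_add {h a b : ℕ} (hb : b = 0 ∨ (h < b ∧ b < 2 * h)) : bet h (h * a + b) = b := by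
  unfold bet
  rcases hb with rfl | hb
  · simp
  · have h1 : (h * a + b) % h = b - h := by
      rw [Nat.mul_add_mod, Nat.mod_eq_sub_mod hb.1.le, Nat.mod_eq_of_lt (by omega)]
    have : ¬ h ∣ h * a + b := by
      intro h2
      have := Nat.mod_eq_zero_of_dvd h2
      omega
    rw [if_neg this, h1]; omega

theorem Q_sum {h : ℕ} (hh : 0 < h) (c : Finset P) (T : ℝ) :
    ((S.Qs h c (fun _ => True) T).card : ℝ) =
      ∑ b ∈ by classical exact (S.FL T).filter (GG h c), S.J ((T - S.L b) / h) := by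
  classical
  simp only [J_eq_card]
  rw [← Nat.cast_sum, ← Finset.card_sigma]
  congr 1
  have hhR : (0:ℝ) < h := by exact_mod_cast hh
  refine Finset.card_bij' (fun f _ => ⟨f.mapRange (bet h) (bet_zero h),
      f.mapRange (fun v => (v - bet h v) / h) (alp_zero h)⟩) (fun x _ => h • x.2 + x.1) ?_ ?_ ?_ ?_
  · intro f hf
    rw [mem_Qs] at hf
    have e1 : h • f.mapRange (fun v => (v - bet h v) / h) (alp_zero h) + f.mapRange (bet h) (bet_zero h) = f := by
      ext p
      simp only [Finsupp.add_apply, Finsupp.smul_apply, Finsupp.mapRange_apply, smul_eq_mul]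
      exact bet_prop hh (hf.2.1 p).2
    have e2 := congrArg S.L e1
    rw [L_add, L_nsmul] at e2
    have e3 := S.L_nonneg (f.mapRange (fun v => (v - bet h v) / h) (alp_zero h))
    rw [Finset.mem_sigma, Finset.mem_filter, mem_FL, mem_FL]
    refine ⟨⟨?_, ?_⟩, ?_⟩
    · nlinarith [hf.1]
    · intro p
      rw [Finsupp.mapRange_apply]
      rcases bet_range (v := f p) hh with h1 | h1
      · exact Or.inl h1
      · exact Or.inr ⟨fun h2 => h1.1 ((hf.2.1 p).1 h2), h1.2⟩
    · rw [le_div_iff₀ hhR]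
      nlinarith [hf.1]
  · rintro ⟨b, a⟩ hx
    rw [Finset.mem_sigma, Finset.mem_filter, mem_FL, mem_FL, le_div_iff₀ hhR] at hx
    rw [mem_Qs]
    refine ⟨?_, ?_, trivial⟩
    · rw [L_add, L_nsmul]
      have := hx.2; simp only at this ⊢; linarith
    · intro p
      simp only [Finsupp.add_apply, Finsupp.smul_apply, smul_eq_mul]
      have hb := hx.1.2 p
      simp only at hb
      refine ⟨fun hp => ?_, ?_⟩
      · have : b p = 0 := by
          rcases hb with h1 | h1
          · exact h1
          · exact absurd hp h1.1
        rw [this]; simp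
      · rcases hb with h1 | h1
        · rw [h1]
          rcases Nat.eq_zero_or_pos (a p) with h2 | h2
          · left; simp [h2]
          · right; nlinarith
        · right; nlinarith [Nat.zero_le (h * a p)]
  · intro f hf
    rw [mem_Qs] at hf
    ext p
    simp only [Finsupp.add_apply, Finsupp.smul_apply, Finsupp.mapRange_apply, smul_eq_mul]
    exact bet_prop hh (hf.2.1 p).2
  · rintro ⟨b, a⟩ hx
    rw [Finset.mem_sigma, Finset.mem_filter] at hx
    have hb : ∀ p, b p = 0 ∨ (h < b p ∧ b p < 2 * h) := by
      intro p
      rcases hx.1.2 p with h1 | h1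
      · exact Or.inl h1
      · exact Or.inr h1.2
    have e1 : (h • a + b).mapRange (bet h) (bet_zero h) = b := by
      ext p
      simp only [Finsupp.add_apply, Finsupp.smul_apply, Finsupp.mapRange_apply, smul_eq_mul]
      exact bet_mul_add (hb p)
    have e2 : (h • a + b).mapRange (fun v => (v - bet h v) / h) (alp_zero h) = a := by
      ext p
      simp only [Finsupp.add_apply, Finsupp.smul_apply, Finsupp.mapRange_apply, smul_eq_mul]
      rw [bet_mul_add (hb p), Nat.add_sub_cancel, Nat.mul_div_cancel_left _ hh]
    simp only [e1, e2]

theorem Q_step {h : ℕ} (hh : 0 < h) (c : Finset P) {p : P} (hp : p ∉ c) (X : (P →₀ ℕ) → Prop)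
    (hX : ∀ f j, X (f + Finsupp.single p j) ↔ X f) (c' : Finset P) (hc' : ∀ q, q ∈ c' ↔ q = p ∨ q ∈ c) (T : ℝ) :
    (S.Qs h c (fun f => f p ≠ 0 ∧ X f) T).card =
      ∑ j ∈ Finset.Ico h (2 * h), (S.Qs h c' X (T - j * S.lam p)).card := by
  classical
  rw [← Finset.card_sigma]
  have key : ∀ f : P →₀ ℕ, FF h c f → f p ≠ 0 →
      h + f p % h ≤ f p ∧ h ∣ f p - (h + f p % h) := by
    intro f hf hfp
    have h1 : h ≤ f p := (hf p).2.resolve_left hfp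
    have h3 := Nat.div_add_mod (f p) h
    have h2 : 1 ≤ f p / h := by rw [Nat.le_div_iff_mul_le hh]; omega
    obtain ⟨k, hk⟩ := Nat.exists_eq_add_of_le h2
    rw [hk, mul_add, mul_one] at h3
    exact ⟨by have := Nat.zero_le (h * k); omega, k, by omega⟩
  refine Finset.card_bij' (fun f _ => ⟨h + f p % h, f - Finsupp.single p (h + f p % h)⟩)
    (fun x _ => x.2 + Finsupp.single p x.1) ?_ ?_ ?_ ?_
  · intro f hf
    rw [mem_Qs] at hf
    obtain ⟨hL, hF, hfp, hXf⟩ := hf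
    obtain ⟨h1, h2⟩ := key f hF hfp
    have e1 : f - Finsupp.single p (h + f p % h) + Finsupp.single p (h + f p % h) = f := by
      apply tsub_add_cancel_of_le
      rw [Finsupp.single_le_iff]; exact h1
    have e2 := congrArg S.L e1
    rw [L_add, L_single] at e2
    rw [Finset.mem_sigma, mem_Qs, Finset.mem_Ico]
    have := Nat.mod_lt (f p) hh
    refine ⟨by simp only; omega, ?_, ?_, ?_⟩
    · simp only; linarith
    · intro q
      rw [Finsupp.tsub_apply]
      by_cases hq : q = p
      · subst hq
        rw [Finsupp.single_eq_same]
        refine ⟨fun _ => h2, ?_⟩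
        rcases Nat.eq_zero_or_pos (f q - (h + f q % h)) with h3 | h3
        · exact Or.inl h3
        · exact Or.inr (Nat.le_of_dvd h3 h2)
      · rw [Finsupp.single_eq_of_ne hq, Nat.sub_zero]
        refine ⟨fun h3 => (hF q).1 (((hc' q).mp h3).resolve_left hq), (hF q).2⟩
    · rw [← hX _ (h + f p % h), e1]; exact hXf
  · rintro ⟨j, f⟩ hx
    rw [Finset.mem_sigma, mem_Qs, Finset.mem_Ico] at hx
    obtain ⟨hj, hL, hF, hXf⟩ := hx
    simp only at hj hL hF hXf ⊢
    rw [mem_Qs, L_add, L_single]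
    refine ⟨by linarith, ?_, ?_, (hX _ _).mpr hXf⟩
    · intro q
      rw [Finsupp.add_apply]
      by_cases hq : q = p
      · subst hq
        rw [Finsupp.single_eq_same]
        exact ⟨fun h3 => absurd h3 hp, Or.inr (by omega)⟩
      · rw [Finsupp.single_eq_of_ne hq, add_zero]
        exact ⟨fun h3 => (hF q).1 ((hc' q).mpr (Or.inr h3)), (hF q).2⟩
    · rw [Finsupp.add_apply, Finsupp.single_eq_same]; omega
  · intro f hf
    rw [mem_Qs] at hf
    obtain ⟨h1, h2⟩ := key f hf.2.1 hf.2.2.1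
    apply tsub_add_cancel_of_le
    rw [Finsupp.single_le_iff]; exact h1
  · rintro ⟨j, f⟩ hx
    rw [Finset.mem_sigma, mem_Qs, Finset.mem_Ico] at hx
    obtain ⟨hj, hL, hF, hXf⟩ := hx
    simp only at hj hL hF hXf
    obtain ⟨k, hk⟩ := (hF p).1 ((hc' p).mpr (Or.inl rfl))
    have e1 : h + (f + Finsupp.single p j) p % h = j := by
      rw [Finsupp.add_apply, Finsupp.single_eq_same, hk, Nat.mul_add_mod, Nat.mod_eq_sub_mod hj.1,
        Nat.mod_eq_of_lt (by omega)]
      omega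
    simp only [e1]
    rw [add_tsub_cancel_right]

end BSys

namespace BSys
variable {P : Type*} (S : BSys P)

def dd (h : ℕ) : ℝ := min S.del (1 / (2 * h + 2))

theorem dd_pos (h : ℕ) : 0 < S.dd h := lt_min S.del_pos (by positivity)

theorem dd_le (h : ℕ) : S.dd h ≤ 1 / 2 := (min_le_left _ _).trans S.del_le

theorem J_bound' (h : ℕ) (s : ℝ) :
    |S.J s - S.kap * Real.exp s| ≤ (S.kap + S.C) * Real.exp ((1 - S.dd h) * s) := by
  have hd := S.dd_pos h
  have hk := S.kap_pos
  have hC := S.C_pos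
  rcases lt_or_ge s 0 with hs | hs
  · rw [S.J_neg hs, zero_sub, abs_neg, abs_of_pos (mul_pos hk (Real.exp_pos _))]
    have : Real.exp s ≤ Real.exp ((1 - S.dd h) * s) := Real.exp_le_exp.mpr (by nlinarith)
    nlinarith [Real.exp_pos ((1 - S.dd h) * s)]
  · have h1 := S.J_bound s
    have h2 : S.dd h ≤ S.del := min_le_left _ _
    have : Real.exp ((1 - S.del) * s) ≤ Real.exp ((1 - S.dd h) * s) := Real.exp_le_exp.mpr (by nlinarith)
    nlinarith [Real.exp_pos ((1 - S.dd h) * s)]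

open scoped Classical in
def gg (h : ℕ) (c : Finset P) (σ : ℝ) (p : P) (k : ℕ) : ℝ :=
  if k = 0 then 1 else if p ∉ c ∧ h < k ∧ k < 2 * h then Real.exp (-σ * (k * S.lam p)) else 0

open scoped Classical in
theorem gg_prod (h : ℕ) (c : Finset P) (σ : ℝ) (b : P →₀ ℕ) :
    b.prod (S.gg h c σ) = if GG h c b then Real.exp (-σ * S.L b) else 0 := by
  split_ifs with hb
  · rw [L, Finsupp.sum, Finset.mul_sum, Real.exp_sum, Finsupp.prod]
    refine Finset.prod_congr rfl fun p hp => ?_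
    have hp' := Finsupp.mem_support_iff.mp hp
    have := (hb p).resolve_left hp'
    rw [gg, if_neg hp', if_pos this]
  · unfold GG at hb
    push Not at hb
    obtain ⟨p, hp, hp2⟩ := hb
    refine Finset.prod_eq_zero (i := p) (Finsupp.mem_support_iff.mpr hp) ?_
    rw [gg, if_neg hp, if_neg]
    rintro ⟨h1, h2, h3⟩
    have := hp2 h1 h2
    omega

def gamS (h : ℕ) (σ : ℝ) (p : P) : ℝ := ∑ k ∈ Finset.Ioo h (2 * h), Real.exp (-σ * (k * S.lam p))

theorem gamS_nonneg (h : ℕ) (σ : ℝ) (p : P) : 0 ≤ S.gamS h σ p := Finset.sum_nonneg fun _ _ => (Real.exp_pos _).le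

theorem gamS_summable {h : ℕ} (hh : 0 < h) {σ : ℝ} (hσ0 : 0 < σ) (hσ : 1 + 1 / (2 * h) ≤ σ * (h + 1)) :
    Summable (S.gamS h σ) := by
  have hτ : (0:ℝ) < 1 / (2 * h) := by positivity
  refine Summable.of_nonneg_of_le (S.gamS_nonneg h σ) (fun p => ?_) ((S.summable_exp hτ).mul_left (h:ℝ))
  unfold gamS
  calc _ ≤ ∑ k ∈ Finset.Ioo h (2 * h), Real.exp (-(1 + 1 / (2 * h)) * S.lam p) := by
        refine Finset.sum_le_sum fun k hk => Real.exp_le_exp.mpr ?_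
        rw [Finset.mem_Ioo] at hk
        have h1 : ((h:ℝ) + 1) ≤ k := by exact_mod_cast hk.1
        have h2 : 1 + 1 / (2 * (h:ℝ)) ≤ σ * k := hσ.trans (by gcongr)
        have := S.lam_pos p
        nlinarith
    _ = ((Finset.Ioo h (2 * h)).card : ℝ) * _ := by rw [Finset.sum_const, nsmul_eq_mul]
    _ ≤ _ := by
        gcongr
        rw [Nat.card_Ioo]; omega

open scoped Classical in
theorem gg_euler {h : ℕ} (hh : 0 < h) (c : Finset P) {σ : ℝ} (hσ0 : 0 < σ) (hσ : 1 + 1 / (2 * h) ≤ σ * (h + 1)) :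
    HasSum (fun b : P →₀ ℕ => b.prod (S.gg h c σ))
      ((∏' p, (1 + S.gamS h σ p)) * ∏ p ∈ c, (1 + S.gamS h σ p)⁻¹) := by
  have hsm := S.gamS_summable hh hσ0 hσ
  have hpos : ∀ p, 0 < 1 + S.gamS h σ p := fun p => by linarith [S.gamS_nonneg h σ p]
  obtain ⟨h1, h2⟩ := euler_prod (S.gg h c σ) (fun p => by simp [gg])
    (fun p k => by unfold gg; split_ifs <;> positivity) (2 * h) (by omega)
    (fun p k hk => by rw [gg, if_neg (by omega), if_neg (by omega)])
    (fun p => if p ∈ c then 0 else S.gamS h σ p)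
    (by
      intro p
      rw [Finset.range_eq_Ico, Finset.sum_eq_sum_Ico_succ_bot (by omega)]
      congr 1
      · by_cases hp : p ∈ c
        · rw [if_pos hp]
          refine Finset.sum_eq_zero fun k hk => ?_
          rw [Finset.mem_Ico] at hk
          rw [gg, if_neg (by omega), if_neg (by tauto)]
        · rw [if_neg hp, gamS]
          symm
          refine Finset.sum_subset_zero_on_sdiff ?_ ?_ ?_
          · intro k hk; rw [Finset.mem_Ioo] at hk; rw [Finset.mem_Ico]; omega
          · intro k hk
            rw [Finset.mem_sdiff, Finset.mem_Ico, Finset.mem_Ioo] at hk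
            rw [gg, if_neg (by omega), if_neg (by tauto)]
          · intro k hk
            rw [Finset.mem_Ioo] at hk
            rw [gg, if_neg (by omega), if_pos ⟨hp, hk⟩])
    (Summable.of_nonneg_of_le (fun p => by split_ifs <;> simp [gamS_nonneg])
      (fun p => by split_ifs <;> simp [gamS_nonneg]) hsm)
  have h3 : HasProd (fun p => if p ∈ c then (1 + S.gamS h σ p)⁻¹ else 1) (∏ p ∈ c, (1 + S.gamS h σ p)⁻¹) := by
    have := hasProd_prod_of_ne_finset_one (L := .unconditional _) (s := c) (f := fun p => if p ∈ c then (1 + S.gamS h σ p)⁻¹ else 1)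
      (fun p hp => if_neg hp)
    rwa [Finset.prod_congr rfl (fun p hp => if_pos hp)] at this
  have h4 := (Real.multipliable_one_add_of_summable hsm).hasProd.mul h3
  have h5 : (fun p => (1 + S.gamS h σ p) * if p ∈ c then (1 + S.gamS h σ p)⁻¹ else 1) =
      fun p => 1 + if p ∈ c then 0 else S.gamS h σ p := by
    ext p
    split_ifs
    · rw [mul_inv_cancel₀ (hpos p).ne', add_zero]
    · rw [mul_one]
  rw [h5] at h4
  rw [h4.tprod_eq] at h1
  exact h1

def Gam (h : ℕ) : ℝ := ∏' p, (1 + S.gamS h (1 / h) p)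

theorem Q_bound {h : ℕ} (hh : 0 < h) : ∃ C' : ℝ, 0 < C' ∧ ∀ (c : Finset P) (T : ℝ),
    |((S.Qs h c (fun _ => True) T).card : ℝ) -
      S.kap * Real.exp (T / h) * (S.Gam h * ∏ p ∈ c, (1 + S.gamS h (1 / h) p)⁻¹)| ≤
      C' * Real.exp ((1 - S.dd h) * (T / h)) := by
  classical
  have hhR : (0:ℝ) < h := by exact_mod_cast hh
  set d := S.dd h with hd
  have hd1 : d ≤ 1 / (2 * h + 2) := min_le_right _ _
  have hd2 := S.dd_le h
  have hσ1 : 1 + 1 / (2 * (h:ℝ)) ≤ 1 / h * (h + 1) := by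
    have e : 1 / (h:ℝ) * (h + 1) = 1 + 1 / (2 * (h:ℝ)) + 1 / (2 * (h:ℝ)) := by field_simp; ring
    have : 0 < 1 / (2 * (h:ℝ)) := by positivity
    linarith
  have hσ2 : 1 + 1 / (2 * (h:ℝ)) ≤ (1 - d) / h * (h + 1) := by
    have e : (1 - 1 / (2 * (h:ℝ) + 2)) / h * (h + 1) = 1 + 1 / (2 * (h:ℝ)) := by field_simp; ring
    rw [← e]
    gcongr
  have hs2 := S.gg_euler hh ∅ (σ := (1 - d) / h) (by apply div_pos _ hhR; linarith) hσ2
  set Z := ∑' b : P →₀ ℕ, b.prod (S.gg h ∅ ((1 - d) / h)) with hZ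
  have hZ0 : 0 ≤ Z := tsum_nonneg fun b => by rw [gg_prod]; split_ifs <;> positivity
  have hKC := S.KC_pos
  refine ⟨(S.kap + S.C) * (Z + 1), by positivity, fun c T => ?_⟩
  have hs1 := S.gg_euler hh c (σ := 1 / h) (by positivity) hσ1
  have hJs : HasSum (fun b : P →₀ ℕ => if GG h c b then S.J ((T - S.L b) / h) else 0)
      ((S.Qs h c (fun _ => True) T).card : ℝ) := by
    rw [S.Q_sum hh]
    have := hasSum_sum_of_ne_finset_zero (L := .unconditional _) (s := (S.FL T).filter (GG h c))
      (f := fun b : P →₀ ℕ => if GG h c b then S.J ((T - S.L b) / h) else 0) (by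
        intro b hb
        split_ifs with h1
        · apply S.J_neg
          rw [Finset.mem_filter, mem_FL] at hb
          have : T < S.L b := by by_contra h2; exact hb ⟨not_lt.mp h2, h1⟩
          apply div_neg_of_neg_of_pos _ hhR; linarith
        · rfl)
    convert this using 1
    refine Finset.sum_congr (by congr) fun b hb => ?_
    rw [Finset.mem_filter] at hb
    rw [if_pos hb.2]
  have h1 := hJs.sub (hs1.mul_left (S.kap * Real.exp (T / h)))
  have hbd : ∀ b : P →₀ ℕ, ‖(if GG h c b then S.J ((T - S.L b) / h) else 0) -
      S.kap * Real.exp (T / h) * b.prod (S.gg h c (1 / h))‖ ≤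
      (S.kap + S.C) * Real.exp ((1 - d) * (T / h)) * b.prod (S.gg h ∅ ((1 - d) / h)) := by
    intro b
    rw [gg_prod, gg_prod]
    by_cases hb : GG h c b
    · have hb2 : GG h ∅ b := by
        intro p
        rcases hb p with h2 | h2
        · exact Or.inl h2
        · exact Or.inr ⟨by simp, h2.2⟩
      rw [if_pos hb, if_pos hb, if_pos hb2, mul_assoc, mul_assoc, ← Real.exp_add, ← Real.exp_add]
      have := S.J_bound' h ((T - S.L b) / h)
      rw [Real.norm_eq_abs]
      rw [← hd] at this
      convert this using 4 <;> ring
    · rw [if_neg hb, if_neg hb]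
      simp only [mul_zero, sub_zero, norm_zero]
      split_ifs <;> positivity
  have h2 := tsum_of_norm_bounded (hs2.mul_left _) hbd
  rw [h1.tsum_eq, ← hs2.tsum_eq, ← hZ, Real.norm_eq_abs] at h2
  refine h2.trans ?_
  have := Real.exp_pos ((1 - d) * (T / h))
  nlinarith [mul_pos hKC this]

end BSys

namespace BSys
variable {P : Type*} (S : BSys P)

def uu (h : ℕ) (p : P) : ℝ := Real.exp (-(S.lam p / h))

def rho (h : ℕ) (p : P) : ℝ := Real.exp (-S.lam p) / (1 - S.uu h p + Real.exp (-S.lam p))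

theorem uu_pos (h : ℕ) (p : P) : 0 < S.uu h p := Real.exp_pos _

theorem uu_le {h : ℕ} (hh : 0 < h) (p : P) : S.uu h p ≤ Real.exp (-(1 / (2 * h))) := by
  have hhR : (0:ℝ) < h := by exact_mod_cast hh
  apply Real.exp_le_exp.mpr
  have : 1 / (2 * (h:ℝ)) = (1/2) / h := by field_simp
  rw [this]
  apply neg_le_neg
  gcongr
  exact (S.lam_gt p).le

theorem uu_lt {h : ℕ} (hh : 0 < h) (p : P) : S.uu h p < 1 := by
  refine (S.uu_le hh p).trans_lt (Real.exp_lt_one_iff.mpr ?_)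
  have hhR : (0:ℝ) < h := by exact_mod_cast hh
  have : 0 < 1 / (2 * (h:ℝ)) := by positivity
  linarith

theorem uu_pow {h : ℕ} (hh : 0 < h) (p : P) : S.uu h p ^ h = Real.exp (-S.lam p) := by
  have hhR : (h:ℝ) ≠ 0 := by exact_mod_cast hh.ne'
  rw [uu, ← Real.exp_nat_mul]; congr 1; field_simp

theorem exp_eq_uu {h : ℕ} (p : P) (j : ℕ) : Real.exp (-(1 / (h:ℝ)) * (j * S.lam p)) = S.uu h p ^ j := by
  rw [uu, ← Real.exp_nat_mul]; congr 1; ring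

theorem rho_nonneg {h : ℕ} (hh : 0 < h) (p : P) : 0 ≤ S.rho h p := by
  have := S.uu_lt hh p
  have h2 := Real.exp_pos (-S.lam p)
  exact div_nonneg h2.le (by linarith)

theorem rho_eq {h : ℕ} (hh : 0 < h) (p : P) :
    (∑ j ∈ Finset.Ico h (2 * h), Real.exp (-(1 / (h:ℝ)) * (j * S.lam p))) * (1 + S.gamS h (1 / h) p)⁻¹ = S.rho h p := by
  unfold gamS rho
  simp only [exp_eq_uu]
  rw [← S.uu_pow hh]
  have h1 := S.uu_lt hh p
  have h0 := S.uu_pos h p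
  set u := S.uu h p
  have e1 : (∑ j ∈ Finset.Ico h (2 * h), u ^ j) * (1 - u) = u ^ h * (1 - u ^ h) := by
    have := geom_sum_Ico_mul_neg u (by omega : h ≤ 2 * h)
    rw [this, two_mul, pow_add]; ring
  have e2 : (∑ k ∈ Finset.Ioo h (2 * h), u ^ k) = (∑ j ∈ Finset.Ico h (2 * h), u ^ j) - u ^ h := by
    rw [Finset.sum_eq_sum_Ico_succ_bot (by omega : h < 2 * h)]
    have : Finset.Ico (h + 1) (2 * h) = Finset.Ioo h (2 * h) := by
      ext; simp [Finset.mem_Ico, Finset.mem_Ioo]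
    rw [this]; ring
  have e3 : 0 ≤ ∑ k ∈ Finset.Ioo h (2 * h), u ^ k := Finset.sum_nonneg fun _ _ => by positivity
  rw [e2] at e3 ⊢
  set A := ∑ j ∈ Finset.Ico h (2 * h), u ^ j
  have hA : A = u ^ h * (1 - u ^ h) / (1 - u) := by rw [eq_div_iff (by linarith), e1]
  have h3 : 0 < u ^ h := by positivity
  rw [← div_eq_mul_inv, div_eq_div_iff (by linarith) (by linarith)]
  have h4 : 1 - u ≠ 0 := by linarith
  rw [hA]
  field_simp
  ring

theorem N1_bound {h : ℕ} (hh : 0 < h) {C' : ℝ} (hC' : 0 < C')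
    (hQ : ∀ (c : Finset P) (T : ℝ), |((S.Qs h c (fun _ => True) T).card : ℝ) -
      S.kap * Real.exp (T / h) * (S.Gam h * ∏ p ∈ c, (1 + S.gamS h (1 / h) p)⁻¹)| ≤
      C' * Real.exp ((1 - S.dd h) * (T / h))) (p : P) (T : ℝ) :
    |((S.Qs h ∅ (fun f => f p ≠ 0 ∧ True) T).card : ℝ) - S.kap * Real.exp (T / h) * (S.Gam h * S.rho h p)| ≤
      C' * h * Real.exp ((1 - S.dd h) * (T / h - S.lam p)) := by
  have hhR : (0:ℝ) < h := by exact_mod_cast hh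
  have hd := S.dd_le h
  rw [S.Q_step hh ∅ (p := p) (by simp) (fun _ => True) (by simp) {p} (by simp)]
  rw [← S.rho_eq hh]
  push_cast
  rw [Finset.sum_mul, Finset.mul_sum, Finset.mul_sum, ← Finset.sum_sub_distrib]
  refine (Finset.abs_sum_le_sum_abs _ _).trans ?_
  calc _ ≤ ∑ j ∈ Finset.Ico h (2 * h), C' * Real.exp ((1 - S.dd h) * (T / h - S.lam p)) := by
        refine Finset.sum_le_sum fun j hj => ?_
        have h1 := hQ {p} (T - j * S.lam p)
        rw [Finset.prod_singleton] at h1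
        have h2 : S.kap * Real.exp ((T - j * S.lam p) / h) * (S.Gam h * (1 + S.gamS h (1 / h) p)⁻¹) =
          S.kap * Real.exp (T / h) * (S.Gam h * (Real.exp (-(1 / (h:ℝ)) * (j * S.lam p)) * (1 + S.gamS h (1 / h) p)⁻¹)) := by
          have : (T - j * S.lam p) / h = T / h + (-(1 / (h:ℝ)) * (j * S.lam p)) := by ring
          rw [this, Real.exp_add]; ring
        rw [← h2]
        refine h1.trans ?_
        gcongr
        · linarith
        · rw [sub_div]
          apply sub_le_sub_left
          rw [Finset.mem_Ico] at hj
          have : (h:ℝ) ≤ j := by exact_mod_cast hj.1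
          rw [le_div_iff₀ hhR, mul_comm]
          exact mul_le_mul_of_nonneg_right this (S.lam_pos p).le
    _ = _ := by
        rw [Finset.sum_const, Nat.card_Ico, nsmul_eq_mul]
        have : 2 * h - h = h := by omega
        rw [this]; ring

theorem N2_bound {h : ℕ} (hh : 0 < h) {C' : ℝ} (hC' : 0 < C')
    (hQ : ∀ (c : Finset P) (T : ℝ), |((S.Qs h c (fun _ => True) T).card : ℝ) -
      S.kap * Real.exp (T / h) * (S.Gam h * ∏ p ∈ c, (1 + S.gamS h (1 / h) p)⁻¹)| ≤
      C' * Real.exp ((1 - S.dd h) * (T / h))) {p q : P} (hpq : p ≠ q) (T : ℝ) :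
    |((S.Qs h ∅ (fun f => f p ≠ 0 ∧ f q ≠ 0 ∧ True) T).card : ℝ) -
        S.kap * Real.exp (T / h) * (S.Gam h * (S.rho h p * S.rho h q))| ≤
      C' * h ^ 2 * Real.exp ((1 - S.dd h) * (T / h - (S.lam p + S.lam q))) := by
  classical
  have hhR : (0:ℝ) < h := by exact_mod_cast hh
  have hd := S.dd_le h
  rw [S.Q_step hh ∅ (p := p) (by simp) (fun f => f q ≠ 0 ∧ True)
    (by intro f j; rw [Finsupp.add_apply, Finsupp.single_eq_of_ne hpq.symm, add_zero]) {p} (by simp)]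
  have e : ∀ T, (S.Qs h {p} (fun f => f q ≠ 0 ∧ True) T).card = _ := fun T =>
    S.Q_step hh {p} (p := q) (by simpa using hpq.symm) (fun f => True) (by simp) {q, p} (by simp) T
  simp only [e]
  rw [← S.rho_eq hh, ← S.rho_eq hh]
  push_cast
  rw [mul_mul_mul_comm (∑ j ∈ Finset.Ico h (2 * h), Real.exp (-(1 / (h:ℝ)) * (j * S.lam p))), Finset.sum_mul_sum, Finset.sum_mul, Finset.mul_sum, Finset.mul_sum, ← Finset.sum_sub_distrib]
  refine (Finset.abs_sum_le_sum_abs _ _).trans ?_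
  calc _ ≤ ∑ j ∈ Finset.Ico h (2 * h), ∑ k ∈ Finset.Ico h (2 * h),
        C' * Real.exp ((1 - S.dd h) * (T / h - (S.lam p + S.lam q))) := by
        refine Finset.sum_le_sum fun j hj => ?_
        rw [Finset.sum_mul, Finset.mul_sum, Finset.mul_sum, ← Finset.sum_sub_distrib]
        refine (Finset.abs_sum_le_sum_abs _ _).trans (Finset.sum_le_sum fun k hk => ?_)
        have h1 := hQ {q, p} (T - j * S.lam p - k * S.lam q)
        rw [Finset.prod_pair hpq.symm] at h1
        have h2 : S.kap * Real.exp ((T - j * S.lam p - k * S.lam q) / h) *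
            (S.Gam h * ((1 + S.gamS h (1 / h) q)⁻¹ * (1 + S.gamS h (1 / h) p)⁻¹)) =
          S.kap * Real.exp (T / h) * (S.Gam h * (Real.exp (-(1 / (h:ℝ)) * (j * S.lam p)) *
            Real.exp (-(1 / (h:ℝ)) * (k * S.lam q)) *
            ((1 + S.gamS h (1 / h) p)⁻¹ * (1 + S.gamS h (1 / h) q)⁻¹))) := by
          have : (T - j * S.lam p - k * S.lam q) / h =
            T / h + (-(1 / (h:ℝ)) * (j * S.lam p)) + (-(1 / (h:ℝ)) * (k * S.lam q)) := by ring
          rw [this, Real.exp_add, Real.exp_add]; ring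
        rw [← h2]
        refine h1.trans ?_
        gcongr
        · linarith
        · rw [Finset.mem_Ico] at hj hk
          have hj1 : (h:ℝ) ≤ j := by exact_mod_cast hj.1
          have hk1 : (h:ℝ) ≤ k := by exact_mod_cast hk.1
          rw [sub_sub, sub_div]
          apply sub_le_sub_left
          rw [le_div_iff₀ hhR]
          nlinarith [S.lam_pos p, S.lam_pos q]
    _ = _ := by
        simp only [Finset.sum_const, Nat.card_Ico, nsmul_eq_mul]
        have : 2 * h - h = h := by omega
        rw [this]; ring

open scoped Classical in
theorem omega_sq {h : ℕ} (hh : 0 < h) (s : ℝ) :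
    ∑ f ∈ S.Qs h ∅ (fun _ => True) (h * s), (f.support.card : ℝ) ^ 2 =
      ∑ p ∈ S.PS s, ((S.Qs h ∅ (fun f => f p ≠ 0 ∧ True) (h * s)).card : ℝ) +
      ∑ x ∈ (S.PP s).filter (fun x : P × P => x.1 ≠ x.2),
        ((S.Qs h ∅ (fun f => f x.1 ≠ 0 ∧ f x.2 ≠ 0 ∧ True) (h * s)).card : ℝ) := by
  have hhR : (0:ℝ) < h := by exact_mod_cast hh
  have hcard : ∀ X : (P →₀ ℕ) → Prop, ((S.Qs h ∅ X (h * s)).card : ℝ) =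
      ∑ f ∈ S.Qs h ∅ (fun _ => True) (h * s), if X f then 1 else 0 := by
    intro X
    rw [Finset.sum_boole]
    congr 2
    ext f; simp [mem_Qs, Finset.mem_filter, and_assoc]
  simp only [hcard]
  rw [Finset.sum_comm]
  rw [Finset.sum_comm (s := (S.PP s).filter fun x => x.1 ≠ x.2), ← Finset.sum_add_distrib]
  refine Finset.sum_congr rfl fun f hf => ?_
  rw [mem_Qs] at hf
  have hge : ∀ p, f p ≠ 0 → (h:ℝ) ≤ f p := fun p hp => by exact_mod_cast (hf.2.1 p).2.resolve_left hp
  have h1 : (S.PS s).filter (fun p => f p ≠ 0) = f.support := by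
    ext p
    rw [Finset.mem_filter, mem_PS, Finsupp.mem_support_iff, and_iff_right_iff_imp]
    intro hp
    have := S.coord_le (f := f) p
    have h2 := hge p hp
    have h3 := S.lam_pos p
    have : h * S.lam p ≤ h * s := by nlinarith [hf.1]
    exact le_of_mul_le_mul_left this hhR
  have h2 : ((S.PP s).filter fun x => x.1 ≠ x.2).filter (fun x => f x.1 ≠ 0 ∧ f x.2 ≠ 0 ∧ True) = f.support.offDiag := by
    ext x
    simp only [Finset.mem_filter, mem_PP, Finset.mem_offDiag, Finsupp.mem_support_iff, and_true]
    constructor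
    · rintro ⟨⟨h1, h2⟩, h3, h4⟩; exact ⟨h3, h4, h2⟩
    · rintro ⟨h3, h4, h2⟩
      refine ⟨⟨?_, h2⟩, h3, h4⟩
      have h5 : (f x.1 : ℝ) * S.lam x.1 + f x.2 * S.lam x.2 ≤ S.L f := by
        have : ∑ p ∈ ({x.1, x.2} : Finset P), (f p : ℝ) * S.lam p ≤ S.L f := by
          unfold L Finsupp.sum
          refine Finset.sum_le_sum_of_subset_of_nonneg ?_ fun p _ _ => mul_nonneg (Nat.cast_nonneg _) (S.lam_pos p).le
          intro p hp
          rw [Finset.mem_insert, Finset.mem_singleton] at hp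
          rcases hp with rfl | rfl <;> simpa
        rwa [Finset.sum_pair h2] at this
      have h6 := hge _ h3
      have h7 := hge _ h4
      have h8 := S.lam_pos x.1
      have h9 := S.lam_pos x.2
      have : h * (S.lam x.1 + S.lam x.2) ≤ h * s := by nlinarith [hf.1]
      exact le_of_mul_le_mul_left this hhR
  have a1 : (∑ x ∈ S.PS s, if (f x ≠ 0 ∧ True) then (1:ℝ) else 0) = f.support.card := by
    rw [← h1, ← Finset.sum_boole]; simp only [and_true]
  have a2 : (∑ x ∈ (S.PP s).filter (fun x : P × P => x.1 ≠ x.2),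
      if (f x.1 ≠ 0 ∧ f x.2 ≠ 0 ∧ True) then (1:ℝ) else 0) = f.support.offDiag.card := by
    rw [← h2, ← Finset.sum_boole]
  have : (f.support.card : ℝ) ^ 2 = f.support.card + f.support.offDiag.card := by
    rw [Finset.offDiag_card]
    have : f.support.card ≤ f.support.card * f.support.card := Nat.le_mul_self _
    rw [Nat.cast_sub this]; push_cast; ring
  rw [this, ← a1, ← a2]
  congr!

end BSys

namespace BSys
variable {P : Type*} (S : BSys P)

theorem tail_bound {x : P → ℝ} {c τ : ℝ} (hc : 0 ≤ c) (hτ : 0 < τ)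
    (hx : ∀ p, |x p| ≤ c * Real.exp (-(1 + τ) * S.lam p)) :
    Summable x ∧ ∃ C : ℝ, 0 < C ∧ ∀ s : ℝ, 0 < s → |S.R1 x s - ∑' p, x p| ≤ C / s := by
  classical
  have hsx : Summable x := Summable.of_norm_bounded ((S.summable_exp hτ).mul_left c) hx
  refine ⟨hsx, ?_⟩
  have hsum := S.summable_exp (half_pos hτ)
  set Z := ∑' p, Real.exp (-(1 + τ / 2) * S.lam p) with hZ
  have hZ0 : 0 ≤ Z := tsum_nonneg fun p => (Real.exp_pos _).le
  refine ⟨c * Z * (2 / τ) + 1, by positivity, fun s hs => ?_⟩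
  have h1 : HasSum (fun p => if p ∈ S.PS s then x p else 0) (S.R1 x s) := by
    have := hasSum_sum_of_ne_finset_zero (L := .unconditional _) (s := S.PS s)
      (f := fun p => if p ∈ S.PS s then x p else 0) (fun p hp => if_neg hp)
    convert this using 1
    exact Finset.sum_congr rfl fun p hp => (if_pos hp).symm
  have h2 := h1.sub hsx.hasSum
  have h3 := tsum_of_norm_bounded (hsum.hasSum.mul_left (c * Real.exp (-(τ / 2 * s))))
    (f := fun p => (if p ∈ S.PS s then x p else 0) - x p) (fun p => by
      split_ifs with hp
      · simp only [sub_self, norm_zero]; positivity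
      · rw [zero_sub, norm_neg, Real.norm_eq_abs, mul_assoc, ← Real.exp_add]
        refine (hx p).trans ?_
        gcongr
        rw [mem_PS, not_le] at hp
        nlinarith)
  rw [h2.tsum_eq, Real.norm_eq_abs, ← hZ] at h3
  refine h3.trans ?_
  have h4 : Real.exp (-(τ / 2 * s)) ≤ (2 / τ) / s := by
    have hy : 0 < τ / 2 * s := by positivity
    rw [Real.exp_neg]
    have : (2 / τ) / s = (τ / 2 * s)⁻¹ := by field_simp
    rw [this]
    apply inv_anti₀ hy
    linarith [Real.add_one_le_exp (τ / 2 * s)]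
  calc c * Real.exp (-(τ / 2 * s)) * Z ≤ c * ((2 / τ) / s) * Z := by gcongr
    _ = c * Z * (2 / τ) / s := by ring
    _ ≤ _ := by gcongr; linarith

theorem rho_le {h : ℕ} (hh : 0 < h) (p : P) :
    S.rho h p ≤ 1 / (1 - Real.exp (-(1 / (2 * h)))) * Real.exp (-S.lam p) := by
  have h1 := S.uu_le hh p
  have hhR : (0:ℝ) < h := by exact_mod_cast hh
  have h2 : Real.exp (-(1 / (2 * (h:ℝ)))) < 1 := Real.exp_lt_one_iff.mpr (by
    have : 0 < 1 / (2 * (h:ℝ)) := by positivity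
    linarith)
  have h3 := Real.exp_pos (-S.lam p)
  unfold rho
  rw [div_mul_eq_mul_div, one_mul]
  gcongr
  · linarith

theorem rho_sub {h : ℕ} (hh : 0 < h) (p : P) :
    S.rho h p = Real.exp (-S.lam p) + S.rho h p * S.uu h p - S.rho h p * Real.exp (-S.lam p) := by
  have h1 := S.uu_lt hh p
  have h3 := Real.exp_pos (-S.lam p)
  have : S.rho h p * (1 - S.uu h p + Real.exp (-S.lam p)) = Real.exp (-S.lam p) :=
    div_mul_cancel₀ _ (by linarith)
  linarith

/-- the constant M -/
def MM (h : ℕ) (A : ℝ) : ℝ := A + ∑' p, S.rho h p * S.uu h p - ∑' p, S.rho h p * Real.exp (-S.lam p)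

theorem small_le {h : ℕ} (hh : 2 ≤ h) (p : P) : Real.exp (-S.lam p) ≤ S.uu h p := by
  have hhR : (1:ℝ) ≤ h := by exact_mod_cast (by omega : 1 ≤ h)
  apply Real.exp_le_exp.mpr
  apply neg_le_neg
  exact div_le_self (S.lam_pos p).le hhR

theorem rho_uu {h : ℕ} (hh : 2 ≤ h) (p : P) {y : ℝ} (hy0 : 0 ≤ y) (hy : y ≤ S.uu h p) :
    |S.rho h p * y| ≤ 1 / (1 - Real.exp (-(1 / (2 * h)))) * Real.exp (-(1 + 1 / (h:ℝ)) * S.lam p) := by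
  have hh0 : 0 < h := by omega
  have h1 := S.rho_nonneg hh0 p
  rw [abs_of_nonneg (by positivity)]
  have h2 : Real.exp (-(1 + 1 / (h:ℝ)) * S.lam p) = Real.exp (-S.lam p) * S.uu h p := by
    rw [uu, ← Real.exp_add]; congr 1; ring
  rw [h2, ← mul_assoc]
  exact mul_le_mul (S.rho_le hh0 p) hy hy0 (h1.trans (S.rho_le hh0 p))

theorem cpos {h : ℕ} (hh : 0 < h) : 0 < 1 / (1 - Real.exp (-(1 / (2 * (h:ℝ))))) := by
  have hhR : (0:ℝ) < h := by exact_mod_cast hh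
  have h2 : Real.exp (-(1 / (2 * (h:ℝ)))) < 1 := Real.exp_lt_one_iff.mpr (by
    have : 0 < 1 / (2 * (h:ℝ)) := by positivity
    linarith)
  exact one_div_pos.mpr (by linarith)

theorem R1_rho {h : ℕ} (hh : 2 ≤ h) {A C : ℝ} (hC : 0 < C)
    (hW : ∀ s : ℝ, 1 / 2 ≤ s → |S.R1 (fun p => Real.exp (-S.lam p)) s - (Real.log s + A)| ≤ C / s) :
    ∃ C2 : ℝ, 0 < C2 ∧ ∀ s : ℝ, 1 / 2 ≤ s → |S.R1 (S.rho h) s - (Real.log s + S.MM h A)| ≤ C2 / s := by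
  have hh0 : 0 < h := by omega
  have hhR : (0:ℝ) < h := by exact_mod_cast hh0
  have hτ : 0 < 1 / (h:ℝ) := by positivity
  obtain ⟨-, C1, hC1, h1⟩ := S.tail_bound (cpos hh0).le hτ
    (fun p => S.rho_uu hh p (S.uu_pos h p).le le_rfl)
  obtain ⟨-, C2, hC2, h2⟩ := S.tail_bound (cpos hh0).le hτ
    (fun p => S.rho_uu hh p (Real.exp_pos _).le (S.small_le hh p))
  refine ⟨C + C1 + C2, by positivity, fun s hs => ?_⟩
  have hs0 : 0 < s := by linarith
  have e : S.R1 (S.rho h) s = S.R1 (fun p => Real.exp (-S.lam p)) s +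
      S.R1 (fun p => S.rho h p * S.uu h p) s - S.R1 (fun p => S.rho h p * Real.exp (-S.lam p)) s := by
    unfold R1
    rw [← Finset.sum_add_distrib, ← Finset.sum_sub_distrib]
    exact Finset.sum_congr rfl fun p _ => S.rho_sub hh0 p
  have a0 := abs_le.mp (hW s hs)
  have a1 := abs_le.mp (h1 s hs0)
  have a2 := abs_le.mp (h2 s hs0)
  rw [e, MM, add_div, add_div, abs_le]
  constructor <;> linarith [a0.1, a0.2, a1.1, a1.2, a2.1, a2.2]

theorem rho_sq_le {h : ℕ} (hh : 2 ≤ h) (p : P) :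
    |S.rho h p ^ 2| ≤ (1 / (1 - Real.exp (-(1 / (2 * h))))) ^ 2 * Real.exp (-(1 + 1 / (h:ℝ)) * S.lam p) := by
  have hh0 : 0 < h := by omega
  have h0 := S.rho_nonneg hh0 p
  rw [abs_of_nonneg (by positivity)]
  have h2 : Real.exp (-(1 + 1 / (h:ℝ)) * S.lam p) = Real.exp (-S.lam p) * S.uu h p := by
    rw [uu, ← Real.exp_add]; congr 1; ring
  have hc := cpos hh0
  set c := 1 / (1 - Real.exp (-(1 / (2 * (h:ℝ))))) with hcdef
  have h3 := S.small_le hh p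
  have h4 := Real.exp_pos (-S.lam p)
  calc S.rho h p ^ 2 ≤ (c * Real.exp (-S.lam p)) ^ 2 := by gcongr; exact S.rho_le hh0 p
    _ = c ^ 2 * (Real.exp (-S.lam p) * Real.exp (-S.lam p)) := by ring
    _ ≤ _ := by rw [h2]; gcongr

theorem R1_sq {h : ℕ} (hh : 2 ≤ h) :
    ∃ C2 : ℝ, 0 < C2 ∧ ∀ s : ℝ, 0 < s → |S.R1 (fun p => S.rho h p ^ 2) s - ∑' p, S.rho h p ^ 2| ≤ C2 / s := by
  have hh0 : 0 < h := by omega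
  have hhR : (0:ℝ) < h := by exact_mod_cast hh0
  exact (S.tail_bound (by have := cpos hh0; positivity) (by positivity : 0 < 1 / (h:ℝ)) (fun p => S.rho_sq_le hh p)).2

open scoped Classical in
theorem pair_off (ρ : P → ℝ) (s : ℝ) :
    ∑ x ∈ (S.PP s).filter (fun x : P × P => x.1 ≠ x.2), ρ x.1 * ρ x.2 =
      S.R2 ρ s - S.R1 (fun p => ρ p ^ 2) (s / 2) := by
  rw [R2_eq, ← Finset.sum_filter_add_sum_filter_not (S.PP s) (fun x : P × P => x.1 ≠ x.2)]
  have : ∑ x ∈ (S.PP s).filter (fun x : P × P => ¬ (x.1 ≠ x.2)), ρ x.1 * ρ x.2 =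
      S.R1 (fun p => ρ p ^ 2) (s / 2) := by
    unfold R1
    refine Finset.sum_nbij' (fun x => x.1) (fun p => (p, p)) ?_ ?_ ?_ ?_ ?_
    · intro x hx
      simp only [Finset.mem_filter, mem_PP, not_not] at hx
      rw [mem_PS]; have := hx.1; rw [← hx.2] at this; linarith
    · intro p hp
      rw [mem_PS] at hp
      simp only [Finset.mem_filter, mem_PP, not_not, and_true]; linarith
    · intro x hx
      simp only [Finset.mem_filter, mem_PP, not_not] at hx
      exact Prod.ext rfl hx.2
    · intro p _; rfl
    · intro x hx
      simp only [Finset.mem_filter, mem_PP, not_not] at hx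
      rw [← hx.2]; ring
  rw [this]; ring

theorem abstract_main {h : ℕ} (hh : 2 ≤ h) {A : ℝ}
    (hA : Tendsto (fun s => S.R1 (fun p => Real.exp (-S.lam p)) s - Real.log s) atTop (𝓝 A)) :
    ∃ C : ℝ, 0 < C ∧ ∀ s : ℝ, 2 ≤ s →
      |∑ f ∈ S.Qs h ∅ (fun _ => True) (h * s), (f.support.card : ℝ) ^ 2 -
        S.kap * S.Gam h * Real.exp s * ((Real.log s + S.MM h A) ^ 2 - Real.pi ^ 2 / 6 +
          (Real.log s + S.MM h A) - ∑' p, S.rho h p ^ 2)| ≤ C * (Real.exp s * (Real.log s / s)) := by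
  classical
  have hh0 : 0 < h := by omega
  have hhR : (0:ℝ) < h := by exact_mod_cast hh0
  obtain ⟨CW, hCW, hW⟩ := S.mertensW hA
  obtain ⟨C1, hC1, h1⟩ := S.R1_rho hh hCW hW
  obtain ⟨C2, hC2, h2⟩ := S.R2_asymp hC1 (S.rho_nonneg hh0) h1
  obtain ⟨C3, hC3, h3⟩ := S.R1_sq hh
  obtain ⟨C4, hC4, h4⟩ := S.err_single hCW hW (S.dd_pos h)
  obtain ⟨C5, hC5, h5⟩ := S.err_pair hCW hW (S.dd_pos h)
  obtain ⟨C', hC', hQ⟩ := S.Q_bound hh0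
  have hk := S.kap_pos
  refine ⟨S.kap * |S.Gam h| * (2 * C1 + C2 + 4 * C3) + C' * h * C4 + C' * h ^ 2 * C5, by positivity,
    fun s hs => ?_⟩
  have hs0 : 0 < s := by linarith
  have hTs : (h * s) / h = s := by field_simp
  rw [S.omega_sq hh0 s]
  set E := Real.exp s with hE
  have hE0 : 0 < E := Real.exp_pos s
  set l := Real.log s / s with hl
  have hl1 : 1 / s ≤ 2 * l := by
    rw [hl, ← mul_div_assoc]
    gcongr
    have := Real.log_le_log (by norm_num) hs
    linarith [Real.log_two_gt_d9]
  have b1 : |∑ p ∈ S.PS s, ((S.Qs h ∅ (fun f => f p ≠ 0 ∧ True) (h * s)).card : ℝ) -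
      S.kap * E * S.Gam h * S.R1 (S.rho h) s| ≤ C' * h * C4 * (E * l) := by
    unfold R1
    rw [Finset.mul_sum, ← Finset.sum_sub_distrib]
    calc _ ≤ ∑ p ∈ S.PS s, C' * h * E * (Real.exp (-S.lam p) * Real.exp (-(S.dd h) * (s - S.lam p))) := by
          refine (Finset.abs_sum_le_sum_abs _ _).trans (Finset.sum_le_sum fun p _ => ?_)
          have := S.N1_bound hh0 hC' hQ p (h * s)
          rw [hTs, ← hE] at this
          have e : S.kap * E * S.Gam h * S.rho h p = S.kap * E * (S.Gam h * S.rho h p) := by ring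
          rw [e]
          refine this.trans (le_of_eq ?_)
          rw [mul_assoc (C' * h), hE, ← Real.exp_add, ← Real.exp_add]
          congr 2; ring
      _ = C' * h * E * ∑ p ∈ S.PS s, (Real.exp (-S.lam p) * Real.exp (-(S.dd h) * (s - S.lam p))) := by
          rw [Finset.mul_sum]
      _ ≤ C' * h * E * (C4 * l) := by gcongr; exact h4 s hs
      _ = _ := by ring
  have b2 : |∑ x ∈ (S.PP s).filter (fun x : P × P => x.1 ≠ x.2),
        ((S.Qs h ∅ (fun f => f x.1 ≠ 0 ∧ f x.2 ≠ 0 ∧ True) (h * s)).card : ℝ) -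
      S.kap * E * S.Gam h * (S.R2 (S.rho h) s - S.R1 (fun p => S.rho h p ^ 2) (s / 2))| ≤
        C' * h ^ 2 * C5 * (E * l) := by
    have e0 := S.pair_off (S.rho h) s
    have e1 : ∑ x ∈ (S.PP s).filter (fun x : P × P => x.1 ≠ x.2), S.rho h x.1 * S.rho h x.2 =
      S.R2 (S.rho h) s - S.R1 (fun p => S.rho h p ^ 2) (s / 2) := by
      rw [← e0]
    rw [← e1, Finset.mul_sum, ← Finset.sum_sub_distrib]
    calc _ ≤ ∑ x ∈ (S.PP s).filter (fun x : P × P => x.1 ≠ x.2), C' * h ^ 2 * E * (Real.exp (-S.lam x.1) *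
            Real.exp (-S.lam x.2) * Real.exp (-(S.dd h) * (s - (S.lam x.1 + S.lam x.2)))) := by
          refine (Finset.abs_sum_le_sum_abs _ _).trans (Finset.sum_le_sum fun x hx => ?_)
          have := S.N2_bound hh0 hC' hQ (Finset.mem_filter.mp hx).2 (h * s)
          rw [hTs, ← hE] at this
          have e : S.kap * E * S.Gam h * (S.rho h x.1 * S.rho h x.2) =
            S.kap * E * (S.Gam h * (S.rho h x.1 * S.rho h x.2)) := by ring
          rw [e]
          refine this.trans (le_of_eq ?_)
          rw [mul_assoc (C' * h ^ 2), hE, ← Real.exp_add, ← Real.exp_add, ← Real.exp_add]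
          congr 2; ring
      _ ≤ ∑ x ∈ S.PP s, C' * h ^ 2 * E * (Real.exp (-S.lam x.1) *
            Real.exp (-S.lam x.2) * Real.exp (-(S.dd h) * (s - (S.lam x.1 + S.lam x.2)))) :=
          Finset.sum_le_sum_of_subset_of_nonneg (Finset.filter_subset _ _) fun _ _ _ => by positivity
      _ = C' * h ^ 2 * E * ∑ x ∈ S.PP s, (Real.exp (-S.lam x.1) *
            Real.exp (-S.lam x.2) * Real.exp (-(S.dd h) * (s - (S.lam x.1 + S.lam x.2)))) := by
          rw [Finset.mul_sum]
      _ ≤ C' * h ^ 2 * E * (C5 * l) := by gcongr; exact h5 s hs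
      _ = _ := by ring
  have b3 : |(S.R1 (S.rho h) s + (S.R2 (S.rho h) s - S.R1 (fun p => S.rho h p ^ 2) (s / 2))) -
      ((Real.log s + S.MM h A) ^ 2 - Real.pi ^ 2 / 6 +
          (Real.log s + S.MM h A) - ∑' p, S.rho h p ^ 2)| ≤ (2 * C1 + C2 + 4 * C3) * l := by
    have a1 := abs_le.mp (h1 s (by linarith))
    have a2 := abs_le.mp (h2 s hs)
    have a3 := abs_le.mp (h3 (s / 2) (by linarith))
    have c1 : C1 / s ≤ 2 * C1 * l := by
      calc C1 / s = C1 * (1 / s) := by ring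
        _ ≤ C1 * (2 * l) := by gcongr
        _ = _ := by ring
    have c3 : C3 / (s / 2) ≤ 4 * C3 * l := by
      calc C3 / (s / 2) = 2 * C3 * (1 / s) := by field_simp
        _ ≤ 2 * C3 * (2 * l) := by gcongr
        _ = _ := by ring
    rw [← hl] at a2
    rw [abs_le, add_mul, add_mul]
    constructor <;> linarith [a1.1, a1.2, a2.1, a2.2, a3.1, a3.2]
  have b4 : |S.kap * E * S.Gam h * ((S.R1 (S.rho h) s + (S.R2 (S.rho h) s - S.R1 (fun p => S.rho h p ^ 2) (s / 2))) -
      ((Real.log s + S.MM h A) ^ 2 - Real.pi ^ 2 / 6 +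
          (Real.log s + S.MM h A) - ∑' p, S.rho h p ^ 2))| ≤
      S.kap * |S.Gam h| * (2 * C1 + C2 + 4 * C3) * (E * l) := by
    rw [abs_mul, abs_mul, abs_mul, abs_of_pos hk, abs_of_pos hE0]
    calc _ ≤ S.kap * E * |S.Gam h| * ((2 * C1 + C2 + 4 * C3) * l) := by gcongr
      _ = _ := by ring
  rw [add_mul, add_mul]
  refine le_trans (le_of_eq ?_) ((abs_add_three _ _ _).trans (add_le_add (add_le_add b4 b1) b2))
  congr 1
  ring

end BSys

section KK
variable (K : Type*) [Field K] [NumberField K]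
open UniqueFactorizationMonoid

abbrev PK := {p : Ideal (𝓞 K) // p.IsPrime ∧ p ≠ ⊥}

variable {K}

def toI (f : PK K →₀ ℕ) : Ideal (𝓞 K) := f.prod fun p k => p.1 ^ k

theorem toI_eq (f : PK K →₀ ℕ) : toI f = ((Finsupp.toMultiset f).map Subtype.val).prod := by
  rw [toI, Finsupp.toMultiset_map, Finsupp.prod_toMultiset, Finsupp.prod_mapDomain_index]
  · intro; simp
  · intros; rw [pow_add]

theorem PK_prime (p : PK K) : Prime p.1 := Ideal.prime_of_isPrime p.2.2 p.2.1

theorem nf_toI (f : PK K →₀ ℕ) : normalizedFactors (toI f) = (Finsupp.toMultiset f).map Subtype.val := by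
  rw [toI_eq]
  apply normalizedFactors_prod_of_prime
  intro p hp
  rw [Multiset.mem_map] at hp
  obtain ⟨q, -, rfl⟩ := hp
  exact PK_prime q

theorem toI_ne (f : PK K →₀ ℕ) : toI f ≠ ⊥ := by
  have : ∏ p ∈ f.support, p.1 ^ f p ≠ (0 : Ideal (𝓞 K)) := by
    rw [Finset.prod_ne_zero_iff]
    intro p _
    exact pow_ne_zero _ (PK_prime p).ne_zero
  exact this

theorem toI_inj : Function.Injective (toI (K := K)) := by
  intro f g hfg
  have := nf_toI f
  rw [hfg, nf_toI] at this
  classical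
  have h2 := Multiset.map_injective Subtype.val_injective this
  have h3 := congrArg Multiset.toFinsupp h2
  rw [Finsupp.toMultiset_toFinsupp, Finsupp.toMultiset_toFinsupp] at h3
  exact h3.symm

theorem toI_surj {I : Ideal (𝓞 K)} (hI : I ≠ ⊥) : ∃ f, toI f = I := by
  classical
  have hp : ∀ p ∈ normalizedFactors I, p.IsPrime ∧ p ≠ ⊥ := fun p hp =>
    ⟨Ideal.isPrime_of_prime (prime_of_normalized_factor p hp), (prime_of_normalized_factor p hp).ne_zero⟩
  obtain ⟨m, hm⟩ : ∃ m : Multiset (PK K), m.map Subtype.val = normalizedFactors I := by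
    refine ⟨(normalizedFactors I).attach.map fun p => ⟨p.1, hp p.1 p.2⟩, ?_⟩
    rw [Multiset.map_map]
    exact Multiset.attach_map_val _
  refine ⟨Multiset.toFinsupp m, ?_⟩
  rw [toI_eq, Multiset.toFinsupp_toMultiset, hm, Ideal.prod_normalizedFactors_eq_self hI]

theorem pow_dvd_toI (f : PK K →₀ ℕ) (p : PK K) (k : ℕ) : p.1 ^ k ∣ toI f ↔ k ≤ f p := by
  classical
  rw [dvd_iff_normalizedFactors_le_normalizedFactors (pow_ne_zero _ (PK_prime p).ne_zero) (toI_ne f),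
    normalizedFactors_pow, normalizedFactors_irreducible (PK_prime p).irreducible, normalize_eq,
    Multiset.nsmul_singleton, ← Multiset.le_count_iff_replicate_le, nf_toI,
    Multiset.count_map_eq_count' _ _ Subtype.val_injective, Finsupp.count_toMultiset]

theorem dvd_toI (f : PK K →₀ ℕ) (p : PK K) : p.1 ∣ toI f ↔ f p ≠ 0 := by
  have := pow_dvd_toI f p 1
  rw [pow_one] at this
  rw [this]; omega

def lamK (p : PK K) : ℝ := Real.log (Ideal.absNorm p.1)

theorem normP_ge (p : PK K) : 2 ≤ Ideal.absNorm p.1 := by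
  have h0 : Ideal.absNorm p.1 ≠ 0 := by rw [Ne, Ideal.absNorm_eq_zero_iff]; exact p.2.2
  have h1 : Ideal.absNorm p.1 ≠ 1 := by rw [Ne, Ideal.absNorm_eq_one_iff]; exact p.2.1.ne_top
  omega

theorem normP_pos (p : PK K) : (0:ℝ) < Ideal.absNorm p.1 := by
  have := normP_ge p
  exact_mod_cast (by omega : 0 < Ideal.absNorm p.1)

theorem log_norm_toI (f : PK K →₀ ℕ) :
    Real.log (Ideal.absNorm (toI f)) = f.sum fun p k => (k:ℝ) * lamK p := by
  rw [toI, Finsupp.prod, map_prod, Nat.cast_prod, Real.log_prod, Finsupp.sum]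
  · refine Finset.sum_congr rfl fun p _ => ?_
    rw [map_pow, Nat.cast_pow, Real.log_pow, lamK]
  · intro p _
    rw [map_pow, Nat.cast_pow]
    exact pow_ne_zero _ (normP_pos p).ne'

theorem norm_toI_pos (f : PK K →₀ ℕ) : (0:ℝ) < Ideal.absNorm (toI f) := by
  have : Ideal.absNorm (toI f) ≠ 0 := by rw [Ne, Ideal.absNorm_eq_zero_iff]; exact toI_ne f
  exact_mod_cast Nat.pos_of_ne_zero this

theorem sum_le_iff (f : PK K →₀ ℕ) (s : ℝ) :
    (f.sum fun p k => (k:ℝ) * lamK p) ≤ s ↔ (Ideal.absNorm (toI f) : ℝ) ≤ Real.exp s := by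
  rw [← log_norm_toI, Real.log_le_iff_le_exp (norm_toI_pos f)]

open scoped nonZeroDivisors in
def equivI (s : ℝ) : {f : PK K →₀ ℕ | (f.sum fun p k => (k:ℝ) * lamK p) ≤ s} ≃
    {I : (Ideal (𝓞 K))⁰ // (Ideal.absNorm (I : Ideal (𝓞 K)) : ℝ) ≤ Real.exp s} :=
  Equiv.ofBijective (fun f => ⟨⟨toI f.1, mem_nonZeroDivisors_iff_ne_zero.mpr (toI_ne f.1)⟩,
    (sum_le_iff f.1 s).mp f.2⟩) (by
    constructor
    · intro f g hfg
      have : toI f.1 = toI g.1 := congrArg (fun x => ((x.1 : (Ideal (𝓞 K))⁰) : Ideal (𝓞 K))) hfg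
      exact Subtype.ext (toI_inj this)
    · rintro ⟨⟨I, hI⟩, hs⟩
      obtain ⟨f, rfl⟩ := toI_surj (mem_nonZeroDivisors_iff_ne_zero.mp hI)
      exact ⟨⟨f, (sum_le_iff f s).mpr hs⟩, rfl⟩)

theorem exists_prime_mem (p : PK K) : ∃ l : ℕ, l.Prime ∧ l ≤ Ideal.absNorm p.1 ∧ (l : 𝓞 K) ∈ p.1 := by
  have key : ∀ n : ℕ, n ≠ 0 → (n : 𝓞 K) ∈ p.1 → ∃ l : ℕ, l.Prime ∧ l ≤ n ∧ (l : 𝓞 K) ∈ p.1 := by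
    intro n
    induction n using induction_on_primes with
    | zero => intro h; exact absurd rfl h
    | one =>
      intro _ h
      rw [Nat.cast_one] at h
      exact absurd ((Ideal.eq_top_iff_one _).mpr h) p.2.1.ne_top
    | prime_mul l a hl ih =>
      intro h0 h
      have ha : a ≠ 0 := right_ne_zero_of_mul h0
      rw [Nat.cast_mul] at h
      rcases p.2.1.mem_or_mem h with h1 | h1
      · exact ⟨l, hl, Nat.le_mul_of_pos_right _ (Nat.pos_of_ne_zero ha), h1⟩
      · obtain ⟨m, h2, h3, h4⟩ := ih ha h1
        exact ⟨m, h2, h3.trans (Nat.le_mul_of_pos_left _ hl.pos), h4⟩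
  have := normP_ge p
  exact key _ (by omega) (Ideal.absNorm_mem p.1)

theorem theta_bound (F : Finset (PK K)) (s : ℝ) (hF : ∀ p ∈ F, lamK p ≤ s) :
    ∑ p ∈ F, lamK p ≤ (Module.finrank ℤ (𝓞 K) * Real.log 4) * Real.exp s := by
  classical
  set n := ⌊Real.exp s⌋₊ with hn
  have h1 : ∀ p ∈ F, p.1 ∣ Ideal.span {((primorial n : ℕ) : 𝓞 K)} := by
    intro p hp
    obtain ⟨l, hl, hle, hm⟩ := exists_prime_mem p
    rw [Ideal.dvd_span_singleton]
    have h2 : Ideal.absNorm p.1 ≤ n := by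
      apply Nat.le_floor
      rw [← Real.log_le_iff_le_exp (normP_pos p)]
      exact hF p hp
    have h3 : l ∣ primorial n := by
      apply Finset.dvd_prod_of_mem (fun x : ℕ => x)
      rw [Finset.mem_filter, Finset.mem_range]
      exact ⟨by omega, hl⟩
    obtain ⟨c, hc⟩ := h3
    rw [hc, Nat.cast_mul]
    exact Ideal.mul_mem_right _ _ hm
  have h2 : ∏ p ∈ F.image Subtype.val, p ∣ Ideal.span {((primorial n : ℕ) : 𝓞 K)} := by
    apply Finset.prod_primes_dvd
    · intro a ha
      rw [Finset.mem_image] at ha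
      obtain ⟨p, -, rfl⟩ := ha
      exact PK_prime p
    · intro a ha
      rw [Finset.mem_image] at ha
      obtain ⟨p, hp, rfl⟩ := ha
      exact h1 p hp
  rw [Finset.prod_image (fun _ _ _ _ h => Subtype.ext h)] at h2
  have h3 := Ideal.absNorm_dvd_absNorm_of_le (Ideal.dvd_iff_le.mp h2)
  rw [map_prod, Ideal.absNorm_span_natCast] at h3
  have h4 := Nat.le_of_dvd (pow_pos (primorial_pos n) _) h3
  have h5 : (∏ p ∈ F, (Ideal.absNorm p.1 : ℝ)) ≤ ((4:ℝ) ^ n) ^ Module.finrank ℤ (𝓞 K) := by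
    have := h4.trans (Nat.pow_le_pow_left (primorial_le_four_pow n) _)
    exact_mod_cast this
  have h6 := Real.log_le_log (Finset.prod_pos fun p _ => normP_pos p) h5
  rw [Real.log_prod (fun p _ => (normP_pos p).ne'), Real.log_pow, Real.log_pow] at h6
  refine h6.trans ?_
  have h7 : (n:ℝ) ≤ Real.exp s := Nat.floor_le (Real.exp_pos s).le
  have h8 : 0 < Real.log 4 := Real.log_pos (by norm_num)
  calc _ ≤ (Module.finrank ℤ (𝓞 K) : ℝ) * (Real.exp s * Real.log 4) := by gcongr
    _ = _ := by ring

variable (K)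

theorem exists_BSys : ∃ S : BSys (PK K), S.lam = lamK ∧ S.kap = kappaK K := by
  obtain ⟨C, δ, hC, hδ, hδ2, hb⟩ := idealCount_bound K
  refine ⟨⟨lamK, ?_, ?_, kappaK K, kappaK_pos K, C, hC, δ, hδ, hδ2, _, ?_, theta_bound⟩, rfl, rfl⟩
  · intro p
    have : (2:ℝ) ≤ Ideal.absNorm p.1 := by exact_mod_cast normP_ge p
    have := Real.log_le_log (by norm_num) this
    unfold lamK
    linarith [Real.log_two_gt_d9]
  · intro s
    have := finite_ideal_le K (Real.exp s)
    exact Finite.of_equiv _ (equivI (K := K) s).symm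
  · intro s
    have := hb (Real.exp s) (Real.exp_pos s)
    rw [← Real.exp_mul, mul_comm s] at this
    convert this using 4
    exact congrArg Nat.cast (Nat.card_congr (equivI (K := K) s))

end KK

section final
variable {K : Type*} [Field K] [NumberField K] (S : BSys (PK K)) (hS : S.lam = lamK)
include hS

theorem exp_lamS (p : PK K) : Real.exp (-S.lam p) = (Ideal.absNorm p.1 : ℝ)⁻¹ := by
  rw [hS, Real.exp_neg, lamK, Real.exp_log (normP_pos p)]

theorem uuS {h : ℕ} (p : PK K) : S.uu h p = ((Ideal.absNorm p.1 : ℝ) ^ (1 / (h:ℝ)))⁻¹ := by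
  rw [BSys.uu, hS, lamK, Real.exp_neg, Real.rpow_def_of_pos (normP_pos p)]
  congr 2; ring

theorem rhoS {h : ℕ} (p : PK K) : S.rho h p = ((Ideal.absNorm p.1 : ℝ) -
        (Ideal.absNorm p.1 : ℝ) ^ (1 - 1 / (h : ℝ)) + 1)⁻¹ := by
  have h0 := normP_pos p
  rw [BSys.rho, exp_lamS S hS, uuS S hS, Real.rpow_sub h0, Real.rpow_one]
  set N := (Ideal.absNorm p.1 : ℝ)
  have e : N - N / N ^ (1 / (h:ℝ)) + 1 = N * (1 - (N ^ (1 / (h:ℝ)))⁻¹ + N⁻¹) := by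
    field_simp
  rw [e, mul_inv, div_eq_mul_inv]

theorem L1S {h : ℕ} (hh : 0 < h) : LhK K h ((h:ℝ) + 1) = ∑' p, S.rho h p * S.uu h p := by
  have hhR : (h:ℝ) ≠ 0 := by exact_mod_cast hh.ne'
  unfold LhK
  refine tsum_congr fun p => ?_
  have e : ((h:ℝ) + 1) / h - 1 = 1 / h := by field_simp; ring
  rw [rhoS S hS, uuS S hS, e, one_div, mul_inv, mul_comm]

theorem L2S {h : ℕ} (hh : 0 < h) : LhK K h (2 * (h:ℝ)) = ∑' p, S.rho h p * Real.exp (-S.lam p) := by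
  have hhR : (h:ℝ) ≠ 0 := by exact_mod_cast hh.ne'
  unfold LhK
  refine tsum_congr fun p => ?_
  have e : (2 * (h:ℝ)) / h - 1 = 1 := by field_simp; ring
  rw [rhoS S hS, exp_lamS S hS, e, one_div, mul_inv, mul_comm, Real.rpow_one]

theorem gamS_eq {h : ℕ} (hh : 0 < h) (p : PK K) : S.gamS h (1 / h) p =
    ((Ideal.absNorm p.1 : ℝ) - (Ideal.absNorm p.1 : ℝ) ^ (1 / (h : ℝ))) /
      ((Ideal.absNorm p.1 : ℝ) ^ 2 * ((Ideal.absNorm p.1 : ℝ) ^ (1 / (h : ℝ)) - 1)) := by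
  have h1 := S.uu_lt hh p
  have h0 := S.uu_pos h p
  have h3 := S.uu_pow hh p
  have hN := normP_pos p
  unfold BSys.gamS
  simp only [BSys.exp_eq_uu]
  have e1 := geom_sum_Ico_mul_neg (S.uu h p) (by omega : h ≤ 2 * h)
  rw [Finset.sum_eq_sum_Ico_succ_bot (by omega : h < 2 * h)] at e1
  have : Finset.Ico (h + 1) (2 * h) = Finset.Ioo h (2 * h) := by
    ext; simp [Finset.mem_Ico, Finset.mem_Ioo]
  rw [this, two_mul, pow_add, h3, exp_lamS S hS] at e1
  rw [uuS S hS] at *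
  rw [← two_mul] at e1
  set N := (Ideal.absNorm p.1 : ℝ)
  set w := N ^ (1 / (h:ℝ))
  have hw : 0 < w := inv_pos.mp h0
  have hw1 : 1 < w := by
    by_contra h4
    have := (one_le_inv₀ hw).mpr (not_lt.mp h4)
    linarith
  set G := ∑ k ∈ Finset.Ioo h (2 * h), w⁻¹ ^ k
  have hw2 : w - 1 ≠ 0 := by linarith
  rw [eq_div_iff (by positivity)]
  field_simp at e1
  nlinarith [e1]

theorem gammaS {h : ℕ} (hh : 0 < h) : gammaK K h = S.Gam h := by
  unfold gammaK BSys.Gam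
  refine tprod_congr fun p => ?_
  rw [gamS_eq S hS hh]

theorem mem_PS_iff (p : PK K) (s : ℝ) : p ∈ S.PS s ↔ (Ideal.absNorm p.1 : ℝ) ≤ Real.exp s := by
  rw [BSys.mem_PS, hS, lamK, Real.log_le_iff_le_exp (normP_pos p)]

theorem mertS {A : ℝ} (hA : MertensK K A) :
    Tendsto (fun s => S.R1 (fun p => Real.exp (-S.lam p)) s - Real.log s) atTop (𝓝 A) := by
  refine (hA.comp Real.tendsto_exp_atTop).congr fun s => ?_
  simp only [Function.comp, Real.log_exp]
  congr 1
  have : {p : Ideal (𝓞 K) | p.IsPrime ∧ p ≠ ⊥ ∧ (Ideal.absNorm p : ℝ) ≤ Real.exp s} =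
      Subtype.val '' (S.PS s : Set (PK K)) := by
    ext p
    simp only [Set.mem_ofPred_eq, Set.mem_image, Finset.mem_coe, mem_PS_iff S hS]
    constructor
    · rintro ⟨h1, h2, h3⟩; exact ⟨⟨p, h1, h2⟩, h3, rfl⟩
    · rintro ⟨q, h3, rfl⟩; exact ⟨q.2.1, q.2.2, h3⟩
  rw [this, finsum_mem_image Subtype.val_injective.injOn, finsum_mem_coe_finset, BSys.R1]
  refine Finset.sum_congr rfl fun p _ => ?_
  rw [exp_lamS S hS, one_div]

omit hS in
theorem omegaK_toI (f : PK K →₀ ℕ) : omegaK (toI f) = f.support.card := by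
  unfold omegaK
  have : {p : Ideal (𝓞 K) | p.IsPrime ∧ p ≠ ⊥ ∧ p ∣ toI f} = Subtype.val '' (f.support : Set (PK K)) := by
    ext p
    simp only [Set.mem_ofPred_eq, Set.mem_image, Finset.mem_coe, Finsupp.mem_support_iff]
    constructor
    · rintro ⟨h1, h2, h3⟩; exact ⟨⟨p, h1, h2⟩, (dvd_toI f ⟨p, h1, h2⟩).mp h3, rfl⟩
    · rintro ⟨q, h3, rfl⟩; exact ⟨q.2.1, q.2.2, (dvd_toI f q).mpr h3⟩
  rw [this, Set.ncard_image_of_injective _ Subtype.val_injective, Set.ncard_coe_finset]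

omit hS in
theorem HFull_toI (h : ℕ) (f : PK K →₀ ℕ) : HFullI h (toI f) ↔ BSys.FF h ∅ f := by
  constructor
  · intro H p
    refine ⟨by simp, ?_⟩
    by_cases h0 : f p = 0
    · exact Or.inl h0
    · exact Or.inr ((pow_dvd_toI f p h).mp (H p.1 p.2.1 p.2.2 ((dvd_toI f p).mpr h0)))
  · intro H p h1 h2 h3
    have h4 := (dvd_toI f ⟨p, h1, h2⟩).mp h3
    exact (pow_dvd_toI f ⟨p, h1, h2⟩ h).mpr ((H ⟨p, h1, h2⟩).2.resolve_left h4)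

theorem omega_sumS (h : ℕ) {x : ℝ} (hx : 0 < x) :
    (∑ᶠ I ∈ {I : Ideal (𝓞 K) | I ≠ ⊥ ∧ HFullI h I ∧ (Ideal.absNorm I : ℝ) ≤ x}, (omegaK I : ℝ) ^ 2) =
      ∑ f ∈ S.Qs h ∅ (fun _ => True) (Real.log x), (f.support.card : ℝ) ^ 2 := by
  have hL : ∀ f, S.L f ≤ Real.log x ↔ (Ideal.absNorm (toI f) : ℝ) ≤ x := by
    intro f
    have := sum_le_iff f (Real.log x)
    rw [Real.exp_log hx] at this
    rw [← this, BSys.L, hS]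
  have : {I : Ideal (𝓞 K) | I ≠ ⊥ ∧ HFullI h I ∧ (Ideal.absNorm I : ℝ) ≤ x} =
      toI '' (S.Qs h ∅ (fun _ => True) (Real.log x) : Set (PK K →₀ ℕ)) := by
    ext I
    simp only [Set.mem_ofPred_eq, Set.mem_image, Finset.mem_coe, BSys.mem_Qs, and_true]
    constructor
    · rintro ⟨h1, h2, h3⟩
      obtain ⟨f, rfl⟩ := toI_surj h1
      exact ⟨f, ⟨(hL f).mpr h3, (HFull_toI h f).mp h2⟩, rfl⟩
    · rintro ⟨f, ⟨h1, h2⟩, rfl⟩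
      exact ⟨toI_ne f, (HFull_toI h f).mpr h2, (hL f).mp h1⟩
  rw [this, finsum_mem_image toI_inj.injOn, finsum_mem_coe_finset]
  refine Finset.sum_congr rfl fun f _ => ?_
  rw [omegaK_toI]

end final

/-- Second moment of `ω` over `h`-full ideals of a number field. -/
theorem second_moment_omega_hfull_ideals (K : Type*) [Field K] [NumberField K]
    (h : ℕ) (hh : 2 ≤ h) (A : ℝ) (hA : MertensK K A) :
    (fun x : ℝ =>
        (∑ᶠ I ∈ {I : Ideal (𝓞 K) | I ≠ ⊥ ∧ HFullI h I ∧ (Ideal.absNorm I : ℝ) ≤ x},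
            (omegaK I : ℝ) ^ 2)
          - kappaK K * gammaK K h * (x ^ (1 / (h : ℝ)) * Real.log (Real.log x) ^ 2)
          - kappaK K * gammaK K h * (2 * D1K K h A + 1) *
              (x ^ (1 / (h : ℝ)) * Real.log (Real.log x))
          - kappaK K * gammaK K h * D2K K h A * x ^ (1 / (h : ℝ)))
      =O[atTop]
        fun x : ℝ => x ^ (1 / (h : ℝ)) * Real.log (Real.log x) / Real.log x := by
  obtain ⟨S, hS, hk⟩ := exists_BSys K
  have hh0 : 0 < h := by omega
  have hhR : (0:ℝ) < h := by exact_mod_cast hh0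
  have hh1 : (1:ℝ) ≤ h := by exact_mod_cast hh0
  obtain ⟨C, hC, hmain⟩ := S.abstract_main hh (mertS S hS hA)
  have hD1 : D1K K h A = S.MM h A - Real.log h := by
    rw [D1K, L1S S hS hh0, L2S S hS hh0, BSys.MM]; ring
  have hD2 : D2K K h A = D1K K h A ^ 2 + D1K K h A - Real.pi ^ 2 / 6 - ∑' p, S.rho h p ^ 2 := by
    rw [D2K, BconstK, tsum_congr (fun p => by rw [rhoS S hS] :
      ∀ p : PK K, S.rho h p ^ 2 = ((Ideal.absNorm p.val : ℝ) -
        (Ideal.absNorm p.val : ℝ) ^ (1 - 1 / (h : ℝ)) + 1)⁻¹ ^ 2)]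
    ring
  refine IsBigO.of_bound (C * h) ?_
  refine eventually_atTop.mpr ⟨Real.exp (2 * h), fun x hx => ?_⟩
  have hx0 : 0 < x := (Real.exp_pos _).trans_le hx
  have hlx : 2 * h ≤ Real.log x := (Real.le_log_iff_exp_le hx0).mpr hx
  have hlx0 : 0 < Real.log x := lt_of_lt_of_le (by positivity) hlx
  set s := Real.log x / h with hs
  have hs2 : 2 ≤ s := by rw [hs, le_div_iff₀ hhR]; exact hlx
  have h1 := hmain s hs2
  have e1 : h * s = Real.log x := by rw [hs]; field_simp
  have e2 : Real.exp s = x ^ (1 / (h:ℝ)) := by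
    rw [Real.rpow_def_of_pos hx0, hs]; congr 1; ring
  have e3 : Real.log s = Real.log (Real.log x) - Real.log h := Real.log_div hlx0.ne' hhR.ne'
  rw [e1, ← omega_sumS S hS h hx0, e2, hk, ← gammaS S hS hh0, e3] at h1
  set X := x ^ (1 / (h:ℝ)) with hX
  have hX0 : 0 < X := Real.rpow_pos_of_pos hx0 _
  set LL := Real.log (Real.log x)
  rw [Real.norm_eq_abs, Real.norm_eq_abs]
  calc _ = _ := by
        congr 1
        rw [hD2, hD1]
        ring
    _ ≤ C * (X * ((LL - Real.log h) / s)) := h1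
    _ ≤ C * (X * (LL / s)) := by
        have := Real.log_nonneg hh1
        gcongr
        linarith
    _ = C * h * (X * LL / Real.log x) := by rw [hs]; field_simp
    _ ≤ _ := by gcongr; exact le_abs_self _
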